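/- arXiv:2408.04618 — 3 statements merged into one kernel-verified Lean document; each statement's English description precedes it below -/
import Mathlib

section
/- There exists a constant C > 0 such that for all integers r ≥ 2, in every r-connected finite simple graph any two longest cycles intersect in at least C · r^{5/8} vertices, i.e., if C1 and C2 are cycles of maximum length in G then |V(C1) ∩ V(C2)| ≥ C · r^{5/8}. -/
open SimpleGraph

/-- `c` is a longest cycle in `G`: it is a cycle and its length is at least
the length of every cycle in `G`. -/
def IsLongestCycle {V : Type*} (G : SimpleGraph V) {v : V} (c : G.Walk v v) : Prop :=
  c.IsCycle ∧ ∀ (u : V) (c' : G.Walk u u), c'.IsCycle → c'.length ≤ c.length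

/-!
By Menger's theorem, two longest cycles with `m` common vertices in an `r`-connected graph are
linked by at least `r - m` disjoint paths that avoid the common vertices. The common vertices cut
each cycle into at most `m + 1` segments, and the linking paths become the edges of a bipartite
graph between the segments of one cycle and those of the other. This graph is simple: from two
linking paths between the same segments one obtains ears of both cycles, and replacing an arc by
such an ear would make one of the cycles longer.

Along a hexagon of linking paths, three arcs of one cycle can be replaced by ears through the
other cycle. Since neither cycle can be made longer, this gives a strict inequality between
lengths of arcs of the two cycles, and the exchange in the other cycle gives the opposite one. The
resulting contradiction bounds the number of paths of length three between two given segments by a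
multiple of the sum of their degrees. Summing over all pairs of segments, there are `O(m t)` such
paths, where `t` is the number of edges. On the other hand the inequality of arithmetic and
geometric means shows that there are at least `t³ / (m + 1)²` of them. Hence `t² = O(m³)`, and
`m ≥ c r^(2/3)`.
-/

open Finset
open scoped List

section PathOn

variable {V : Type*} {G : SimpleGraph V} {S T : Finset V} {u v w z : V}

theorem start_notMem_support_tail {p : G.Walk u v} (hp : p.IsPath) : u ∉ p.support.tail :=
  (List.nodup_cons.1 (p.cons_tail_support.symm ▸ hp.support_nodup)).1

/-- `S` is the vertex set of a path of `G` from `u` to `v`. -/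
def PathOn (G : SimpleGraph V) (S : Finset V) (u v : V) : Prop :=
  ∃ p : G.Walk u v, p.IsPath ∧ ∀ z, z ∈ S ↔ z ∈ p.support

namespace PathOn

theorem left_mem (h : PathOn G S u v) : u ∈ S :=
  let ⟨p, _, hS⟩ := h
  (hS u).2 p.start_mem_support

theorem right_mem (h : PathOn G S u v) : v ∈ S :=
  let ⟨p, _, hS⟩ := h
  (hS v).2 p.end_mem_support

theorem symm (h : PathOn G S u v) : PathOn G S v u :=
  let ⟨p, hp, hS⟩ := h
  ⟨p.reverse, hp.reverse, fun z ↦ by simp [hS]⟩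

theorem singleton (G : SimpleGraph V) (u : V) : PathOn G {u} u u :=
  ⟨.nil, .nil, by simp⟩

theorem card_eq_length_add_one {p : G.Walk u v} (hp : p.IsPath) (hS : ∀ z, z ∈ S ↔ z ∈ p.support) :
    #S = p.length + 1 := by
  classical
  rw [← p.length_support, ← List.toFinset_card_of_nodup hp.support_nodup]
  congr 1
  ext z
  simp [hS]

theorem exists_ssubset_from_start (h : PathOn G S u v) (hz : z ∈ S) (hzv : z ≠ v) :
    ∃ S' ⊂ S, PathOn G S' u z := by
  classical
  obtain ⟨p, hp, hS⟩ := h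
  have hzp := (hS z).1 hz
  refine ⟨(p.takeUntil z hzp).support.toFinset, ?_, p.takeUntil z hzp, hp.takeUntil hzp, by simp⟩
  refine (ssubset_iff_of_subset fun x hx ↦ ?_).2 ⟨v, (hS v).2 p.end_mem_support, ?_⟩
  · exact (hS x).2 (p.support_takeUntil_subset_support hzp (List.mem_toFinset.1 hx))
  · exact fun hv ↦
      Walk.endpoint_notMem_support_takeUntil hp hzp hzv.symm (List.mem_toFinset.1 hv)

theorem exists_ssubset_to_end (h : PathOn G S u v) (hz : z ∈ S) (hzu : z ≠ u) :
    ∃ S' ⊂ S, PathOn G S' z v :=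
  let ⟨S', hS', h'⟩ := h.symm.exists_ssubset_from_start hz hzu
  ⟨S', hS', h'.symm⟩

theorem exists_subset_meeting_once {A B : Finset V} (h : PathOn G S u v) (hu : u ∈ A)
    (hv : v ∈ B) :
    ∃ S' ⊆ S, ∃ a ∈ A, ∃ b ∈ B, PathOn G S' a b ∧ (∀ z ∈ S', z ∈ A → z = a) ∧
      ∀ z ∈ S', z ∈ B → z = b := by
  induction S using Finset.strongInduction generalizing u v with
  | H S ih =>
    by_cases hA : ∀ z ∈ S, z ∈ A → z = u
    · by_cases hB : ∀ z ∈ S, z ∈ B → z = v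
      · exact ⟨S, Subset.rfl, u, hu, v, hv, h, hA, hB⟩
      · push Not at hB
        obtain ⟨z, hzS, hzB, hzv⟩ := hB
        obtain ⟨T, hTS, hT⟩ := h.exists_ssubset_from_start hzS hzv
        obtain ⟨S', hS', h'⟩ := ih T hTS hT hu hzB
        exact ⟨S', hS'.trans hTS.subset, h'⟩
    · push Not at hA
      obtain ⟨z, hzS, hzA, hzu⟩ := hA
      obtain ⟨T, hTS, hT⟩ := h.exists_ssubset_to_end hzS hzu
      obtain ⟨S', hS', h'⟩ := ih T hTS hT hzA hv
      exact ⟨S', hS'.trans hTS.subset, h'⟩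

variable [DecidableEq V]

theorem pair (h : G.Adj u v) : PathOn G {u, v} u v :=
  ⟨h.toWalk, h.isPath_toWalk, by simp⟩

theorem trans (h₁ : PathOn G S u v) (h₂ : PathOn G T v w) (hST : S ∩ T ⊆ {v}) :
    PathOn G (S ∪ T) u w := by
  obtain ⟨p, hp, hS⟩ := h₁
  obtain ⟨q, hq, hT⟩ := h₂
  refine ⟨p.append q, ?_, fun z ↦ by rw [mem_union, hS, hT, Walk.mem_support_append_iff]⟩
  rw [Walk.isPath_def, Walk.support_append, List.nodup_append']
  refine ⟨hp.support_nodup, hq.support_nodup.tail, fun z hzp hzq ↦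
    start_notMem_support_tail hq ?_⟩
  have hz : z = v :=
    mem_singleton.1 (hST (mem_inter.2 ⟨(hS z).2 hzp, (hT z).2 (List.mem_of_mem_tail hzq)⟩))
  exact hz ▸ hzq

theorem card_union_add_one (h₁ : PathOn G S u v) (h₂ : PathOn G T v w) (hST : S ∩ T ⊆ {v}) :
    #(S ∪ T) + 1 = #S + #T := by
  have hinter : S ∩ T = {v} :=
    hST.antisymm (singleton_subset_iff.2 (mem_inter.2 ⟨h₁.right_mem, h₂.left_mem⟩))
  rw [← card_union_add_card_inter, hinter, card_singleton]

theorem card_add_card_le_of_forall_isCycle_length_le {L : ℕ}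
    (hL : ∀ (x : V) (c : G.Walk x x), c.IsCycle → c.length ≤ L)
    (h₁ : PathOn G S u v) (h₂ : PathOn G T v u) (hST : S ∩ T ⊆ {u, v}) (hT : 3 ≤ #T) :
    #S + #T ≤ L + 2 := by
  obtain ⟨p, hp, hS⟩ := h₁
  obtain ⟨q, hq, hT'⟩ := h₂
  have hp_card := card_eq_length_add_one hp hS
  have hq_card := card_eq_length_add_one hq hT'
  have hdisj : p.support.tail.Disjoint q.support.tail := by
    intro z hzp hzq
    have hz := hST (mem_inter.2 ⟨(hS z).2 (List.mem_of_mem_tail hzp),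
      (hT' z).2 (List.mem_of_mem_tail hzq)⟩)
    rw [mem_insert, mem_singleton] at hz
    rcases hz with rfl | rfl
    · exact start_notMem_support_tail hp hzp
    · exact start_notMem_support_tail hq hzq
  have hcycle := hL u _ (hp.isCycle_append hq hdisj (.inr (by lia)))
  rw [Walk.length_append] at hcycle
  lia

theorem trans₃ {U : Finset V} {x : V} (h₁ : PathOn G S u v) (h₂ : PathOn G T v w)
    (h₃ : PathOn G U w x) (hST : S ∩ T ⊆ {v}) (hTU : T ∩ U ⊆ {w}) (hSU : Disjoint S U) :
    PathOn G (S ∪ T ∪ U) u x ∧ #(S ∪ T ∪ U) + 2 = #S + #T + #U := by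
  have hSTU : (S ∪ T) ∩ U ⊆ {w} := by
    rwa [union_inter_distrib_right, disjoint_iff_inter_eq_empty.1 hSU, empty_union]
  have h₁₂ := h₁.trans h₂ hST
  refine ⟨h₁₂.trans h₃ hSTU, ?_⟩
  have := h₁.card_union_add_one h₂ hST
  have := h₁₂.card_union_add_one h₃ hSTU
  lia

end PathOn

theorem pathOn_image_Icc [DecidableEq V] {x : ℕ → V} {a b : ℕ} (hab : a ≤ b)
    (hadj : ∀ i ∈ Set.Ico a b, G.Adj (x i) (x (i + 1))) (hinj : Set.InjOn x (Set.Icc a b)) :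
    PathOn G ((Icc a b).image x) (x a) (x b) := by
  induction b, hab using Nat.le_induction with
  | base => simpa using PathOn.singleton G (x a)
  | succ b hab ih =>
    have hpath := ih (fun i hi ↦ hadj i ⟨hi.1, hi.2.trans b.lt_succ_self⟩)
      (hinj.mono (Set.Icc_subset_Icc_right b.le_succ))
    have hedge := PathOn.pair (hadj b ⟨hab, b.lt_succ_self⟩)
    have hunion : (Icc a (b + 1)).image x = (Icc a b).image x ∪ {x b, x (b + 1)} := by
      ext z
      simp only [mem_image, mem_union, mem_insert, mem_singleton, mem_Icc]
      grind
    rw [hunion]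
    refine hpath.trans hedge fun z hz ↦ ?_
    simp only [mem_inter, mem_image, mem_insert, mem_singleton, mem_Icc] at hz ⊢
    obtain ⟨⟨i, hi, rfl⟩, h | h⟩ := hz
    · exact h
    · have := hinj ⟨hi.1, by lia⟩ ⟨by lia, le_rfl⟩ h
      lia

end PathOn

section Menger

variable {V : Type*} {G : SimpleGraph V} {A A' B S X : Finset V} {k : ℕ} {f : V → V}

/-- Every walk of `G` from `A` to `B` meets `S`. -/
def Separates (G : SimpleGraph V) (A B S : Finset V) : Prop :=
  ∀ a ∈ A, ∀ b ∈ B, ∀ p : G.Walk a b, ∃ z ∈ S, z ∈ p.support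

theorem separates_left (G : SimpleGraph V) (A B : Finset V) : Separates G A B A :=
  fun a ha _ _ p ↦ ⟨a, ha, p.start_mem_support⟩

/-- `G` is `k`-connected: it has more than `k` vertices, and deleting fewer than `k` vertices leaves
it connected. -/
structure IsVertexConnected [Fintype V] (G : SimpleGraph V) (k : ℕ) : Prop where
  lt_card : k < Fintype.card V
  connected : ∀ S : Finset V, #S < k → (G.induce (↑S : Set V)ᶜ).Connected

theorem IsVertexConnected.le_card_of_separates [Fintype V] (hG : IsVertexConnected G k)
    (hA : k ≤ #A) (hB : k ≤ #B) (hS : Separates G A B S) : k ≤ #S := by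
  by_contra! hlt
  obtain ⟨a, haA, haS⟩ := exists_mem_notMem_of_card_lt_card (hlt.trans_le hA)
  obtain ⟨b, hbB, hbS⟩ := exists_mem_notMem_of_card_lt_card (hlt.trans_le hB)
  obtain ⟨p⟩ := (hG.connected S hlt).preconnected ⟨a, haS⟩ ⟨b, hbS⟩
  obtain ⟨z, hzS, hz⟩ := hS a haA b hbB (p.map (Embedding.induce _).toHom)
  obtain ⟨w, -, rfl⟩ := List.mem_map.1 (Walk.support_map _ p ▸ hz)
  exact w.2 hzS

/-- In a family of disjoint paths from `A'` to `B` that meet `A` only in their first vertices, `f`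
sends each vertex to the next one on its path; off the paths it is allowed to fix vertices. -/
structure IsLinkingMap (G : SimpleGraph V) (A A' B : Finset V) (f : V → V) : Prop where
  subset : A' ⊆ A
  injOn : Set.InjOn f {v | v ∉ B ∧ (v ∈ A → v ∈ A')}
  eq_or_adj : ∀ v ∉ B, (v ∈ A → v ∈ A') → f v = v ∨ G.Adj v (f v)
  apply_notMem : ∀ v ∉ B, (v ∈ A → v ∈ A') → f v ∉ A

namespace IsLinkingMap

theorem iterate_mem (hf : IsLinkingMap G A A' B f) {a : V} (ha : a ∈ A') {n : ℕ}
    (hn : ∀ l < n, f^[l] a ∉ B) : f^[n] a ∈ A → f^[n] a ∈ A' ∧ n = 0 := by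
  induction n with
  | zero => exact fun _ ↦ ⟨ha, rfl⟩
  | succ n ih =>
    have hn' := ih fun l hl ↦ hn l (hl.trans n.lt_succ_self)
    rw [Function.iterate_succ_apply']
    exact fun h ↦ absurd h (hf.apply_notMem _ (hn n n.lt_succ_self) fun h ↦ (hn' h).1)

theorem eq_of_iterate_eq (hf : IsLinkingMap G A A' B f) {a a' : V} (ha : a ∈ A') (ha' : a' ∈ A')
    {i j : ℕ} (hi : ∀ l < i, f^[l] a ∉ B) (hj : ∀ l < j, f^[l] a' ∉ B)
    (h : f^[i] a = f^[j] a') : i = j ∧ a = a' := by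
  induction i generalizing j with
  | zero =>
    have hj0 := (hf.iterate_mem ha' hj (h ▸ hf.subset ha)).2
    subst hj0
    exact ⟨rfl, h⟩
  | succ i ih =>
    cases j with
    | zero => exact absurd (hf.iterate_mem ha hi (h ▸ hf.subset ha')).2 i.succ_ne_zero
    | succ j =>
      have hi' : ∀ l < i, f^[l] a ∉ B := fun l hl ↦ hi l (hl.trans i.lt_succ_self)
      have hj' : ∀ l < j, f^[l] a' ∉ B := fun l hl ↦ hj l (hl.trans j.lt_succ_self)
      rw [Function.iterate_succ_apply', Function.iterate_succ_apply'] at h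
      have hij := hf.injOn ⟨hi i i.lt_succ_self, fun h ↦ (hf.iterate_mem ha hi' h).1⟩
        ⟨hj j j.lt_succ_self, fun h ↦ (hf.iterate_mem ha' hj' h).1⟩ h
      exact (ih hi' hj' hij).imp_left (congrArg (· + 1))

theorem exists_iterate_mem [Finite V] (hf : IsLinkingMap G A A' B f) {a : V} (ha : a ∈ A') :
    ∃ n, f^[n] a ∈ B := by
  by_contra! hB
  exact not_injective_infinite_finite (fun n ↦ f^[n] a) fun i j hij ↦
    (hf.eq_of_iterate_eq ha ha (fun l _ ↦ hB l) (fun l _ ↦ hB l) hij).1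

theorem exists_pathOn [Finite V] (hf : IsLinkingMap G A A' B f) :
    ∃ R : V → Finset V, (∀ a ∈ A', ∃ b ∈ B, PathOn G (R a) a b) ∧
      (A' : Set V).PairwiseDisjoint R := by
  classical
  have hB : ∀ a, ∃ n, a ∈ A' → f^[n] a ∈ B ∧ ∀ l < n, f^[l] a ∉ B := fun a ↦ by
    by_cases ha : a ∈ A'
    · have hex := hf.exists_iterate_mem ha
      exact ⟨Nat.find hex, fun _ ↦ ⟨Nat.find_spec hex, fun l ↦ Nat.find_min hex⟩⟩
    · exact ⟨0, fun h ↦ absurd h ha⟩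
  choose n hn using hB
  have hlt : ∀ a ∈ A', ∀ i ≤ n a, ∀ l < i, f^[l] a ∉ B :=
    fun a ha i hi l hl ↦ (hn a ha).2 l (hl.trans_le hi)
  refine ⟨fun a ↦ (Icc 0 (n a)).image fun i ↦ f^[i] a, fun a ha ↦ ⟨_, (hn a ha).1, ?_⟩, ?_⟩
  · have hinj : Set.InjOn (fun i ↦ f^[i] a) (Set.Icc 0 (n a)) := fun i hi j hj hij ↦
      (hf.eq_of_iterate_eq ha ha (hlt a ha i hi.2) (hlt a ha j hj.2) hij).1
    refine pathOn_image_Icc (Nat.zero_le _) (fun i hi ↦ ?_) hinj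
    have hstep := hf.eq_or_adj _ ((hn a ha).2 i hi.2)
      fun h ↦ (hf.iterate_mem ha (hlt a ha i hi.2.le) h).1
    rw [← Function.iterate_succ_apply' f i a] at hstep
    exact hstep.resolve_left fun h ↦
      i.succ_ne_self (hinj ⟨Nat.zero_le _, hi.2⟩ ⟨Nat.zero_le _, hi.2.le⟩ h)
  · refine fun a ha a' ha' hne ↦ disjoint_left.2 fun z hz hz' ↦ hne ?_
    obtain ⟨i, hi, rfl⟩ := mem_image.1 hz
    obtain ⟨j, hj, hij⟩ := mem_image.1 hz'
    exact (hf.eq_of_iterate_eq ha ha' (hlt a ha i (mem_Icc.1 hi).2) (hlt a' ha' j (mem_Icc.1 hj).2)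
      hij.symm).2

end IsLinkingMap

section LinkTargets

variable [Fintype V] [DecidableEq V] [DecidableRel G.Adj]

/-- The closed neighbourhood of a vertex. -/
def closedNeighborFinset (G : SimpleGraph V) [DecidableRel G.Adj] (v : V) : Finset V :=
  insert v (G.neighborFinset v)

theorem subset_biUnion_closedNeighborFinset (X : Finset V) :
    X ⊆ X.biUnion (closedNeighborFinset G) :=
  fun v hv ↦ mem_biUnion.2 ⟨v, hv, mem_insert_self _ _⟩

theorem separates_biUnion_closedNeighborFinset_sdiff (hXB : Disjoint X B) :
    Separates G A B ((A ∪ X.biUnion (closedNeighborFinset G)) \ X) := by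
  intro a ha b hb p
  by_cases haX : a ∈ X
  · obtain ⟨d, hd, hdX, hdX'⟩ := p.exists_boundary_dart (X : Set V) haX (disjoint_right.1 hXB hb)
    have hd_mem : d.snd ∈ X.biUnion (closedNeighborFinset G) :=
      mem_biUnion.2 ⟨d.fst, hdX, mem_insert_of_mem ((G.mem_neighborFinset _ _).2 d.adj)⟩
    exact ⟨d.snd, mem_sdiff.2 ⟨mem_union_right _ hd_mem, hdX'⟩,
      p.dart_snd_mem_support_of_mem_darts hd⟩
  · exact ⟨a, mem_sdiff.2 ⟨mem_union_left _ ha, haX⟩, p.start_mem_support⟩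

theorem add_card_le_of_forall_separates (hk : ∀ S, Separates G A B S → k ≤ #S)
    (hXB : Disjoint X B) :
    k + #X ≤ #A + #(X.biUnion (closedNeighborFinset G) \ A) := by
  have hS := hk _ (separates_biUnion_closedNeighborFinset_sdiff (A := A) hXB)
  have hX : X ⊆ A ∪ X.biUnion (closedNeighborFinset G) :=
    (subset_biUnion_closedNeighborFinset X).trans subset_union_right
  have hcard := card_sdiff_add_card_eq_card hX
  rw [← union_sdiff_self_eq_union, card_union_of_disjoint disjoint_sdiff] at hcard
  rw [← union_sdiff_self_eq_union] at hS
  lia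

/-- The vertices that may follow `v` under a linking map, together with `d` dummies if `v ∈ A`: a
vertex of `A` is matched to a dummy when no path starts at it. -/
def linkTargets (G : SimpleGraph V) [DecidableRel G.Adj] (A : Finset V) (d : ℕ) (v : V) :
    Finset (V ⊕ Fin d) :=
  (closedNeighborFinset G v \ A).disjSum (if v ∈ A then univ else ∅)

theorem card_le_card_biUnion_linkTargets (hk : ∀ S, Separates G A B S → k ≤ #S)
    (hXB : Disjoint X B) : #X ≤ #(X.biUnion (linkTargets G A (#A - k))) := by
  have htargets : (X.biUnion (closedNeighborFinset G) \ A).disjSum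
      (if Disjoint X A then ∅ else univ) ⊆ X.biUnion (linkTargets G A (#A - k)) := by
    rintro (w | d) hw
    · simp only [inl_mem_disjSum, mem_sdiff, mem_biUnion, linkTargets] at hw ⊢
      exact hw.1.imp fun v hv ↦ ⟨hv.1, hv.2, hw.2⟩
    · split_ifs at hw with hXA
      · simp at hw
      · obtain ⟨v, hvX, hvA⟩ := not_disjoint_iff.1 hXA
        exact mem_biUnion.2 ⟨v, hvX, by simp [linkTargets, hvA]⟩
  refine le_trans ?_ (card_le_card htargets)
  rw [card_disjSum]
  split_ifs with hXA
  · exact le_add_right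
      (card_le_card (subset_sdiff.2 ⟨subset_biUnion_closedNeighborFinset X, hXA⟩))
  · have := add_card_le_of_forall_separates hk hXB
    have := hk A (separates_left G A B)
    rw [card_univ, Fintype.card_fin]
    lia

theorem exists_injOn_mem_linkTargets (hk : ∀ S, Separates G A B S → k ≤ #S) :
    ∃ φ : V → V ⊕ Fin (#A - k), Set.InjOn φ {v | v ∉ B} ∧
      ∀ v ∉ B, φ v ∈ linkTargets G A (#A - k) v := by
  obtain ⟨φ, hφ, hφt⟩ := (all_card_le_biUnion_card_iff_exists_injective
    fun v : {v // v ∉ B} ↦ linkTargets G A (#A - k) v).1 fun s ↦ by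
      have hdisj : Disjoint (s.image Subtype.val) B := disjoint_left.2 fun v hv ↦ by
        obtain ⟨w, -, rfl⟩ := mem_image.1 hv
        exact w.2
      simpa only [card_image_of_injective s Subtype.val_injective, image_biUnion] using
        card_le_card_biUnion_linkTargets hk hdisj
  refine ⟨fun v ↦ if hv : v ∉ B then φ ⟨v, hv⟩ else .inl v, fun v hv w hw h ↦ ?_, fun v hv ↦ ?_⟩
  · rw [Set.mem_ofPred_eq] at hv hw
    simpa [hv, hw, hφ.eq_iff] using h
  · simpa only [hv, not_false_eq_true, dite_true] using hφt ⟨v, hv⟩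

end LinkTargets

theorem exists_isLinkingMap [Finite V] (hk : ∀ S, Separates G A B S → k ≤ #S) :
    ∃ A' f, k ≤ #A' ∧ IsLinkingMap G A A' B f := by
  classical
  have := Fintype.ofFinite V
  obtain ⟨φ, hφ, hφt⟩ := exists_injOn_mem_linkTargets hk
  set A' := {v ∈ A | v ∈ B ∨ ∃ w, φ v = .inl w} with hA'
  have hleft : ∀ v ∉ B, (v ∈ A → v ∈ A') → ∃ w ∈ closedNeighborFinset G v \ A, φ v = .inl w := by
    intro v hvB hv
    specialize hφt v hvB
    rcases hφv : φ v with w | d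
    · exact ⟨w, by simpa only [hφv, linkTargets, inl_mem_disjSum] using hφt, rfl⟩
    · have hvA : v ∈ A := by
        by_contra hvA
        simp [hφv, hvA, linkTargets] at hφt
      simp [hA', hvA, hvB, hφv] at hv
  refine ⟨A', fun v ↦ (φ v).elim id fun _ ↦ v, ?_, filter_subset _ _, ?_, ?_, ?_⟩
  · have hsdiff : ∀ v ∈ A \ A', v ∉ B ∧ ∀ w, φ v ≠ .inl w := fun v hv ↦ by
      simpa [hA', (mem_sdiff.1 hv).1] using (mem_sdiff.1 hv).2
    have hdummy : #(A \ A') ≤ #(univ.map (.inr : Fin (#A - k) ↪ V ⊕ Fin (#A - k))) := by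
      refine card_le_card_of_injOn φ (fun v hv ↦ ?_) (hφ.mono fun v hv ↦ (hsdiff v hv).1)
      rcases hφv : φ v with w | d
      · exact absurd hφv ((hsdiff v hv).2 w)
      · simp
    rw [card_map, card_univ, Fintype.card_fin, card_sdiff_of_subset (filter_subset _ _)] at hdummy
    have := hk A (separates_left G A B)
    lia
  · intro v hv w hw h
    obtain ⟨v', -, hv'⟩ := hleft v hv.1 hv.2
    obtain ⟨w', -, hw'⟩ := hleft w hw.1 hw.2
    simp only [hv', hw', Sum.elim_inl, id_eq] at h
    exact hφ hv.1 hw.1 (by rw [hv', hw', h])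
  · intro v hvB hv
    obtain ⟨w, hw, hφw⟩ := hleft v hvB hv
    simpa [hφw, closedNeighborFinset] using (mem_sdiff.1 hw).1
  · intro v hvB hv
    obtain ⟨w, hw, hφw⟩ := hleft v hvB hv
    simpa [hφw] using (mem_sdiff.1 hw).2

theorem exists_disjoint_pathOn [Finite V] (hk : ∀ S, Separates G A B S → k ≤ #S) :
    ∃ A' ⊆ A, k ≤ #A' ∧ ∃ R : V → Finset V, (∀ a ∈ A', ∃ b ∈ B, PathOn G (R a) a b) ∧
      (A' : Set V).PairwiseDisjoint R :=
  let ⟨A', _, hA', hf⟩ := exists_isLinkingMap hk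
  ⟨A', hf.subset, hA', hf.exists_pathOn⟩

theorem IsVertexConnected.exists_disjoint_pathOn_meeting_once [Fintype V] [DecidableEq V]
    (hG : IsVertexConnected G k) (hA : k ≤ #A) (hB : k ≤ #B) :
    ∃ (I : Finset V) (R : V → Finset V) (a b : V → V), k ≤ #I + #(A ∩ B) ∧
      (I : Set V).PairwiseDisjoint R ∧ ∀ i ∈ I, PathOn G (R i) (a i) (b i) ∧
        a i ∈ A ∧ b i ∈ B ∧ a i ∉ B ∧ (∀ z ∈ R i, z ∈ A → z = a i) ∧
          ∀ z ∈ R i, z ∈ B → z = b i := by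
  obtain ⟨I, hIA, hI, P, hP, hdisj⟩ :=
    exists_disjoint_pathOn fun _ ↦ hG.le_card_of_separates hA hB
  have htrim : ∀ i, ∃ R a b, i ∈ I → R ⊆ P i ∧ a ∈ A ∧ b ∈ B ∧ PathOn G R a b ∧
      (∀ z ∈ R, z ∈ A → z = a) ∧ ∀ z ∈ R, z ∈ B → z = b := fun i ↦ by
    by_cases hi : i ∈ I
    · obtain ⟨b, hb, hPi⟩ := hP i hi
      obtain ⟨R, hR, a, ha, b, hb, h⟩ := hPi.exists_subset_meeting_once (hIA hi) hb
      exact ⟨R, a, b, fun _ ↦ ⟨hR, ha, hb, h⟩⟩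
    · exact ⟨∅, i, i, fun h ↦ absurd h hi⟩
  choose R a b hR using htrim
  have hRdisj : (I : Set V).PairwiseDisjoint R := fun i hi j hj hij ↦
    (hdisj hi hj hij).mono (hR i hi).1 (hR j hj).1
  have hmeet : #{i ∈ I | a i ∈ B} ≤ #(A ∩ B) := by
    refine card_le_card_of_injOn a (fun i hi ↦ ?_) fun i hi j hj hij ↦ ?_
    · obtain ⟨hi, hiB⟩ := mem_filter.1 hi
      exact mem_inter.2 ⟨(hR i hi).2.1, hiB⟩
    · have hi := (mem_filter.1 hi).1
      have hj := (mem_filter.1 hj).1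
      exact hRdisj.elim_finset hi hj (a i) (hR i hi).2.2.2.1.left_mem
        (hij ▸ (hR j hj).2.2.2.1.left_mem)
  refine ⟨{i ∈ I | a i ∉ B}, R, a, b, ?_, hRdisj.subset (coe_subset.2 (filter_subset _ _)),
    fun i hi ↦ ?_⟩
  · have := card_filter_add_card_filter_not (s := I) (fun i ↦ a i ∈ B)
    lia
  · obtain ⟨hi, hiB⟩ := mem_filter.1 hi
    obtain ⟨-, ha, hb, hpath, hRA, hRB⟩ := hR i hi
    exact ⟨hpath, ha, hb, hiB, hRA, hRB⟩

end Menger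

section LongCycle

variable {V : Type*} [Fintype V] {G : SimpleGraph V} {k L : ℕ}

theorem IsVertexConnected.le_degree [DecidableRel G.Adj] (hG : IsVertexConnected G k)
    (v : V) : k ≤ G.degree v := by
  classical
  by_contra! hlt
  have hcard : #(insert v (G.neighborFinset v)) < Fintype.card V :=
    (card_insert_le _ _).trans_lt (lt_of_le_of_lt hlt hG.lt_card)
  obtain ⟨w, -, hw⟩ := exists_mem_notMem_of_card_lt_card hcard
  rw [mem_insert, not_or] at hw
  have hv : v ∉ G.neighborFinset v := by simp
  have : Nontrivial ↥((G.neighborFinset v : Set V)ᶜ) :=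
    ⟨⟨v, hv⟩, ⟨w, hw.2⟩, fun h ↦ hw.1 (congrArg Subtype.val h).symm⟩
  obtain ⟨z, hz⟩ := (hG.connected _ hlt).preconnected.exists_adj_of_nontrivial ⟨v, hv⟩
  exact z.2 ((G.mem_neighborFinset _ _).2 hz)

theorem exists_isPath_le_index_adj [Nonempty V] [DecidableRel G.Adj] (hk : 1 ≤ k)
    (hdeg : ∀ v, k ≤ G.degree v) :
    ∃ (u v : V) (p : G.Walk u v), p.IsPath ∧ ∃ i ≤ p.length, k ≤ i ∧ G.Adj u (p.getVert i) := by
  classical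
  obtain ⟨u, v, p, hp, hmax⟩ := Walk.exists_isPath_forall_isPath_length_le_length G
  refine ⟨u, v, p, hp, ?_⟩
  by_contra! hfar
  have hnbr : G.neighborFinset u ⊆ (Ico 1 k).image p.getVert := by
    intro w hw
    rw [mem_neighborFinset] at hw
    have hwp : w ∈ p.support := by
      by_contra hwp
      exact absurd (hmax w v (.cons hw.symm p) (hp.cons hwp)) (by simp)
    obtain ⟨i, rfl, hi⟩ := Walk.mem_support_iff_exists_getVert.1 hwp
    have hi0 : i ≠ 0 := by
      rintro rfl
      exact hw.ne p.getVert_zero.symm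
    have hik : i < k := not_le.1 fun hki ↦ hfar i hi hki hw
    exact mem_image_of_mem _ (mem_Ico.2 ⟨by lia, hik⟩)
  have hcard := (hdeg u).trans ((card_le_card hnbr).trans card_image_le)
  rw [Nat.card_Ico] at hcard
  lia

theorem lt_of_forall_le_degree [Nonempty V] [DecidableRel G.Adj] (hk : 2 ≤ k)
    (hdeg : ∀ v, k ≤ G.degree v)
    (hL : ∀ (x : V) (c : G.Walk x x), c.IsCycle → c.length ≤ L) : k < L := by
  classical
  obtain ⟨u, v, p, hp, i, hi, hki, hadj⟩ := exists_isPath_le_index_adj (by lia) hdeg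
  have hinj : Set.InjOn p.getVert (Set.Icc 0 i) :=
    hp.getVert_injOn.mono fun j hj ↦ hj.2.trans hi
  have hpath := pathOn_image_Icc (x := p.getVert) (G := G) i.zero_le
    (fun j hj ↦ p.adj_getVert_succ (hj.2.trans_le hi)) hinj
  have hcard : #((Icc 0 i).image p.getVert) = i + 1 := by
    rw [card_image_of_injOn (by simpa using hinj), Nat.card_Icc, Nat.sub_zero]
  rw [p.getVert_zero] at hpath
  have hcycle := (PathOn.pair hadj.symm).card_add_card_le_of_forall_isCycle_length_le hL hpath
    (inter_subset_left.trans (by simp)) (by lia)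
  rw [card_pair hadj.ne', hcard] at hcycle
  lia

theorem IsVertexConnected.lt_of_forall_isCycle_length_le (hG : IsVertexConnected G k)
    (hk : 2 ≤ k) (hL : ∀ (x : V) (c : G.Walk x x), c.IsCycle → c.length ≤ L) : k < L := by
  classical
  have : Nonempty V := Fintype.card_pos_iff.1 (k.zero_le.trans_lt hG.lt_card)
  exact lt_of_forall_le_degree hk hG.le_degree hL

end LongCycle

section CyclicEnumeration

variable {V : Type*} {G : SimpleGraph V} {L : ℕ} {c : ℕ → V}

/-- `c` runs periodically around a cycle of length `L`; indexing by `ℕ` rather than by `ZMod L` lets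
an arc that passes the base point be written as `c i, …, c j` with `j ≥ L`. For `L = 2` it runs
back and forth along an edge. -/
structure IsCyclicEnumeration (G : SimpleGraph V) (L : ℕ) (c : ℕ → V) : Prop where
  pos : 0 < L
  periodic : Function.Periodic c L
  adj : ∀ i, G.Adj (c i) (c (i + 1))
  injOn : Set.InjOn c (Set.Iio L)

theorem exists_isCyclicEnumeration {u : V} {w : G.Walk u u} (hw : w.IsCycle) :
    ∃ c, IsCyclicEnumeration G w.length c ∧ ∀ z, z ∈ w.support ↔ ∃ k, c k = z := by
  have hpos : 0 < w.length := by
    have := hw.three_le_length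
    lia
  refine ⟨fun k ↦ w.getVert (k % w.length), ⟨hpos, fun k ↦ by simp, fun k ↦ ?_, ?_⟩, fun z ↦ ?_⟩
  · have hstep : w.getVert ((k + 1) % w.length) = w.getVert (k % w.length + 1) := by
      rw [← Nat.mod_add_mod]
      rcases (Nat.succ_le_of_lt (Nat.mod_lt k hpos)).lt_or_eq with hlt | heq
      · rw [Nat.mod_eq_of_lt hlt]
      · rw [← Nat.succ_eq_add_one, heq, Nat.mod_self, w.getVert_zero, w.getVert_length]
    rw [hstep]
    exact w.adj_getVert_succ (Nat.mod_lt k hpos)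
  · intro i hi j hj h
    simp only [Nat.mod_eq_of_lt hi, Nat.mod_eq_of_lt hj] at h
    rw [Set.mem_Iio] at hi hj
    exact hw.getVert_injOn' (by simp; lia) (by simp; lia) h
  · rw [Walk.mem_support_iff_exists_getVert]
    constructor
    · rintro ⟨k, rfl, hk⟩
      refine ⟨k, ?_⟩
      rcases hk.lt_or_eq with hk | rfl
      · simp [Nat.mod_eq_of_lt hk]
      · simp
    · rintro ⟨k, rfl⟩
      exact ⟨_, rfl, (Nat.mod_lt k hpos).le⟩

namespace IsCyclicEnumeration

theorem exists_lt (hc : IsCyclicEnumeration G L c) (i : ℕ) :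
    ∃ j < L, c j = c i :=
  ⟨i % L, Nat.mod_lt i hc.pos, hc.periodic.map_mod_nat i⟩

theorem eq_of_apply_eq (hc : IsCyclicEnumeration G L c) {a i j : ℕ} (hi : i ∈ Set.Ico a (a + L))
    (hj : j ∈ Set.Ico a (a + L)) (h : c i = c j) : i = j := by
  rw [← hc.periodic.map_mod_nat i, ← hc.periodic.map_mod_nat j] at h
  exact Nat.mod_injOn_Ico a L (by simpa using hi) (by simpa using hj)
    (hc.injOn (Nat.mod_lt i hc.pos) (Nat.mod_lt j hc.pos) h)

end IsCyclicEnumeration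

variable {a b i j : ℕ} {Q : Finset V} {u v : V}

/-- `Q` is the vertex set of a path from `u` to `v` that meets the closed curve `c` at most in its
ends. -/
structure IsEar (G : SimpleGraph V) (c : ℕ → V) (Q : Finset V) (u v : V) : Prop where
  pathOn : PathOn G Q u v
  eq_or_eq : ∀ k, c k ∈ Q → c k = u ∨ c k = v

theorem IsEar.symm (h : IsEar G c Q u v) : IsEar G c Q v u :=
  ⟨h.pathOn.symm, fun k hk ↦ (h.eq_or_eq k hk).symm⟩

variable [DecidableEq V]

/-- The vertices `c a, …, c b`. -/
def arc (c : ℕ → V) (a b : ℕ) : Finset V :=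
  (Icc a b).image c

theorem mem_arc {z : V} : z ∈ arc c a b ↔ ∃ k, (a ≤ k ∧ k ≤ b) ∧ c k = z := by
  simp [arc]

namespace IsCyclicEnumeration

theorem notMem_arc (hc : IsCyclicEnumeration G L c) (hbj : b < j) (hja : j < a + L) :
    c j ∉ arc c a b := by
  intro h
  obtain ⟨k, hk, hkj⟩ := mem_arc.1 h
  have := hc.eq_of_apply_eq (a := a) ⟨hk.1, by lia⟩ ⟨by lia, hja⟩ hkj
  lia

theorem notMem_arc_of_lt (hc : IsCyclicEnumeration G L c) (hja : j < a) (hbj : b < j + L) :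
    c j ∉ arc c a b := by
  rw [← hc.periodic j]
  exact hc.notMem_arc hbj (by lia)

theorem disjoint_arc (hc : IsCyclicEnumeration G L c) (hbi : b < i) (hja : j < a + L) :
    Disjoint (arc c a b) (arc c i j) := by
  refine disjoint_right.2 fun z hz ↦ ?_
  obtain ⟨k, hk, rfl⟩ := mem_arc.1 hz
  exact hc.notMem_arc (by lia) (by lia)

theorem pathOn_arc (hc : IsCyclicEnumeration G L c) (hab : a ≤ b) (hba : b < a + L) :
    PathOn G (arc c a b) (c a) (c b) :=
  pathOn_image_Icc hab (fun i _ ↦ hc.adj i) fun _ hi _ hj ↦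
    hc.eq_of_apply_eq ⟨hi.1, hi.2.trans_lt hba⟩ ⟨hj.1, hj.2.trans_lt hba⟩

theorem card_arc (hc : IsCyclicEnumeration G L c) (hab : a ≤ b) (hba : b < a + L) :
    #(arc c a b) + a = b + 1 := by
  rw [arc, card_image_of_injOn, Nat.card_Icc]
  · lia
  · intro i hi j hj
    rw [coe_Icc] at hi hj
    exact hc.eq_of_apply_eq ⟨hi.1, hi.2.trans_lt hba⟩ ⟨hj.1, hj.2.trans_lt hba⟩

end IsCyclicEnumeration

namespace IsEar

theorem arc_inter_subset (h : IsEar G c Q u v) : arc c a b ∩ Q ⊆ {u, v} := by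
  intro z hz
  obtain ⟨k, -, rfl⟩ := mem_arc.1 (mem_inter.1 hz).1
  simpa using h.eq_or_eq k (mem_inter.1 hz).2

theorem arc_inter_subset_left (h : IsEar G c Q u v) (hv : v ∉ arc c a b) : arc c a b ∩ Q ⊆ {u} := by
  intro z hz
  have := h.arc_inter_subset hz
  grind

theorem disjoint_arc (h : IsEar G c Q u v) (hu : u ∉ arc c a b) (hv : v ∉ arc c a b) :
    Disjoint (arc c a b) Q := by
  refine disjoint_left.2 fun z hz hzQ ↦ ?_
  have := h.arc_inter_subset_left hv (mem_inter.2 ⟨hz, hzQ⟩)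
  grind

omit [DecidableEq V] in
theorem card_add_le (hc : IsCyclicEnumeration G L c)
    (hL : ∀ (x : V) (c : G.Walk x x), c.IsCycle → c.length ≤ L) (hQ : IsEar G c Q (c i) (c j))
    (hij : i < j) (hji : j < i + L) (hQ_card : 3 ≤ #Q) : #Q + i ≤ j + 1 := by
  classical
  have harc := hc.pathOn_arc (a := j) (b := i + L) hji.le (by lia)
  have harc_card := hc.card_arc (a := j) (b := i + L) hji.le (by lia)
  rw [hc.periodic i] at harc
  have := harc.card_add_card_le_of_forall_isCycle_length_le hL hQ.pathOn
    hQ.symm.arc_inter_subset hQ_card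
  lia

end IsEar

/-- Positions `i₁ < j₁ < i₂ < j₂ < i₃ < j₃` in cyclic order along `c`, and disjoint ears joining
`j₁` to `j₂`, `i₂` to `j₃` and `i₃` to `i₁`. Replacing the three arcs of `c` from `iₛ` to `jₛ` by
the ears gives another cycle. -/
structure IsTripleExchange (G : SimpleGraph V) (L : ℕ) (c : ℕ → V) (i₁ j₁ i₂ j₂ i₃ j₃ : ℕ)
    (Q₁ Q₂ Q₃ : Finset V) : Prop where
  lt₁ : i₁ < j₁
  lt₁₂ : j₁ < i₂
  lt₂ : i₂ < j₂
  lt₂₃ : j₂ < i₃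
  lt₃ : i₃ < j₃
  lt₃₁ : j₃ < i₁ + L
  ear₁ : IsEar G c Q₁ (c j₁) (c j₂)
  ear₂ : IsEar G c Q₂ (c i₂) (c j₃)
  ear₃ : IsEar G c Q₃ (c i₃) (c i₁)
  disjoint₁₂ : Disjoint Q₁ Q₂
  disjoint₁₃ : Disjoint Q₁ Q₃
  disjoint₂₃ : Disjoint Q₂ Q₃

namespace IsTripleExchange

variable {i₁ j₁ i₂ j₂ i₃ j₃ : ℕ} {Q₁ Q₂ Q₃ : Finset V}

theorem pathOn_first (hc : IsCyclicEnumeration G L c)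
    (h : IsTripleExchange G L c i₁ j₁ i₂ j₂ i₃ j₃ Q₁ Q₂ Q₃) :
    PathOn G (arc c j₁ i₂ ∪ Q₂ ∪ arc c j₃ (i₁ + L)) (c j₁) (c i₁) ∧
      #(arc c j₁ i₂ ∪ Q₂ ∪ arc c j₃ (i₁ + L)) + (j₁ + j₃) = #Q₂ + (i₁ + i₂) + L := by
  obtain ⟨h₁, h₁₂, h₂, h₂₃, h₃, h₃₁, -, hQ₂, -, -, -, -⟩ := h
  have harc₁ := hc.pathOn_arc (a := j₁) (b := i₂) h₁₂.le (by lia)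
  have harc₃ := hc.pathOn_arc (a := j₃) (b := i₁ + L) h₃₁.le (by lia)
  rw [hc.periodic i₁] at harc₃
  have hi₂ : c i₂ ∉ arc c j₃ (i₁ + L) := hc.notMem_arc_of_lt (by lia) (by lia)
  have hpath := harc₁.trans₃ hQ₂.pathOn harc₃
    (hQ₂.arc_inter_subset_left (hc.notMem_arc (by lia) (by lia)))
    (by rw [inter_comm]; exact hQ₂.symm.arc_inter_subset_left hi₂)
    (hc.disjoint_arc (by lia) (by lia))
  have := hc.card_arc (a := j₁) (b := i₂) h₁₂.le (by lia)
  have := hc.card_arc (a := j₃) (b := i₁ + L) h₃₁.le (by lia)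
  exact ⟨hpath.1, by lia⟩

theorem pathOn_second (hc : IsCyclicEnumeration G L c)
    (h : IsTripleExchange G L c i₁ j₁ i₂ j₂ i₃ j₃ Q₁ Q₂ Q₃) :
    PathOn G (Q₁ ∪ arc c j₂ i₃ ∪ Q₃) (c j₁) (c i₁) ∧
      #(Q₁ ∪ arc c j₂ i₃ ∪ Q₃) + j₂ + 1 = #Q₁ + #Q₃ + i₃ := by
  obtain ⟨h₁, h₁₂, h₂, h₂₃, h₃, h₃₁, hQ₁, -, hQ₃, -, hdisj, -⟩ := h
  have harc := hc.pathOn_arc (a := j₂) (b := i₃) h₂₃.le (by lia)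
  have hj₁ : c j₁ ∉ arc c j₂ i₃ := hc.notMem_arc_of_lt (by lia) (by lia)
  have hi₁ : c i₁ ∉ arc c j₂ i₃ := hc.notMem_arc_of_lt (by lia) (by lia)
  have hpath := hQ₁.pathOn.trans₃ harc hQ₃.pathOn
    (by rw [inter_comm]; exact hQ₁.symm.arc_inter_subset_left hj₁)
    (hQ₃.arc_inter_subset_left hi₁) hdisj
  have := hc.card_arc (a := j₂) (b := i₃) h₂₃.le (by lia)
  exact ⟨hpath.1, by lia⟩

theorem inter_subset (hc : IsCyclicEnumeration G L c)
    (h : IsTripleExchange G L c i₁ j₁ i₂ j₂ i₃ j₃ Q₁ Q₂ Q₃) :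
    (arc c j₁ i₂ ∪ Q₂ ∪ arc c j₃ (i₁ + L)) ∩ (Q₁ ∪ arc c j₂ i₃ ∪ Q₃) ⊆ {c j₁, c i₁} := by
  obtain ⟨h₁, h₁₂, h₂, h₂₃, h₃, h₃₁, hQ₁, hQ₂, hQ₃, hQ₁₂, -, hQ₂₃⟩ := h
  have h_arc₁_Q₁ := hQ₁.arc_inter_subset_left (a := j₁) (b := i₂)
    (hc.notMem_arc (by lia) (by lia))
  have h_arc₃_Q₁ := hQ₁.disjoint_arc (a := j₃) (b := i₁ + L)
    (hc.notMem_arc_of_lt (by lia) (by lia)) (hc.notMem_arc_of_lt (by lia) (by lia))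
  have h_arc₁₂ := hc.disjoint_arc (a := j₁) (b := i₂) (i := j₂) (j := i₃) (by lia) (by lia)
  have h_arc₂₃ := hc.disjoint_arc (a := j₂) (b := i₃) (i := j₃) (j := i₁ + L) (by lia) (by lia)
  have h_arc₂_Q₂ := hQ₂.disjoint_arc (a := j₂) (b := i₃)
    (hc.notMem_arc_of_lt (by lia) (by lia)) (hc.notMem_arc (by lia) (by lia))
  have h_arc₁_Q₃ := hQ₃.disjoint_arc (a := j₁) (b := i₂)
    (hc.notMem_arc (by lia) (by lia)) (hc.notMem_arc_of_lt (by lia) (by lia))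
  have h_arc₃_Q₃ := hQ₃.symm.arc_inter_subset_left (a := j₃) (b := i₁ + L)
    (hc.notMem_arc_of_lt (by lia) (by lia))
  intro z hz
  have hz_arc₁ := @h_arc₁_Q₁ z
  have hz_arc₃ := @h_arc₃_Q₃ z
  grind [Finset.disjoint_left]

omit [DecidableEq V] in
theorem card_add_le (hc : IsCyclicEnumeration G L c)
    (hL : ∀ (x : V) (c : G.Walk x x), c.IsCycle → c.length ≤ L)
    (h : IsTripleExchange G L c i₁ j₁ i₂ j₂ i₃ j₃ Q₁ Q₂ Q₃) (hQ₁ : 3 ≤ #Q₁) :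
    #Q₁ + #Q₂ + #Q₃ + (i₁ + i₂ + i₃) ≤ j₁ + j₂ + j₃ + 3 := by
  classical
  obtain ⟨hpath₁, hcard₁⟩ := h.pathOn_first hc
  obtain ⟨hpath₂, hcard₂⟩ := h.pathOn_second hc
  have := card_le_card (subset_union_left.trans subset_union_left :
    Q₁ ⊆ Q₁ ∪ arc c j₂ i₃ ∪ Q₃)
  have := hpath₁.card_add_card_le_of_forall_isCycle_length_le hL hpath₂.symm
    (h.inter_subset hc) (by lia)
  lia

end IsTripleExchange

end CyclicEnumeration

section LinkedCycles

variable {V : Type*} {G : SimpleGraph V} {L : ℕ} {X : Finset V} {c d : ℕ → V}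

/-- Longest cycles `c` and `d`, both of length `L`, with all common vertices in `X`, and disjoint
paths `R i` from `c (f i)` to `d (g i)` whose ends avoid `X` and which are otherwise disjoint from
both cycles. -/
structure LinkedCycles {ι : Type*} (G : SimpleGraph V) (L : ℕ) (X : Finset V) (c d : ℕ → V)
    (f g : ι → ℕ) (R : ι → Finset V) : Prop where
  enum_left : IsCyclicEnumeration G L c
  enum_right : IsCyclicEnumeration G L d
  length_le : ∀ (x : V) (p : G.Walk x x), p.IsCycle → p.length ≤ L
  mem_of_eq : ∀ k l, c k = d l → c k ∈ X
  pathOn : ∀ i, PathOn G (R i) (c (f i)) (d (g i))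
  disjoint : Pairwise (Function.onFun Disjoint R)
  lt_left : ∀ i, f i < L
  lt_right : ∀ i, g i < L
  eq_left : ∀ i k, c k ∈ R i → c k = c (f i)
  eq_right : ∀ i k, d k ∈ R i → d k = d (g i)
  notMem_left : ∀ i, c (f i) ∉ X
  notMem_right : ∀ i, d (g i) ∉ X

namespace LinkedCycles

variable {ι : Type*} {f g : ι → ℕ} {R : ι → Finset V} {i j : ι}

theorem symm (h : LinkedCycles G L X c d f g R) : LinkedCycles G L X d c g f R where
  enum_left := h.enum_right
  enum_right := h.enum_left
  length_le := h.length_le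
  mem_of_eq k l hkl := hkl ▸ h.mem_of_eq l k hkl.symm
  pathOn i := (h.pathOn i).symm
  disjoint := h.disjoint
  lt_left := h.lt_right
  lt_right := h.lt_left
  eq_left := h.eq_right
  eq_right := h.eq_left
  notMem_left := h.notMem_right
  notMem_right := h.notMem_left

theorem injective_left (h : LinkedCycles G L X c d f g R) : Function.Injective f := by
  intro i j hij
  by_contra hne
  exact Finset.disjoint_left.1 (h.disjoint hne) (h.pathOn i).left_mem
    (hij ▸ (h.pathOn j).left_mem)

theorem lt_of_mem_uIcc (h : LinkedCycles G L X c d f g R) {l : ℕ} (hl : l ∈ uIcc (g i) (g j)) :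
    l < L :=
  (mem_uIcc.1 hl).2.trans_lt (max_lt (h.lt_right i) (h.lt_right j))

theorem one_lt_card (h : LinkedCycles G L X c d f g R) (i : ι) : 1 < #(R i) :=
  Finset.one_lt_card.2 ⟨_, (h.pathOn i).left_mem, _, (h.pathOn i).right_mem,
    fun heq ↦ h.notMem_left i (h.mem_of_eq _ _ heq)⟩

end LinkedCycles

variable [DecidableEq V]

/-- The vertices of `X` cut the enumeration `c` into segments; this is the index of the segment that
contains position `i`, i.e. the number of earlier positions in `X`. -/
def segmentIndex (X : Finset V) (c : ℕ → V) (i : ℕ) : ℕ :=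
  Nat.count (fun k ↦ c k ∈ X) i

theorem segmentIndex_mono (X : Finset V) (c : ℕ → V) : Monotone (segmentIndex X c) :=
  Nat.count_monotone _

theorem segmentIndex_le_card (hc : Set.InjOn c (Set.Iio L)) {i : ℕ} (hi : i ≤ L) :
    segmentIndex X c i ≤ #X := by
  rw [segmentIndex, Nat.count_eq_card_filter_range]
  refine card_le_card_of_injOn c (fun k hk ↦ (mem_filter.1 hk).2) (hc.mono fun k hk ↦ ?_)
  exact (mem_range.1 (mem_filter.1 hk).1).trans_le hi

theorem notMem_of_segmentIndex_eq {i j k : ℕ} (hj : c j ∉ X)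
    (h : segmentIndex X c i = segmentIndex X c j) (hik : i ≤ k) (hkj : k ≤ j) : c k ∉ X := by
  intro hk
  have hlt : k < j := hkj.lt_of_ne fun h ↦ hj (h ▸ hk)
  have := segmentIndex_mono X c hik
  have : segmentIndex X c k < segmentIndex X c j := Nat.count_strict_mono hk hlt
  lia

theorem segmentIndex_eq_of_mem_uIcc {i j k : ℕ} (h : segmentIndex X c i = segmentIndex X c j)
    (hk : k ∈ uIcc i j) : segmentIndex X c k = segmentIndex X c i := by
  have hmono := segmentIndex_mono X c
  rcases mem_uIcc'.1 hk with ⟨hik, hkj⟩ | ⟨hjk, hki⟩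
  · exact (hmono hik).antisymm' ((hmono hkj).trans h.ge)
  · exact (hmono hki).antisymm (h.le.trans (hmono hjk))

namespace LinkedCycles

variable {ι : Type*} {f g : ι → ℕ} {R : ι → Finset V} {i j i' j' : ι}

/-- The vertices of the path that follows `R i`, then `d` from `d (g i)` to `d (g j)`, then
`R j`. -/
def link (d : ℕ → V) (g : ι → ℕ) (R : ι → Finset V) (i j : ι) : Finset V :=
  R i ∪ (uIcc (g i) (g j)).image d ∪ R j

theorem link_comm (d : ℕ → V) (g : ι → ℕ) (R : ι → Finset V) (i j : ι) :
    link d g R i j = link d g R j i := by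
  rw [link, link, uIcc_comm, union_right_comm, union_comm (R i), union_right_comm]

theorem isEar_link_and_card (h : LinkedCycles G L X c d f g R) (hij : i ≠ j)
    (hτ : segmentIndex X d (g i) = segmentIndex X d (g j)) :
    IsEar G c (link d g R i j) (c (f i)) (c (f j)) ∧
      |(g i : ℤ) - g j| + 3 ≤ #(link d g R i j) := by
  wlog hle : g i ≤ g j generalizing i j
  · rw [link_comm, abs_sub_comm]
    exact (this hij.symm hτ.symm (Nat.le_of_not_le hle)).imp_left IsEar.symm
  have hlink : link d g R i j = R i ∪ arc d (g i) (g j) ∪ R j := by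
    rw [link, uIcc_of_le hle, arc]
  have hlt : g j < g i + L := (h.lt_right j).trans_le le_add_self
  have hpath := (h.pathOn i).trans₃ (h.enum_right.pathOn_arc hle hlt) (h.pathOn j).symm
    (fun z hz ↦ by
      obtain ⟨l, -, rfl⟩ := mem_arc.1 (mem_inter.1 hz).2
      exact mem_singleton.2 (h.eq_right i l (mem_inter.1 hz).1))
    (fun z hz ↦ by
      obtain ⟨l, -, rfl⟩ := mem_arc.1 (mem_inter.1 hz).1
      exact mem_singleton.2 (h.eq_right j l (mem_inter.1 hz).2))
    (h.disjoint hij)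
  rw [← hlink] at hpath
  refine ⟨⟨hpath.1, fun k hk ↦ ?_⟩, ?_⟩
  · rw [hlink, mem_union, mem_union, mem_arc] at hk
    obtain (hk | ⟨l, hl, hlk⟩) | hk := hk
    · exact .inl (h.eq_left i k hk)
    · exact absurd (hlk ▸ h.mem_of_eq k l hlk.symm)
        (notMem_of_segmentIndex_eq (h.notMem_right j) hτ hl.1 hl.2)
    · exact .inr (h.eq_left j k hk)
  · have := h.enum_right.card_arc hle hlt
    have := h.one_lt_card i
    have := h.one_lt_card j
    rw [abs_sub_comm, abs_of_nonneg (by lia)]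
    lia

theorem segmentIndex_eq_of_mem_link (h : LinkedCycles G L X c d f g R)
    (hτ : segmentIndex X d (g i) = segmentIndex X d (g j)) {l : ℕ} (hl : l < L)
    (hmem : d l ∈ link d g R i j) : segmentIndex X d l = segmentIndex X d (g i) := by
  rw [link, mem_union, mem_union, mem_image] at hmem
  obtain (hmem | ⟨m, hm, hml⟩) | hmem := hmem
  · rw [h.enum_right.injOn hl (h.lt_right i) (h.eq_right i l hmem)]
  · rw [← h.enum_right.injOn (h.lt_of_mem_uIcc hm) hl hml, segmentIndex_eq_of_mem_uIcc hτ hm]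
  · rw [h.enum_right.injOn hl (h.lt_right j) (h.eq_right j l hmem), hτ]

theorem mem_of_mem_link {z : V} (h : LinkedCycles G L X c d f g R) (hz : z ∈ link d g R i j)
    (hoff : ∀ l < L, d l ≠ z) : ∃ s, (s = i ∨ s = j) ∧ z ∈ R s := by
  rw [link, mem_union, mem_union, mem_image] at hz
  obtain (hz | ⟨m, hm, hmz⟩) | hz := hz
  · exact ⟨i, .inl rfl, hz⟩
  · exact absurd hmz (hoff m (h.lt_of_mem_uIcc hm))
  · exact ⟨j, .inr rfl, hz⟩

theorem disjoint_link (h : LinkedCycles G L X c d f g R)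
    (hτ : segmentIndex X d (g i) = segmentIndex X d (g j))
    (hτ' : segmentIndex X d (g i') = segmentIndex X d (g j'))
    (hne : segmentIndex X d (g i) ≠ segmentIndex X d (g i')) :
    Disjoint (link d g R i j) (link d g R i' j') := by
  refine Finset.disjoint_left.2 fun z hz hz' ↦ ?_
  have hz_off : ∀ l < L, d l ≠ z := by
    rintro l hl rfl
    exact hne ((h.segmentIndex_eq_of_mem_link hτ hl hz).symm.trans
      (h.segmentIndex_eq_of_mem_link hτ' hl hz'))
  obtain ⟨s, hs, hzs⟩ := h.mem_of_mem_link hz hz_off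
  obtain ⟨t, ht, hzt⟩ := h.mem_of_mem_link hz' hz_off
  have hst : s ≠ t := by
    rintro rfl
    rcases hs with rfl | rfl <;> rcases ht with rfl | rfl <;> simp_all
  exact Finset.disjoint_left.1 (h.disjoint hst) hzs hzt

theorem abs_sub_add_two_le (h : LinkedCycles G L X c d f g R) (hij : i ≠ j)
    (hτ : segmentIndex X d (g i) = segmentIndex X d (g j)) :
    |(g i : ℤ) - g j| + 2 ≤ |(f i : ℤ) - f j| := by
  wlog hlt : f i < f j generalizing i j
  · rw [abs_sub_comm, abs_sub_comm (f i : ℤ)]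
    exact this hij.symm hτ.symm
      ((Nat.le_of_not_lt hlt).lt_of_ne fun heq ↦ hij (h.injective_left heq.symm))
  obtain ⟨hear, hcard⟩ := h.isEar_link_and_card hij hτ
  have := abs_nonneg ((g i : ℤ) - g j)
  have := hear.card_add_le h.enum_left h.length_le hlt ((h.lt_left j).trans_le le_add_self) (by lia)
  rw [abs_sub_comm (f i : ℤ), abs_of_pos (a := (f j : ℤ) - f i) (by lia)]
  lia

theorem eq_of_segmentIndex_eq (h : LinkedCycles G L X c d f g R)
    (hσ : segmentIndex X c (f i) = segmentIndex X c (f j))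
    (hτ : segmentIndex X d (g i) = segmentIndex X d (g j)) : i = j := by
  by_contra hij
  have := h.abs_sub_add_two_le hij hτ
  have := h.symm.abs_sub_add_two_le hij hσ
  lia

end LinkedCycles

/-- Six edges of the bipartite multigraph in which `i` joins row `σ i` to column `τ i`: rows `a`,
`a'`, `x` and columns `b`, `b'`, `y` span the closed walk with edges `i = ab`, `j = ay`, `j' = a'y`,
`i' = a'b'`, `k' = xb'`, `k = xb`. -/
structure IsHexagon {ι : Type*} (σ τ : ι → ℕ) (i j k i' j' k' : ι) : Prop where
  row : σ i = σ j
  row' : σ i' = σ j'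
  row_common : σ k = σ k'
  col : τ i = τ k
  col' : τ i' = τ k'
  col_common : τ j = τ j'
  row_ne : σ j ≠ σ j'
  row_ne_common : σ j ≠ σ k
  row_ne_common' : σ j' ≠ σ k'
  col_ne : τ k ≠ τ k'
  col_ne_common : τ k ≠ τ j
  col_ne_common' : τ k' ≠ τ j'

namespace IsHexagon

variable {ι : Type*} {σ τ : ι → ℕ} {i j k i' j' k' : ι}

theorem swap (h : IsHexagon σ τ i j k i' j' k') : IsHexagon σ τ i' j' k' i j k :=
  ⟨h.row', h.row, h.row_common.symm, h.col', h.col, h.col_common.symm, h.row_ne.symm,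
    h.row_ne_common', h.row_ne_common, h.col_ne.symm, h.col_ne_common', h.col_ne_common⟩

theorem dual (h : IsHexagon σ τ i j k i' j' k') : IsHexagon τ σ i k j i' k' j' :=
  ⟨h.col, h.col', h.col_common, h.row, h.row', h.row_common, h.col_ne, h.col_ne_common,
    h.col_ne_common', h.row_ne, h.row_ne_common, h.row_ne_common'⟩

end IsHexagon

namespace LinkedCycles

variable {ι : Type*} {f g : ι → ℕ} {R : ι → Finset V} {i j k i' j' k' : ι}

theorem triple_exchange (h : LinkedCycles G L X c d f g R) {I₁ J₁ I₂ J₂ I₃ J₃ : ℕ}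
    (h₁ : I₁ < J₁) (h₁₂ : J₁ < I₂) (h₂ : I₂ < J₂) (h₂₃ : J₂ < I₃) (h₃ : I₃ < J₃) (h₃₁ : J₃ < I₁ + L)
    (hi : c J₁ = c (f i)) (hi' : c J₂ = c (f i')) (hj : c I₂ = c (f j)) (hj' : c J₃ = c (f j'))
    (hk : c I₃ = c (f k)) (hk' : c I₁ = c (f k'))
    (hτi : segmentIndex X d (g i) = segmentIndex X d (g i'))
    (hτj : segmentIndex X d (g j) = segmentIndex X d (g j'))
    (hτk : segmentIndex X d (g k) = segmentIndex X d (g k'))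
    (hij : segmentIndex X d (g i) ≠ segmentIndex X d (g j))
    (hik : segmentIndex X d (g i) ≠ segmentIndex X d (g k))
    (hjk : segmentIndex X d (g j) ≠ segmentIndex X d (g k)) :
    |(g i : ℤ) - g i'| + |(g j : ℤ) - g j'| + |(g k : ℤ) - g k'| + (I₁ + I₂ + I₃) <
      J₁ + J₂ + J₃ := by
  have hne : ∀ {a b : ℕ} {s t : ι}, I₁ ≤ a → a < b → b < I₁ + L → c a = c (f s) → c b = c (f t) →
      s ≠ t := by
    rintro a b s _ ha hab hb hs ht rfl
    exact hab.ne (h.enum_left.eq_of_apply_eq ⟨ha, hab.trans hb⟩ ⟨ha.trans hab.le, hb⟩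
      (hs.trans ht.symm))
  obtain ⟨hear₁, hcard₁⟩ :=
    h.isEar_link_and_card (hne h₁.le (h₁₂.trans h₂) (by lia) hi hi') hτi
  obtain ⟨hear₂, hcard₂⟩ :=
    h.isEar_link_and_card (hne (by lia) (h₂.trans (h₂₃.trans h₃)) h₃₁ hj hj') hτj
  obtain ⟨hear₃, hcard₃⟩ :=
    h.isEar_link_and_card (hne le_rfl (by lia) (by lia) hk' hk).symm hτk
  have hexch : IsTripleExchange G L c I₁ J₁ I₂ J₂ I₃ J₃ _ _ _ :=
    ⟨h₁, h₁₂, h₂, h₂₃, h₃, h₃₁, hi ▸ hi' ▸ hear₁, hj ▸ hj' ▸ hear₂, hk ▸ hk' ▸ hear₃,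
      h.disjoint_link hτi hτj hij, h.disjoint_link hτi hτk hik, h.disjoint_link hτj hτk hjk⟩
  have := abs_nonneg ((g i : ℤ) - g i')
  have := hexch.card_add_le h.enum_left h.length_le (by lia)
  lia

theorem exists_lift_after (h : LinkedCycles G L X c d f g R)
    (hx : IsHexagon (fun i ↦ segmentIndex X c (f i)) (fun i ↦ segmentIndex X d (g i))
      i j k i' j' k')
    (hside : segmentIndex X c (f j) < segmentIndex X c (f k) ↔
      segmentIndex X c (f j') < segmentIndex X c (f k')) :
    ∃ K K', c K = c (f k) ∧ c K' = c (f k') ∧ K + f k' = K' + f k ∧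
      (f j' < K ∧ f i' < K) ∧ K' < f j + L ∧ K' < f i + L := by
  obtain ⟨hrow, hrow', hrow_common, -, -, -, -, hne, -, -, -, -⟩ := hx
  have hmono : ∀ {s t : ℕ}, segmentIndex X c s < segmentIndex X c t → s < t :=
    (segmentIndex_mono X c).reflect_lt
  by_cases hjk : segmentIndex X c (f j) < segmentIndex X c (f k)
  · have hj'k := (hside.1 hjk).trans_eq hrow_common.symm
    have := h.lt_left k'
    exact ⟨f k, f k', rfl, rfl, by lia, ⟨hmono hj'k, hmono (hrow' ▸ hj'k)⟩, by lia, by lia⟩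
  · have hkj : segmentIndex X c (f k') < segmentIndex X c (f j) := by grind
    have := h.lt_left j'
    have := h.lt_left i'
    have := hmono hkj
    have := hmono (hkj.trans_eq hrow.symm)
    exact ⟨f k + L, f k' + L, h.enum_left.periodic _, h.enum_left.periodic _, by lia,
      ⟨by lia, by lia⟩, by lia, by lia⟩

theorem hexagon_exchange_of_lt (h : LinkedCycles G L X c d f g R)
    (hx : IsHexagon (fun i ↦ segmentIndex X c (f i)) (fun i ↦ segmentIndex X d (g i))
      i j k i' j' k')
    (hside : segmentIndex X c (f j) < segmentIndex X c (f k) ↔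
      segmentIndex X c (f j') < segmentIndex X c (f k'))
    (hlt : segmentIndex X c (f j) < segmentIndex X c (f j')) (hk : f k < f k')
    (hturn : f i < f j ↔ f i' < f j') :
    |(g j : ℤ) - g j'| + |(g i : ℤ) - g k| + |(g i' : ℤ) - g k'| <
      |(f k : ℤ) - f k'| + |(f i : ℤ) - f j| + |(f i' : ℤ) - f j'| := by
  have hij : f i ≠ f j := fun heq ↦ hx.col_ne_common (by simp only [← hx.col, h.injective_left heq])
  have hij' : f i' ≠ f j' := fun heq ↦
    hx.col_ne_common' (by simp only [← hx.col', h.injective_left heq])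
  obtain ⟨K, K', hcK, hcK', hKK', ⟨hj'K, hi'K⟩, hK'j, hK'i⟩ := h.exists_lift_after hx hside
  have hmono : ∀ {s t : ℕ}, segmentIndex X c s < segmentIndex X c t → s < t :=
    (segmentIndex_mono X c).reflect_lt
  have hij'_lt := hmono (hx.row.trans_lt hlt)
  have hji'_lt := hmono (hlt.trans_eq hx.row'.symm)
  have hcol_ne_common' := (hx.col'.trans_ne hx.col_ne_common').symm
  have hcol_ne := hx.col'.trans_ne hx.col_ne.symm
  rw [abs_sub_comm (g i : ℤ)]
  have := neg_le_abs ((f k : ℤ) - f k')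
  rcases hij.lt_or_gt with hturn_lt | hturn_gt
  · have := h.triple_exchange hturn_lt hji'_lt (hturn.1 hturn_lt) hj'K (by lia) hK'i rfl rfl rfl
      hcK' hcK rfl hx.col_common hx.col' hx.col.symm (hx.col_common.trans_ne hcol_ne_common')
      hx.col_ne_common.symm hcol_ne
    have := neg_le_abs ((f i : ℤ) - f j)
    have := neg_le_abs ((f i' : ℤ) - f j')
    lia
  · have := h.triple_exchange (I₁ := f j') (J₁ := f i') (I₃ := f j + L) (J₃ := f i + L)
      (by lia) hi'K (by lia) hK'j (by lia) (by lia) rfl hcK' hcK (h.enum_left.periodic _)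
      (h.enum_left.periodic _) rfl hx.col' hx.col.symm hx.col_common hcol_ne
      (hx.col_common.trans_ne hcol_ne_common').symm hx.col_ne_common
    have := le_abs_self ((f i : ℤ) - f j)
    have := le_abs_self ((f i' : ℤ) - f j')
    lia

theorem hexagon_exchange (h : LinkedCycles G L X c d f g R)
    (hx : IsHexagon (fun i ↦ segmentIndex X c (f i)) (fun i ↦ segmentIndex X d (g i))
      i j k i' j' k')
    (hside : segmentIndex X c (f j) < segmentIndex X c (f k) ↔
      segmentIndex X c (f j') < segmentIndex X c (f k'))
    (hparallel : segmentIndex X c (f j) < segmentIndex X c (f j') ↔ f k < f k')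
    (hturn : f i < f j ↔ f i' < f j') :
    |(g j : ℤ) - g j'| + |(g i : ℤ) - g k| + |(g i' : ℤ) - g k'| <
      |(f k : ℤ) - f k'| + |(f i : ℤ) - f j| + |(f i' : ℤ) - f j'| := by
  rcases hx.row_ne.lt_or_gt with hlt | hgt
  · exact h.hexagon_exchange_of_lt hx hside hlt (hparallel.1 hlt) hturn
  · have hkk' : f k ≠ f k' := fun heq ↦ hx.col_ne (by simp only [h.injective_left heq])
    have hk : f k' < f k :=
      (not_lt.1 fun hlt ↦ hgt.not_gt (hparallel.2 hlt)).lt_of_ne hkk'.symm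
    have := h.hexagon_exchange_of_lt hx.swap hside.symm hgt hk hturn.symm
    rw [abs_sub_comm (g j : ℤ), abs_sub_comm (f k : ℤ)]
    lia

end LinkedCycles

end LinkedCycles

section ExchangeData

variable {E : Type*} {T : Finset E} {a b : E → ℕ} {p q U W : E → ℤ} {e e' : E}

theorem card_filter_fiber_max_le {α β : Type*} [DecidableEq β] [LinearOrder α] (T : Finset E)
    (π : E → β) (key : E → α) (hinj : Set.InjOn (fun e ↦ (π e, key e)) T) :
    #{e ∈ T | ∀ e' ∈ T, π e' = π e → key e' ≤ key e} ≤ #(T.image π) := by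
  refine card_le_card_of_injOn π (fun e he ↦ mem_image_of_mem π (mem_filter.1 he).1) ?_
  intro e he e' he' hπ
  rw [mem_coe, mem_filter] at he he'
  exact hinj he.1 he'.1 (Prod.ext hπ ((he'.2 e he.1 hπ).antisymm (he.2 e' he'.1 hπ.symm)))

/-- Among the elements of `T` with the same value of `b` as `e`, some two enclose `e` strictly both
in the order of `p` and in the order (or the reverse order) of `a`. -/
def IsEnclosed (T : Finset E) (b a : E → ℕ) (p : E → ℤ) (e : E) : Prop :=
  ∃ s ∈ T, ∃ t ∈ T, b s = b e ∧ b t = b e ∧ p s < p e ∧ p e < p t ∧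
    (a s < a e ∧ a e < a t ∨ a t < a e ∧ a e < a s)

theorem isEnclosed_of_exists (hpa : ∀ e ∈ T, ∀ e' ∈ T, p e = p e' ↔ a e = a e') (he : e ∈ T)
    (hp_lt : ∃ s ∈ T, b s = b e ∧ p s < p e) (hp_gt : ∃ t ∈ T, b t = b e ∧ p e < p t)
    (ha_lt : ∃ s ∈ T, b s = b e ∧ a s < a e) (ha_gt : ∃ t ∈ T, b t = b e ∧ a e < a t) :
    IsEnclosed T b a p e := by
  obtain ⟨s, hs, hbs, hps⟩ := hp_lt
  obtain ⟨t, ht, hbt, hpt⟩ := hp_gt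
  obtain ⟨s', hs', hbs', has'⟩ := ha_lt
  obtain ⟨t', ht', hbt', hat'⟩ := ha_gt
  have hne : ∀ u ∈ T, p u ≠ p e → a u ≠ a e := fun u hu ↦ mt (hpa u hu e he).2
  have hne' : ∀ u ∈ T, a u ≠ a e → p u ≠ p e := fun u hu ↦ mt (hpa u hu e he).1
  rcases (hne s hs hps.ne).lt_or_gt with has | has <;>
    rcases (hne t ht hpt.ne').lt_or_gt with hat | hat
  · rcases (hne' t' ht' hat'.ne').lt_or_gt with hpt' | hpt'
    · exact ⟨t', ht', t, ht, hbt', hbt, hpt', hpt, .inr ⟨hat, hat'⟩⟩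
    · exact ⟨s, hs, t', ht', hbs, hbt', hps, hpt', .inl ⟨has, hat'⟩⟩
  · exact ⟨s, hs, t, ht, hbs, hbt, hps, hpt, .inl ⟨has, hat⟩⟩
  · exact ⟨s, hs, t, ht, hbs, hbt, hps, hpt, .inr ⟨hat, has⟩⟩
  · rcases (hne' s' hs' has'.ne).lt_or_gt with hps' | hps'
    · exact ⟨s', hs', t, ht, hbs', hbt, hps', hpt, .inl ⟨has', hat⟩⟩
    · exact ⟨s, hs, s', hs', hbs, hbs', hps, hps', .inr ⟨has', has⟩⟩

open scoped Classical in
theorem card_filter_not_isEnclosed_le (hinj : Set.InjOn (fun e ↦ (b e, a e)) T)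
    (hpa : ∀ e ∈ T, ∀ e' ∈ T, p e = p e' ↔ a e = a e') :
    #{e ∈ T | ¬ IsEnclosed T b a p e} ≤ 4 * #(T.image b) := by
  have hinj_p : Set.InjOn (fun e ↦ (b e, p e)) T := fun e he e' he' h ↦ by
    rw [Prod.mk.injEq, hpa e he e' he'] at h
    exact hinj he he' (Prod.ext h.1 h.2)
  have hsub : {e ∈ T | ¬ IsEnclosed T b a p e} ⊆
      ({e ∈ T | ∀ e' ∈ T, b e' = b e → p e' ≤ p e} ∪
        {e ∈ T | ∀ e' ∈ T, b e' = b e → OrderDual.toDual (p e') ≤ OrderDual.toDual (p e)}) ∪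
      ({e ∈ T | ∀ e' ∈ T, b e' = b e → a e' ≤ a e} ∪
        {e ∈ T | ∀ e' ∈ T, b e' = b e → OrderDual.toDual (a e') ≤ OrderDual.toDual (a e)}) := by
    intro e he
    obtain ⟨he, hnot⟩ := mem_filter.1 he
    contrapose! hnot
    simp only [mem_union, mem_filter, he, true_and, not_or, not_forall, not_le, exists_prop,
      OrderDual.toDual_lt_toDual] at hnot
    exact isEnclosed_of_exists hpa he hnot.1.2 hnot.1.1 hnot.2.2 hnot.2.1
  have := (card_le_card hsub).trans ((card_union_le _ _).trans
    (add_le_add (card_union_le _ _) (card_union_le _ _)))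
  have := card_filter_fiber_max_le T b p hinj_p
  have := card_filter_fiber_max_le T b (fun e ↦ OrderDual.toDual (p e)) hinj_p
  have := card_filter_fiber_max_le T b a hinj
  have := card_filter_fiber_max_le T b (fun e ↦ OrderDual.toDual (a e)) hinj
  lia

/-- Points `e ∈ T` of the grid with coordinates `a e`, `b e`; the rows and columns carry positions
`p` and `q`, and two points in different rows and columns satisfy an exchange inequality whenever
rows and positions of columns are ordered alike, and the opposite one whenever columns and positions
of rows are. -/
structure ExchangeData (T : Finset E) (a b : E → ℕ) (p q U W : E → ℤ) : Prop where
  injOn : Set.InjOn (fun e ↦ (a e, b e)) T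
  eq_iff_left : ∀ e ∈ T, ∀ e' ∈ T, p e = p e' ↔ a e = a e'
  eq_iff_right : ∀ e ∈ T, ∀ e' ∈ T, q e = q e' ↔ b e = b e'
  exchange_left : ∀ e ∈ T, ∀ e' ∈ T, a e ≠ a e' → b e ≠ b e' → (a e < a e' ↔ q e < q e') →
    |p e - p e'| + W e + W e' < |q e - q e'| + U e + U e'
  exchange_right : ∀ e ∈ T, ∀ e' ∈ T, a e ≠ a e' → b e ≠ b e' → (b e < b e' ↔ p e < p e') →
    |q e - q e'| + U e + U e' < |p e - p e'| + W e + W e'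

namespace ExchangeData

theorem symm (h : ExchangeData T a b p q U W) : ExchangeData T b a q p W U where
  injOn e he e' he' hee' := h.injOn he he' (by grind)
  eq_iff_left := h.eq_iff_right
  eq_iff_right := h.eq_iff_left
  exchange_left e he e' he' ha hb := h.exchange_right e he e' he' hb ha
  exchange_right e he e' he' ha hb := h.exchange_left e he e' he' hb ha

theorem not_same_direction (h : ExchangeData T a b p q U W) {e s t : E} (he : e ∈ T) (hs : s ∈ T)
    (ht : t ∈ T) (hbt : b t = b e) (has : a s = a e) (hat : a e < a t) (hpt : p e < p t)
    (hbs : b s < b e) (hqs : q s < q e) : False := by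
  have hqt := (h.eq_iff_right t ht e he).2 hbt
  have hps := (h.eq_iff_left s hs e he).2 has
  have := h.exchange_left s hs t ht (by lia) (by lia) (by lia)
  have := h.exchange_right s hs t ht (by lia) (by lia) (by lia)
  lia

theorem not_opposite_directions (h : ExchangeData T a b p q U W) {e s t s' t' : E} (he : e ∈ T)
    (hs : s ∈ T) (ht : t ∈ T) (hs' : s' ∈ T) (ht' : t' ∈ T) (hbs : b s = b e) (hbt : b t = b e)
    (has' : a s' = a e) (hat' : a t' = a e) (hps : p s < p e) (hpt : p e < p t) (hqs' : q s' < q e)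
    (hqt' : q e < q t') (has : a s < a e) (hat : a e < a t) (hbt' : b t' < b e)
    (hbs' : b e < b s') : False := by
  have hqs := (h.eq_iff_right s hs e he).2 hbs
  have hqt := (h.eq_iff_right t ht e he).2 hbt
  have hps' := (h.eq_iff_left s' hs' e he).2 has'
  have hpt' := (h.eq_iff_left t' ht' e he).2 hat'
  have := h.exchange_left s' hs' t ht (by lia) (by lia) (by lia)
  have := h.exchange_left s hs t' ht' (by lia) (by lia) (by lia)
  have := h.exchange_right s hs s' hs' (by lia) (by lia) (by lia)
  have := h.exchange_right t' ht' t ht (by lia) (by lia) (by lia)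
  grind

theorem not_isEnclosed_and_isEnclosed (h : ExchangeData T a b p q U W) {e : E} (he : e ∈ T) :
    ¬ (IsEnclosed T b a p e ∧ IsEnclosed T a b q e) := by
  rintro ⟨⟨s, hs, t, ht, hbs, hbt, hps, hpt, ⟨has, hat⟩ | ⟨hat, has⟩⟩,
    s', hs', t', ht', has', hat', hqs', hqt', ⟨hbs', hbt'⟩ | ⟨hbt', hbs'⟩⟩
  · exact h.not_same_direction he hs' ht hbt has' hat hpt hbs' hqs'
  · exact h.not_opposite_directions he hs ht hs' ht' hbs hbt has' hat' hps hpt hqs' hqt' has hat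
      hbt' hbs'
  · exact h.symm.not_opposite_directions he hs' ht' hs ht has' hat' hbs hbt hqs' hqt' hps hpt hbs'
      hbt' hat has
  · have hqt := (h.eq_iff_right t ht e he).2 hbt
    have hpt_row := (h.eq_iff_left t' ht' e he).2 hat'
    have := h.exchange_left t ht t' ht' (by lia) (by lia) (by lia)
    have := h.exchange_right t ht t' ht' (by lia) (by lia) (by lia)
    lia

theorem card_le (h : ExchangeData T a b p q U W) :
    #T ≤ 4 * (#(T.image a) + #(T.image b)) := by
  classical
  have hsub : T ⊆ {e ∈ T | ¬ IsEnclosed T b a p e} ∪ {e ∈ T | ¬ IsEnclosed T a b q e} := by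
    intro e he
    have := h.not_isEnclosed_and_isEnclosed he
    grind
  have := (card_le_card hsub).trans (card_union_le _ _)
  have := card_filter_not_isEnclosed_le h.symm.injOn h.eq_iff_left
  have := card_filter_not_isEnclosed_le h.injOn h.eq_iff_right
  lia

end ExchangeData

end ExchangeData

section ConsecutiveTriples

variable {ι : Type*} [Fintype ι] {σ τ f g : ι → ℕ} {n : ℕ}

theorem sum_inv_card_fiber (σ : ι → ℕ) :
    ∑ i, (#{j | σ j = σ i} : ℝ)⁻¹ = #(univ.image σ) := by
  rw [card_eq_sum_ones, Nat.cast_sum,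
    ← sum_fiberwise_of_maps_to fun i _ ↦ mem_image_of_mem σ (mem_univ i)]
  refine sum_congr rfl fun a ha ↦ ?_
  obtain ⟨i, -, rfl⟩ := mem_image.1 ha
  have hpos : 0 < #{j | σ j = σ i} := card_pos.2 ⟨i, by simp⟩
  rw [sum_congr rfl fun k hk ↦ by rw [(mem_filter.1 hk).2], sum_const, nsmul_eq_mul,
    mul_inv_cancel₀ (by positivity), Nat.cast_one]

theorem three_lt_add_add_of_one_lt_mul {x y z : ℝ} (hx : 0 < x) (hy : 0 < y) (hz : 0 < z)
    (h : 1 < x * y * z) : 3 < x + y + z := by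
  by_contra! hle
  have hamgm : 27 * (x * y * z) ≤ (x + y + z) ^ 3 := by
    nlinarith [mul_nonneg hx.le (sq_nonneg (y - z)), mul_nonneg hy.le (sq_nonneg (x - z)),
      mul_nonneg hz.le (sq_nonneg (x - y)), mul_nonneg (add_pos (add_pos hx hy) hz).le
      (add_nonneg (add_nonneg (sq_nonneg (x - y)) (sq_nonneg (x - z))) (sq_nonneg (y - z)))]
  have : (x + y + z) ^ 3 ≤ 3 ^ 3 := pow_le_pow_left₀ (by positivity) hle 3
  linarith

theorem card_pow_three_le_sum_inv_mul {α β : ι → ℝ} (hα : ∀ i, 0 < α i) (hβ : ∀ i, 0 < β i) :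
    (Fintype.card ι : ℝ) ^ 3 ≤ (∑ i, (α i)⁻¹) * (∑ i, (β i)⁻¹) * ∑ i, α i * β i := by
  rcases isEmpty_or_nonempty ι with _ | _
  · simp
  set A := ∑ i, (α i)⁻¹ with hA
  set B := ∑ i, (β i)⁻¹ with hB
  set S := ∑ i, α i * β i with hS
  have hA_pos : 0 < A := sum_pos (fun i _ ↦ inv_pos.2 (hα i)) univ_nonempty
  have hB_pos : 0 < B := sum_pos (fun i _ ↦ inv_pos.2 (hβ i)) univ_nonempty
  have hS_pos : 0 < S := sum_pos (fun i _ ↦ mul_pos (hα i) (hβ i)) univ_nonempty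
  have : (0 : ℝ) < Fintype.card ι := Nat.cast_pos.2 Fintype.card_pos
  by_contra! hlt
  have hterm : ∀ i, 3 < (α i)⁻¹ * (Fintype.card ι / A) + (β i)⁻¹ * (Fintype.card ι / B) +
      α i * β i * (Fintype.card ι / S) := by
    intro i
    have hαi := hα i
    have hβi := hβ i
    refine three_lt_add_add_of_one_lt_mul (by positivity) (by positivity) (by positivity) ?_
    calc 1 < (Fintype.card ι : ℝ) ^ 3 / (A * B * S) := (one_lt_div (by positivity)).2 hlt
      _ = _ := by field_simp
  have hsum := sum_lt_sum_of_nonempty univ_nonempty fun i _ ↦ hterm i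
  rw [sum_add_distrib, sum_add_distrib, ← sum_mul, ← sum_mul, ← sum_mul, ← hA, ← hB, ← hS,
    mul_div_cancel₀ _ hA_pos.ne', mul_div_cancel₀ _ hB_pos.ne', mul_div_cancel₀ _ hS_pos.ne',
    sum_const, card_univ, nsmul_eq_mul] at hsum
  linarith

theorem card_pow_three_le_card_image_mul (σ τ : ι → ℕ) :
    Fintype.card ι ^ 3 ≤ #(univ.image σ) * #(univ.image τ) *
      ∑ i, #{j | σ j = σ i} * #{k | τ k = τ i} := by
  have := card_pow_three_le_sum_inv_mul (ι := ι) (α := fun i ↦ #{j | σ j = σ i})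
    (β := fun i ↦ #{k | τ k = τ i}) (fun i ↦ Nat.cast_pos.2 (card_pos.2 ⟨i, by simp⟩))
    (fun i ↦ Nat.cast_pos.2 (card_pos.2 ⟨i, by simp⟩))
  rw [sum_inv_card_fiber, sum_inv_card_fiber] at this
  exact_mod_cast this

/-- The inequality obtained from the exchange along a hexagon, in which `f` gives positions on the
cycle cut into the rows `σ` and `g` gives positions on the cycle cut into the columns `τ`. -/
def HexagonInequality (σ τ f g : ι → ℕ) : Prop :=
  ∀ ⦃i j k i' j' k' : ι⦄, IsHexagon σ τ i j k i' j' k' → (σ j < σ k ↔ σ j' < σ k') →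
    (σ j < σ j' ↔ f k < f k') → (f i < f j ↔ f i' < f j') →
    |(g j : ℤ) - g j'| + |(g i : ℤ) - g k| + |(g i' : ℤ) - g k'| <
      |(f k : ℤ) - f k'| + |(f i : ℤ) - f j| + |(f i' : ℤ) - f j'|

/-- Edges `i` of a bipartite graph, joining row `σ i` to column `τ i` and with positions `f i` and
`g i` at their ends, for which the hexagon inequality holds in both directions. -/
structure ExchangeSystem (σ τ f g : ι → ℕ) : Prop where
  injective_left : Function.Injective f
  injective_right : Function.Injective g
  eq_of_eq : ∀ i j, σ i = σ j → τ i = τ j → i = j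
  hexagon_left : HexagonInequality σ τ f g
  hexagon_right : HexagonInequality τ σ g f

/-- Triples `(j, i, k)` of edges such that `j` and `i` share their row and `i` and `k` their
column. -/
def consecutiveTriples (σ τ : ι → ℕ) : Finset (ι × ι × ι) :=
  {e | σ e.1 = σ e.2.1 ∧ τ e.2.1 = τ e.2.2}

theorem mem_consecutiveTriples {e : ι × ι × ι} :
    e ∈ consecutiveTriples σ τ ↔ σ e.1 = σ e.2.1 ∧ τ e.2.1 = τ e.2.2 := by
  simp [consecutiveTriples]

theorem card_consecutiveTriples (σ τ : ι → ℕ) :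
    #(consecutiveTriples σ τ) = ∑ i, #{j | σ j = σ i} * #{k | τ k = τ i} := by
  classical
  rw [card_eq_sum_card_fiberwise fun e _ ↦ mem_coe.2 (mem_univ e.2.1)]
  refine sum_congr rfl fun i _ ↦ ?_
  rw [← card_product]
  refine card_nbij' (fun e ↦ (e.1, e.2.2)) (fun e ↦ (e.1, i, e.2)) ?_ ?_ ?_ ?_ <;>
    simp +contextual [mem_consecutiveTriples, Set.MapsTo, Set.LeftInvOn, Set.RightInvOn]
  grind

/-- The four strict comparisons that decide how the exchange runs through a hexagon containing the
triple `(j, i, k)` whose common row is `x` and whose common column is `y`. -/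
def orderType (σ τ f g : ι → ℕ) (x y : ℕ) (e : ι × ι × ι) : Bool × Bool × Bool × Bool :=
  (σ e.1 < x, τ e.2.2 < y, f e.2.1 < f e.1, g e.2.1 < g e.2.2)

namespace ExchangeSystem

theorem eq_of_mem_consecutiveTriples (h : ExchangeSystem σ τ f g) {e e' : ι × ι × ι}
    (he : e ∈ consecutiveTriples σ τ) (he' : e' ∈ consecutiveTriples σ τ) (hfst : e.1 = e'.1)
    (hsnd : e.2.2 = e'.2.2) : e = e' := by
  rw [mem_consecutiveTriples] at he he'
  exact Prod.ext hfst (Prod.ext (h.eq_of_eq _ _ (by rw [← he.1, ← he'.1, hfst])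
    (by rw [he.2, he'.2, hsnd])) hsnd)

theorem exchangeData (h : ExchangeSystem σ τ f g) {x y : ℕ} {T : Finset (ι × ι × ι)}
    (hT : T ⊆ consecutiveTriples σ τ) (hrow : ∀ e ∈ T, σ e.2.2 = x) (hcol : ∀ e ∈ T, τ e.1 = y)
    (hrow_ne : ∀ e ∈ T, σ e.1 ≠ x) (hcol_ne : ∀ e ∈ T, τ e.2.2 ≠ y)
    (htype : ∀ e ∈ T, ∀ e' ∈ T, orderType σ τ f g x y e = orderType σ τ f g x y e') :
    ExchangeData T (fun e ↦ σ e.1) (fun e ↦ τ e.2.2) (fun e ↦ g e.1) (fun e ↦ f e.2.2)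
      (fun e ↦ |(f e.2.1 : ℤ) - f e.1|) (fun e ↦ |(g e.2.1 : ℤ) - g e.2.2|) := by
  have hhex : ∀ e ∈ T, ∀ e' ∈ T, σ e.1 ≠ σ e'.1 → τ e.2.2 ≠ τ e'.2.2 →
      IsHexagon σ τ e.2.1 e.1 e.2.2 e'.2.1 e'.1 e'.2.2 := by
    intro e he e' he' ha hb
    have := mem_consecutiveTriples.1 (hT he)
    have := mem_consecutiveTriples.1 (hT he')
    constructor <;> grind
  have hrow_iff : ∀ e ∈ T, ∀ e' ∈ T, σ e.1 = σ e'.1 ↔ e.1 = e'.1 := fun e he e' he' ↦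
    ⟨fun ha ↦ h.eq_of_eq _ _ ha ((hcol e he).trans (hcol e' he').symm), congrArg σ⟩
  have hcol_iff : ∀ e ∈ T, ∀ e' ∈ T, τ e.2.2 = τ e'.2.2 ↔ e.2.2 = e'.2.2 := fun e he e' he' ↦
    ⟨h.eq_of_eq _ _ ((hrow e he).trans (hrow e' he').symm), congrArg τ⟩
  simp only [orderType, Prod.mk.injEq, decide_eq_decide] at htype
  refine ⟨?_, ?_, ?_, ?_, ?_⟩
  · intro e he e' he' hee'
    obtain ⟨ha, hb⟩ := Prod.mk.inj hee'
    exact h.eq_of_mem_consecutiveTriples (hT he) (hT he') ((hrow_iff e he e' he').1 ha)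
      ((hcol_iff e he e' he').1 hb)
  · intro e he e' he'
    rw [hrow_iff e he e' he', Nat.cast_inj, h.injective_right.eq_iff]
  · intro e he e' he'
    rw [hcol_iff e he e' he', Nat.cast_inj, h.injective_left.eq_iff]
  · intro e he e' he' ha hb hab
    have := h.hexagon_left (hhex e he e' he' ha hb) (by grind) (mod_cast hab) (by grind)
    grind
  · intro e he e' he' ha hb hab
    have := h.hexagon_right (hhex e he e' he' ha hb).dual (by grind) (mod_cast hab) (by grind)
    grind

theorem card_le_of_row_ne_of_col_ne (h : ExchangeSystem σ τ f g) {x y : ℕ}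
    {T : Finset (ι × ι × ι)} (hT : T ⊆ consecutiveTriples σ τ) (hrow : ∀ e ∈ T, σ e.2.2 = x)
    (hcol : ∀ e ∈ T, τ e.1 = y) (hrow_ne : ∀ e ∈ T, σ e.1 ≠ x) (hcol_ne : ∀ e ∈ T, τ e.2.2 ≠ y) :
    #T ≤ 64 * (#{j | τ j = y} + #{k | σ k = x}) := by
  have hclass : ∀ o ∈ T.image (orderType σ τ f g x y),
      #{e ∈ T | orderType σ τ f g x y e = o} ≤ 4 * (#{j | τ j = y} + #{k | σ k = x}) := by
    intro o _
    have hsub := filter_subset (fun e ↦ orderType σ τ f g x y e = o) T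
    have hdata := h.exchangeData (hsub.trans hT) (fun e he ↦ hrow e (hsub he))
      (fun e he ↦ hcol e (hsub he)) (fun e he ↦ hrow_ne e (hsub he))
      (fun e he ↦ hcol_ne e (hsub he)) (by grind)
    have hrows : #({e ∈ T | orderType σ τ f g x y e = o}.image fun e ↦ σ e.1) ≤ #{j | τ j = y} := by
      refine (card_le_card (image_subset_iff.2 fun e he ↦ ?_)).trans (card_image_le (f := σ))
      exact mem_image_of_mem σ (mem_filter.2 ⟨mem_univ _, hcol e (hsub he)⟩)
    have hcols : #({e ∈ T | orderType σ τ f g x y e = o}.image fun e ↦ τ e.2.2) ≤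
        #{k | σ k = x} := by
      refine (card_le_card (image_subset_iff.2 fun e he ↦ ?_)).trans (card_image_le (f := τ))
      exact mem_image_of_mem τ (mem_filter.2 ⟨mem_univ _, hrow e (hsub he)⟩)
    exact hdata.card_le.trans (Nat.mul_le_mul_left 4 (add_le_add hrows hcols))
  have hcolours : #(T.image (orderType σ τ f g x y)) ≤ 16 := card_le_univ _
  have := card_le_mul_card_image T _ hclass
  nlinarith

theorem card_fiber_le (h : ExchangeSystem σ τ f g) (x y : ℕ) :
    #{e ∈ consecutiveTriples σ τ | σ e.2.2 = x ∧ τ e.1 = y} ≤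
      65 * (#{j | τ j = y} + #{k | σ k = x}) := by
  classical
  set T := {e ∈ consecutiveTriples σ τ | σ e.2.2 = x ∧ τ e.1 = y}
  have hT : ∀ e ∈ T, e ∈ consecutiveTriples σ τ ∧ σ e.2.2 = x ∧ τ e.1 = y :=
    fun e he ↦ mem_filter.1 he
  have hgeneric : #{e ∈ T | σ e.1 ≠ x ∧ τ e.2.2 ≠ y} ≤ 64 * (#{j | τ j = y} + #{k | σ k = x}) :=
    h.card_le_of_row_ne_of_col_ne (by grind) (by grind) (by grind) (by grind) (by grind)
  have hrow : #{e ∈ T | σ e.1 = x} ≤ #{k | σ k = x} := by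
    refine card_le_card_of_injOn (fun e ↦ e.2.2) (fun e he ↦ ?_) fun e he e' he' hsnd ↦ ?_
    · simpa using (hT e (mem_filter.1 he).1).2.1
    · obtain ⟨⟨he, -, hy⟩, hx⟩ := (mem_filter.1 he).imp_left (hT e)
      obtain ⟨⟨he', -, hy'⟩, hx'⟩ := (mem_filter.1 he').imp_left (hT e')
      exact h.eq_of_mem_consecutiveTriples he he'
        (h.eq_of_eq _ _ (hx.trans hx'.symm) (hy.trans hy'.symm)) hsnd
  have hcol : #{e ∈ T | τ e.2.2 = y} ≤ #{j | τ j = y} := by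
    refine card_le_card_of_injOn Prod.fst (fun e he ↦ ?_) fun e he e' he' hfst ↦ ?_
    · simpa using (hT e (mem_filter.1 he).1).2.2
    · obtain ⟨⟨he, hx, -⟩, hy⟩ := (mem_filter.1 he).imp_left (hT e)
      obtain ⟨⟨he', hx', -⟩, hy'⟩ := (mem_filter.1 he').imp_left (hT e')
      exact h.eq_of_mem_consecutiveTriples he he' hfst
        (h.eq_of_eq _ _ (hx.trans hx'.symm) (hy.trans hy'.symm))
  have hsub : T ⊆ {e ∈ T | σ e.1 ≠ x ∧ τ e.2.2 ≠ y} ∪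
      ({e ∈ T | σ e.1 = x} ∪ {e ∈ T | τ e.2.2 = y}) := by grind
  have := (card_le_card hsub).trans ((card_union_le _ _).trans
    (Nat.add_le_add_left (card_union_le _ _) _))
  lia

theorem card_consecutiveTriples_le (h : ExchangeSystem σ τ f g) (hσ : ∀ i, σ i < n)
    (hτ : ∀ i, τ i < n) : #(consecutiveTriples σ τ) ≤ 130 * n * Fintype.card ι := by
  have hmaps : ∀ e ∈ consecutiveTriples σ τ, (σ e.2.2, τ e.1) ∈ range n ×ˢ range n := fun e _ ↦
    mem_product.2 ⟨mem_range.2 (hσ _), mem_range.2 (hτ _)⟩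
  have hσ_sum : ∑ x ∈ range n, #{k | σ k = x} = Fintype.card ι :=
    (card_eq_sum_card_fiberwise fun k _ ↦ mem_coe.2 (mem_range.2 (hσ k))).symm
  have hτ_sum : ∑ y ∈ range n, #{j | τ j = y} = Fintype.card ι :=
    (card_eq_sum_card_fiberwise fun j _ ↦ mem_coe.2 (mem_range.2 (hτ j))).symm
  calc #(consecutiveTriples σ τ)
      = ∑ z ∈ range n ×ˢ range n, #{e ∈ consecutiveTriples σ τ | (σ e.2.2, τ e.1) = z} :=
        card_eq_sum_card_fiberwise hmaps
    _ ≤ ∑ z ∈ range n ×ˢ range n, 65 * (#{j | τ j = z.2} + #{k | σ k = z.1}) :=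
        sum_le_sum fun z _ ↦ by
          simpa only [Prod.ext_iff] using h.card_fiber_le z.1 z.2
    _ = 130 * n * Fintype.card ι := by
        rw [← mul_sum, sum_product, sum_congr rfl fun x _ ↦ sum_add_distrib, sum_add_distrib]
        simp only [sum_const, card_range, smul_eq_mul, hτ_sum, ← mul_sum, hσ_sum]
        ring

theorem card_sq_le (h : ExchangeSystem σ τ f g) (hσ : ∀ i, σ i < n) (hτ : ∀ i, τ i < n) :
    Fintype.card ι ^ 2 ≤ 130 * n ^ 3 := by
  rcases (Fintype.card ι).eq_zero_or_pos with hzero | hpos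
  · simp [hzero]
  have himage : ∀ ρ : ι → ℕ, (∀ i, ρ i < n) → #(univ.image ρ) ≤ n := fun ρ hρ ↦
    (card_le_card (image_subset_iff.2 fun i _ ↦ mem_range.2 (hρ i))).trans (card_range n).le
  refine Nat.le_of_mul_le_mul_right ?_ hpos
  calc Fintype.card ι ^ 2 * Fintype.card ι
      = Fintype.card ι ^ 3 := (pow_succ _ 2).symm
    _ ≤ #(univ.image σ) * #(univ.image τ) * #(consecutiveTriples σ τ) :=
        (card_pow_three_le_card_image_mul σ τ).trans_eq (by rw [card_consecutiveTriples])
    _ ≤ n * n * (130 * n * Fintype.card ι) :=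
        Nat.mul_le_mul (Nat.mul_le_mul (himage σ hσ) (himage τ hτ))
          (h.card_consecutiveTriples_le hσ hτ)
    _ = 130 * n ^ 3 * Fintype.card ι := by ring

theorem card_le_sq (h : ExchangeSystem σ τ f g) (hσ : ∀ i, σ i < n) (hτ : ∀ i, τ i < n) :
    Fintype.card ι ≤ n ^ 2 := by
  calc #(univ : Finset ι) ≤ #(range n ×ˢ range n) :=
        card_le_card_of_injOn (fun i ↦ (σ i, τ i))
          (fun i _ ↦ mem_product.2 ⟨mem_range.2 (hσ i), mem_range.2 (hτ i)⟩)
          fun i _ j _ hij ↦ h.eq_of_eq i j (Prod.ext_iff.1 hij).1 (Prod.ext_iff.1 hij).2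
    _ = n ^ 2 := by rw [card_product, card_range, sq]

end ExchangeSystem

end ConsecutiveTriples

section LongestCycles

variable {V : Type*} {G : SimpleGraph V} {L k : ℕ} {c d : ℕ → V} {u v : V}

theorem IsLongestCycle.length_eq {p : G.Walk u u} {q : G.Walk v v} (hp : IsLongestCycle G p)
    (hq : IsLongestCycle G q) : p.length = q.length :=
  (hq.2 u p hp.1).antisymm (hp.2 v q hq.1)

namespace LinkedCycles

variable {ι : Type*} {X : Finset V} {f g : ι → ℕ} {R : ι → Finset V}

theorem exchangeSystem [DecidableEq V] (h : LinkedCycles G L X c d f g R) :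
    ExchangeSystem (fun i ↦ segmentIndex X c (f i)) (fun i ↦ segmentIndex X d (g i)) f g where
  injective_left := h.injective_left
  injective_right := h.symm.injective_left
  eq_of_eq _ _ := h.eq_of_segmentIndex_eq
  hexagon_left _ _ _ _ _ _ := h.hexagon_exchange
  hexagon_right _ _ _ _ _ _ := h.symm.hexagon_exchange

theorem segmentIndex_lt [DecidableEq V] (h : LinkedCycles G L X c d f g R) (i : ι) :
    segmentIndex X c (f i) < #X + 1 :=
  Nat.lt_succ_of_le (segmentIndex_le_card h.enum_left.injOn (h.lt_left i).le)

variable [Fintype ι]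

theorem card_sq_le (h : LinkedCycles G L X c d f g R) :
    Fintype.card ι ^ 2 ≤ 130 * (#X + 1) ^ 3 := by
  classical
  exact h.exchangeSystem.card_sq_le h.segmentIndex_lt h.symm.segmentIndex_lt

theorem card_le_sq (h : LinkedCycles G L X c d f g R) : Fintype.card ι ≤ (#X + 1) ^ 2 := by
  classical
  exact h.exchangeSystem.card_le_sq h.segmentIndex_lt h.symm.segmentIndex_lt

end LinkedCycles

variable [Fintype V] [DecidableEq V]

theorem IsLongestCycle.le_card_support (hG : IsVertexConnected G k) (hk : 2 ≤ k) {p : G.Walk u u}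
    (hp : IsLongestCycle G p) : k ≤ #p.support.toFinset := by
  have hlt := hG.lt_of_forall_isCycle_length_le hk hp.2
  have htail : p.support.tail.toFinset ⊆ p.support.toFinset := fun z hz ↦
    List.mem_toFinset.2 (List.mem_of_mem_tail (List.mem_toFinset.1 hz))
  have := card_le_card htail
  rw [List.toFinset_card_of_nodup hp.1.support_nodup, List.length_tail, p.length_support] at this
  lia

theorem IsVertexConnected.exists_linkedCycles (hG : IsVertexConnected G k) (hk : 2 ≤ k)
    {p : G.Walk u u} {q : G.Walk v v} (hp : IsLongestCycle G p) (hq : IsLongestCycle G q) :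
    ∃ (I : Finset V) (c d : ℕ → V) (f g : I → ℕ) (R : I → Finset V),
      k ≤ #I + #(p.support.toFinset ∩ q.support.toFinset) ∧
      LinkedCycles G p.length (p.support.toFinset ∩ q.support.toFinset) c d f g R := by
  obtain ⟨I, R, a, b, hcard, hdisj, hR⟩ := hG.exists_disjoint_pathOn_meeting_once
    (hp.le_card_support hG hk) (hq.le_card_support hG hk)
  obtain ⟨c, hc, hc_mem⟩ := exists_isCyclicEnumeration hp.1
  obtain ⟨d, hd, hd_mem⟩ := exists_isCyclicEnumeration hq.1
  rw [← hp.length_eq hq] at hd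
  simp only [List.mem_toFinset] at hR
  have hf : ∀ i : I, ∃ j < p.length, c j = a i := fun i ↦
    let ⟨j, hj⟩ := (hc_mem _).1 (hR i i.2).2.1
    hj ▸ hc.exists_lt j
  have hg : ∀ i : I, ∃ j < p.length, d j = b i := fun i ↦
    let ⟨j, hj⟩ := (hd_mem _).1 (hR i i.2).2.2.1
    hj ▸ hd.exists_lt j
  choose f hfL hf using hf
  choose g hgL hg using hg
  have hX : ∀ z, z ∈ p.support.toFinset ∩ q.support.toFinset ↔ z ∈ p.support ∧ z ∈ q.support :=
    fun z ↦ by simp only [mem_inter, List.mem_toFinset]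
  exact ⟨I, c, d, f, g, fun i ↦ R i, hcard,
    { enum_left := hc
      enum_right := hd
      length_le := hp.2
      mem_of_eq := fun k l hkl ↦ (hX _).2 ⟨(hc_mem _).2 ⟨k, rfl⟩, (hd_mem _).2 ⟨l, hkl.symm⟩⟩
      pathOn := fun i ↦ by simpa only [hf, hg] using (hR i i.2).1
      disjoint := fun i j hij ↦ hdisj i.2 j.2 (Subtype.coe_injective.ne hij)
      lt_left := hfL
      lt_right := hgL
      eq_left := fun i k hk ↦ by grind
      eq_right := fun i k hk ↦ by grind
      notMem_left := fun i ↦ by grind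
      notMem_right := fun i hi ↦ by
        obtain ⟨hpath, -, hb, ha, ha_unique, -⟩ := hR i i.2
        rw [hg, hX] at hi
        exact ha (ha_unique _ hpath.right_mem hi.1 ▸ hb) }⟩

theorem IsVertexConnected.sq_le_card_inter_pow_three (hG : IsVertexConnected G k) (hk : 2 ≤ k)
    {p : G.Walk u u} {q : G.Walk v v} (hp : IsLongestCycle G p) (hq : IsLongestCycle G q) :
    k ^ 2 ≤ (13 * #(p.support.toFinset ∩ q.support.toFinset)) ^ 3 := by
  obtain ⟨I, c, d, f, g, R, hcard, h⟩ := hG.exists_linkedCycles hk hp hq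
  have hsq := h.card_sq_le
  have hle := h.card_le_sq
  rw [Fintype.card_coe] at hsq hle
  generalize #(p.support.toFinset ∩ q.support.toFinset) = m at hcard hsq hle ⊢
  have hm : 1 ≤ m := by
    rcases m.eq_zero_or_pos with rfl | hm
    · lia
    · exact hm
  calc k ^ 2 ≤ (#I + m) ^ 2 := Nat.pow_le_pow_left hcard 2
    _ ≤ 2 * (#I ^ 2 + m ^ 2) := add_sq_le
    _ ≤ 2 * (130 * (2 * m) ^ 3 + m ^ 3) := by
        gcongr
        · exact hsq.trans (by gcongr; lia)
        · lia
    _ ≤ (13 * m) ^ 3 := by ring_nf; lia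

end LongestCycles

theorem longest_cycles_meet_in_r_connected_general.{u} :
    ∃ C : ℝ, 0 < C ∧
      ∀ (r : ℕ), 2 ≤ r →
      ∀ (V : Type u) [Fintype V] [DecidableEq V] (G : SimpleGraph V), IsVertexConnected G r →
        ∀ (u v : V) (c1 : G.Walk u u) (c2 : G.Walk v v),
          IsLongestCycle G c1 → IsLongestCycle G c2 →
          C * (r : ℝ) ^ ((2 : ℝ) / 3) ≤
            ((c1.support.toFinset ∩ c2.support.toFinset).card : ℝ) := by
  refine ⟨1 / 13, by norm_num, fun r hr V _ _ G hG u v c1 c2 h1 h2 ↦ ?_⟩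
  have hsq := hG.sq_le_card_inter_pow_three hr h1 h2
  set m := #(c1.support.toFinset ∩ c2.support.toFinset)
  have hpow : (r : ℝ) ^ ((2 : ℝ) / 3) ≤ 13 * m := by
    calc (r : ℝ) ^ ((2 : ℝ) / 3) = ((r : ℝ) ^ 2) ^ ((3 : ℕ) : ℝ)⁻¹ := by
          rw [← Real.rpow_natCast_mul r.cast_nonneg]
          norm_num
      _ ≤ ((13 * m : ℝ) ^ 3) ^ ((3 : ℕ) : ℝ)⁻¹ := by
          gcongr
          exact_mod_cast hsq
      _ = 13 * m := Real.pow_rpow_inv_natCast (by positivity) three_ne_zero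
  linarith

theorem longest_cycles_meet_in_r_connected :
    ∃ C : ℝ, 0 < C ∧
      ∀ (r : ℕ), 2 ≤ r →
      ∀ (V : Type) [Fintype V] [DecidableEq V] (G : SimpleGraph V),
        -- `G` is `r`-connected:
        r < Fintype.card V →
        (∀ S : Finset V, S.card < r → (G.induce ((↑S : Set V)ᶜ)).Connected) →
        ∀ (u v : V) (c1 : G.Walk u u) (c2 : G.Walk v v),
          IsLongestCycle G c1 → IsLongestCycle G c2 →
          C * (r : ℝ) ^ ((5 : ℝ) / 8) ≤
            ((c1.support.toFinset ∩ c2.support.toFinset).card : ℝ) := by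
  obtain ⟨C, hC, h⟩ := longest_cycles_meet_in_r_connected_general
  refine ⟨C, hC, fun r hr V _ _ G hcard hconn u v c1 c2 h1 h2 ↦ ?_⟩
  have hr1 : (1 : ℝ) ≤ r := by exact_mod_cast one_le_two.trans hr
  calc C * (r : ℝ) ^ ((5 : ℝ) / 8) ≤ C * (r : ℝ) ^ ((2 : ℝ) / 3) :=
        mul_le_mul_of_nonneg_left (Real.rpow_le_rpow_of_exponent_le hr1 (by norm_num)) hC.le
    _ ≤ _ := h r hr V G ⟨hcard, hconn⟩ u v c1 c2 h1 h2
end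

section
/- There exists a constant C > 0 such that the following holds. Let C1 and C2 be two longest cycles in a finite simple graph G with k := |V(C1) ∩ V(C2)| > 0, let A := V(C1) \ V(C2) and B := V(C2) \ V(C1), and let S be a minimum A–B separator in G. Then |S| ≤ C · k^{8/5}. -/
open SimpleGraph

/-- `S` is an `A`–`B` separator in `G`: every path with one endpoint in `A` and the
other in `B` contains a vertex of `S`. -/
def IsSeparator {V : Type*} (G : SimpleGraph V) (A B S : Finset V) : Prop :=
  ∀ (a b : V), a ∈ A → b ∈ B → ∀ p : G.Walk a b, p.IsPath → ∃ s ∈ S, s ∈ p.support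

/-- `S` is a minimum `A`–`B` separator in `G`. -/
def IsMinSeparator {V : Type*} (G : SimpleGraph V) (A B S : Finset V) : Prop :=
  IsSeparator G A B S ∧ ∀ S' : Finset V, IsSeparator G A B S' → S.card ≤ S'.card

/-!
Let `A` and `B` be the vertices lying on only one of the two cycles. By Menger's theorem there are
`|S|` disjoint paths from `A` to `B`, and all but at most `k` of them avoid the common vertices.
The common vertices cut each cycle into segments, so these paths are the edges of a bipartite
multigraph between the segments of the first cycle and those of the second. A few paths together
with arcs of one cycle form detours for the other one. If one and the same set of paths serves both
cycles, comparing the lengths of the arcs given up with those of the arcs gained shows that one of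
the cycles could be lengthened. This rules out double edges, 4-cycles in which the paths reach the
segments in certain orders, and likewise some 6-cycles.

To count the paths, say that a path is flanked by one that ends in the same segment on its left and
one on its right. Apart from few paths, each one is flanked in at least `m ^ 2` ways on either
cycle. By the forbidden configurations a path is determined by the segments at the far ends of its
four flanking paths together with two bits of information, so `n` paths satisfy `n * m ^ 4 ≲ k ^ 4`,
and `m ≈ n / k` gives `n ≲ k ^ (8 / 5)`.
-/

namespace LongestCycles

/-! ### Cycles and walks as lists of vertices -/

section Lists

variable {V : Type*} {G : SimpleGraph V}

/-- `Link G x L y`: the vertices `x`, `L`, `y`, in this order, form a walk from `x` to `y`. Keeping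
the end vertices apart from the interior `L` makes it easy to glue links along a cycle. -/
def Link (G : SimpleGraph V) (x : V) (L : List V) (y : V) : Prop :=
  List.IsChain G.Adj (x :: (L ++ [y]))

theorem link_append_cons {x y z : V} {L M : List V} :
    Link G x (L ++ y :: M) z ↔ Link G x L y ∧ Link G y M z := by
  simpa [Link] using List.isChain_split (R := G.Adj) (c := y) (l₁ := x :: L) (l₂ := M ++ [z])

theorem Link.reverse {x y : V} {L : List V} (h : Link G x L y) : Link G y L.reverse x := by
  have := List.isChain_reverse.2 (h.imp fun _ _ hab => hab.symm)
  simpa [Link] using this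

/-- `l` lists the vertices of a cycle of `G` once around; the last one is adjacent to the first. -/
structure IsCycleList (G : SimpleGraph V) (l : List V) : Prop where
  nodup : l.Nodup
  three_le_length : 3 ≤ l.length
  chain : Cycle.Chain G.Adj (l : Cycle V)

theorem chain_cons_iff_link {x : V} {L : List V} :
    Cycle.Chain G.Adj ((x :: L : List V) : Cycle V) ↔ Link G x L x :=
  Cycle.chain_coe_cons _ _ _

theorem IsCycleList.isChain {l : List V} (h : IsCycleList G l) : l.IsChain G.Adj := by
  obtain _ | ⟨x, L⟩ := l
  · exact .nil
  · exact (Cycle.chain_coe_cons _ _ _ |>.1 h.chain).prefix ⟨[x], rfl⟩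

theorem exists_walk_support_eq {x y : V} {l : List V} (hne : l ≠ []) (hchain : l.IsChain G.Adj)
    (hx : l.head hne = x) (hy : l.getLast hne = y) : ∃ p : G.Walk x y, p.support = l := by
  subst hx hy
  exact ⟨Walk.ofSupport l hne hchain, Walk.support_ofSupport hne hchain⟩

theorem Link.exists_walk {x y : V} {L : List V} (h : Link G x L y) :
    ∃ p : G.Walk x y, p.support = x :: (L ++ [y]) :=
  exists_walk_support_eq (List.cons_ne_nil _ _) h (by simp) (by simp)

theorem IsCycleList.exists_isCycle {l : List V} (h : IsCycleList G l) :
    ∃ (u : V) (c : G.Walk u u), c.IsCycle ∧ c.length = l.length := by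
  obtain ⟨hnodup, hlength, hchain⟩ := h
  obtain _ | ⟨x, L⟩ := l
  · simp at hlength
  obtain ⟨p, hp⟩ := (chain_cons_iff_link.1 hchain).exists_walk
  have hplength : p.length = (x :: L).length := by
    simpa [hp] using p.length_support.symm
  refine ⟨x, p, Walk.isCycle_iff_isPath_tail_and_le_length.2 ⟨?_, hplength ▸ hlength⟩, hplength⟩
  have hnil : ¬ p.Nil := by rw [← Walk.length_eq_zero_iff]; omega
  rw [Walk.isPath_def, p.support_tail_of_not_nil hnil, hp]
  exact (List.perm_append_singleton x L).nodup_iff.2 hnodup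

theorem exists_isCycleList {u : V} {c : G.Walk u u} (hc : c.IsCycle) :
    ∃ l, IsCycleList G l ∧ l.length = c.length ∧ ∀ v, v ∈ l ↔ v ∈ c.support := by
  obtain _ | ⟨hadj, p⟩ := c
  · exact absurd rfl hc.ne_nil
  have hsupport := p.dropLast_support_concat
  refine ⟨u :: p.support.dropLast, ⟨?_, ?_, ?_⟩, by simp, fun v => ?_⟩
  · rw [← (List.perm_append_singleton u _).nodup_iff, hsupport]
    exact ((Walk.cons_isCycle_iff _ _).1 hc).1.support_nodup
  · simpa using hc.three_le_length
  · rw [chain_cons_iff_link, Link, hsupport]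
    exact (Walk.cons hadj p).isChain_adj_support
  · have hmem : v ∈ p.support.dropLast ++ [u] ↔ v ∈ p.support := by rw [hsupport]
    rw [Walk.support_cons, List.mem_cons, List.mem_cons, ← hmem, List.mem_append,
      List.mem_singleton]
    tauto

/-- `IsCycleList` version of `IsLongestCycle`. -/
structure IsLongestCycleList (G : SimpleGraph V) (l : List V) : Prop extends IsCycleList G l where
  length_le : ∀ l', IsCycleList G l' → l'.length ≤ l.length

theorem IsLongestCycle.exists_isLongestCycleList {u : V} {c : G.Walk u u}
    (hc : IsLongestCycle G c) :
    ∃ l, IsLongestCycleList G l ∧ ∀ v, v ∈ l ↔ v ∈ c.support := by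
  obtain ⟨l, hl, hlength, hmem⟩ := exists_isCycleList hc.1
  refine ⟨l, ⟨hl, fun l' hl' => ?_⟩, hmem⟩
  obtain ⟨u', c', hc', hlength'⟩ := hl'.exists_isCycle
  exact hlength' ▸ hlength ▸ hc.2 u' c' hc'

theorem IsLongestCycleList.isRotated {l l' : List V} (h : IsLongestCycleList G l) (hr : l ~r l') :
    IsLongestCycleList G l' where
  nodup := hr.perm.nodup_iff.1 h.nodup
  three_le_length := hr.perm.length_eq ▸ h.three_le_length
  chain := Cycle.coe_eq_coe.2 hr ▸ h.chain
  length_le := hr.perm.length_eq ▸ h.length_le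

/-! ### Reconnecting a longest cycle -/

theorem IsLongestCycleList.length_le_of_perm {x : V} {l L D R : List V}
    (h : IsLongestCycleList G l) (hD : (D ++ l).Nodup) (hlink : Link G x L x)
    (hperm : ((x :: L) ++ R).Perm (D ++ l)) : D.length ≤ R.length := by
  by_contra! hlt
  have hsum := hperm.length_eq
  rw [List.length_append, List.length_append] at hsum
  have hgt : l.length < (x :: L).length := by omega
  exact hgt.not_ge (h.length_le _ ⟨(hperm.nodup_iff.2 hD).of_append_left,
    h.three_le_length.trans hgt.le, chain_cons_iff_link.2 hlink⟩)

theorem IsLongestCycleList.length_le_of_reconnect_one {a₁ a₂ : V} {l g S W : List V}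
    (h : IsLongestCycleList G l) (hl : l ~r a₁ :: (g ++ a₂ :: S)) (hnodup : (W ++ l).Nodup)
    (hW : Link G a₁ W a₂) : W.length ≤ g.length := by
  have hlink := chain_cons_iff_link.1 (h.isRotated hl).chain
  rw [link_append_cons] at hlink
  refine h.length_le_of_perm hnodup (link_append_cons.2 ⟨hW, hlink.2⟩) ?_
  classical
  refine List.Perm.trans ?_ (hl.perm.symm.append_left W)
  rw [List.perm_iff_count]
  intro v
  simp only [List.count_append, List.count_cons]
  omega

theorem IsLongestCycleList.length_le_of_reconnect_two {a₁ a₂ b₁ b₂ : V}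
    {l g₁ g₂ S₁ S₂ W₁ W₂ : List V} (h : IsLongestCycleList G l)
    (hl : l ~r a₁ :: (g₁ ++ a₂ :: (S₁ ++ b₁ :: (g₂ ++ b₂ :: S₂)))) (hnodup : (W₁ ++ W₂ ++ l).Nodup)
    (hW₁ : Link G a₁ W₁ b₁) (hW₂ : Link G a₂ W₂ b₂) :
    W₁.length + W₂.length ≤ g₁.length + g₂.length := by
  have hlink := chain_cons_iff_link.1 (h.isRotated hl).chain
  simp only [link_append_cons] at hlink
  obtain ⟨-, hS₁, -, hS₂⟩ := hlink
  rw [← List.length_append, ← List.length_append]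
  refine h.length_le_of_perm (x := a₁) (L := W₁ ++ b₁ :: (S₁.reverse ++ a₂ :: (W₂ ++ b₂ :: S₂)))
    hnodup (by simp only [link_append_cons]; exact ⟨hW₁, hS₁.reverse, hW₂, hS₂⟩) ?_
  classical
  refine List.Perm.trans ?_ (hl.perm.symm.append_left (W₁ ++ W₂))
  rw [List.perm_iff_count]
  intro v
  simp only [List.count_append, List.count_cons, List.count_reverse]
  omega

theorem IsLongestCycleList.length_le_of_reconnect_three {a₁ a₂ b₁ b₂ c₁ c₂ : V}
    {l g₁ g₂ g₃ S₁ S₂ S₃ W₁ W₂ W₃ : List V} (h : IsLongestCycleList G l)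
    (hl : l ~r a₁ :: (g₁ ++ a₂ :: (S₁ ++ b₁ :: (g₂ ++ b₂ :: (S₂ ++ c₁ :: (g₃ ++ c₂ :: S₃))))))
    (hnodup : (W₁ ++ W₂ ++ W₃ ++ l).Nodup)
    (hW₁ : Link G a₁ W₁ b₁) (hW₂ : Link G b₂ W₂ c₂) (hW₃ : Link G a₂ W₃ c₁) :
    W₁.length + W₂.length + W₃.length ≤ g₁.length + g₂.length + g₃.length := by
  have hlink := chain_cons_iff_link.1 (h.isRotated hl).chain
  simp only [link_append_cons] at hlink
  obtain ⟨-, hS₁, -, hS₂, -, hS₃⟩ := hlink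
  simp only [← List.length_append]
  refine h.length_le_of_perm (x := a₁)
    (L := W₁ ++ b₁ :: (S₁.reverse ++ a₂ :: (W₃ ++ c₁ :: (S₂.reverse ++ b₂ :: (W₂ ++ c₂ :: S₃)))))
    hnodup (by
      simp only [link_append_cons]
      exact ⟨hW₁, hS₁.reverse, hW₃, hS₂.reverse, hW₂, hS₃⟩) ?_
  classical
  refine List.Perm.trans ?_ (hl.perm.symm.append_left (W₁ ++ W₂ ++ W₃))
  rw [List.perm_iff_count]
  intro v
  simp only [List.count_append, List.count_cons, List.count_reverse]
  omega

section Positions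

variable [DecidableEq V]

/-- The number of steps from `x` to `y` along the list `l`, never passing from its last entry back
to its first one. -/
def gap (l : List V) (x y : V) : ℕ := Nat.dist (l.idxOf x) (l.idxOf y)

theorem gap_comm (l : List V) (x y : V) : gap l x y = gap l y x := Nat.dist_comm _ _

theorem gap_eq_sub {l : List V} {x y : V} (h : l.idxOf x < l.idxOf y) :
    gap l x y = l.idxOf y - l.idxOf x :=
  Nat.dist_eq_sub_of_le h.le

theorem idxOf_append_cons {l P R : List V} {x : V} (hl : l.Nodup) (h : l = P ++ x :: R) :
    l.idxOf x = P.length := by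
  subst h
  have hx : x ∉ P := fun hx => List.disjoint_of_nodup_append hl hx List.mem_cons_self
  simp [List.idxOf_append_of_notMem hx]

theorem exists_eq_append_cons_of_idxOf_lt {l P R : List V} {x y : V} (hl : l.Nodup)
    (h : l = P ++ x :: R) (hy : y ∈ l) (hlt : l.idxOf x < l.idxOf y) :
    ∃ g T, R = g ++ y :: T ∧ gap l x y = g.length + 1 := by
  have hx := idxOf_append_cons hl h
  have hyP : y ∉ P := fun hyP => by
    have := List.idxOf_lt_length_of_mem hyP
    rw [h, List.idxOf_append_of_mem hyP] at hlt
    rw [h] at hx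
    omega
  have hyR : y ∈ R := by
    rw [h] at hy
    have hne : y ≠ x := fun hyx => by simp [hyx] at hlt
    simpa [hyP, hne] using hy
  obtain ⟨g, T, rfl⟩ := List.append_of_mem hyR
  refine ⟨g, T, rfl, ?_⟩
  have hy := idxOf_append_cons (P := P ++ x :: g) (R := T) hl (by simpa using h)
  rw [gap_eq_sub hlt, hx, hy]
  simp

theorem IsLongestCycleList.length_lt_gap {x y : V} {l W : List V} (h : IsLongestCycleList G l)
    (hx : x ∈ l) (hy : y ∈ l) (hxy : x ≠ y) (hnodup : (W ++ l).Nodup) (hW : Link G x W y) :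
    W.length < gap l x y := by
  wlog hlt : l.idxOf x < l.idxOf y generalizing x y W
  · have hne : l.idxOf x ≠ l.idxOf y := fun he => hxy ((List.idxOf_inj hx).1 he)
    rw [gap_comm, ← List.length_reverse]
    exact this hy hx hxy.symm
      ((((List.reverse_perm W).append_right l).nodup_iff).2 hnodup) hW.reverse (by omega)
  obtain ⟨P, R, hl⟩ := List.append_of_mem hx
  obtain ⟨g, T, rfl, hg⟩ := exists_eq_append_cons_of_idxOf_lt h.nodup hl hy hlt
  have hrot : l ~r x :: (g ++ y :: (T ++ P)) := by
    rw [hl]; simpa using List.isRotated_append (l := P) (l' := x :: (g ++ y :: T))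
  have := h.length_le_of_reconnect_one hrot hnodup hW
  omega

theorem IsLongestCycleList.length_add_length_lt {x₀ x₁ x₂ x₃ : V} {l W₁ W₂ : List V}
    (h : IsLongestCycleList G l) (hx₀ : x₀ ∈ l) (hx₁ : x₁ ∈ l) (hx₂ : x₂ ∈ l) (hx₃ : x₃ ∈ l)
    (h₀₁ : l.idxOf x₀ < l.idxOf x₁) (h₁₂ : l.idxOf x₁ < l.idxOf x₂)
    (h₂₃ : l.idxOf x₂ < l.idxOf x₃) (hnodup : (W₁ ++ W₂ ++ l).Nodup)
    (hW₁ : Link G x₀ W₁ x₂) (hW₂ : Link G x₁ W₂ x₃) :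
    W₁.length + W₂.length < gap l x₀ x₁ + gap l x₂ x₃ := by
  obtain ⟨P, R, hl⟩ := List.append_of_mem hx₀
  obtain ⟨g₁, T, rfl, hg₁⟩ := exists_eq_append_cons_of_idxOf_lt h.nodup hl hx₁ h₀₁
  rw [← List.cons_append, ← List.append_assoc] at hl
  obtain ⟨S₁, T, rfl, -⟩ := exists_eq_append_cons_of_idxOf_lt h.nodup hl hx₂ h₁₂
  rw [← List.cons_append, ← List.append_assoc] at hl
  obtain ⟨g₂, T, rfl, hg₂⟩ := exists_eq_append_cons_of_idxOf_lt h.nodup hl hx₃ h₂₃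
  have hrot : l ~r x₀ :: (g₁ ++ x₁ :: (S₁ ++ x₂ :: (g₂ ++ x₃ :: (T ++ P)))) := by
    rw [hl]
    simpa using
      List.isRotated_append (l := P) (l' := x₀ :: (g₁ ++ x₁ :: (S₁ ++ x₂ :: (g₂ ++ x₃ :: T))))
  have := h.length_le_of_reconnect_two hrot hnodup hW₁ hW₂
  omega

theorem IsLongestCycleList.length_add_length_add_length_lt {x₀ x₁ x₂ x₃ x₄ x₅ : V}
    {l W₁ W₂ W₃ : List V} (h : IsLongestCycleList G l) (hx₀ : x₀ ∈ l) (hx₁ : x₁ ∈ l) (hx₂ : x₂ ∈ l)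
    (hx₃ : x₃ ∈ l) (hx₄ : x₄ ∈ l) (hx₅ : x₅ ∈ l) (h₀₁ : l.idxOf x₀ < l.idxOf x₁)
    (h₁₂ : l.idxOf x₁ < l.idxOf x₂) (h₂₃ : l.idxOf x₂ < l.idxOf x₃)
    (h₃₄ : l.idxOf x₃ < l.idxOf x₄) (h₄₅ : l.idxOf x₄ < l.idxOf x₅)
    (hnodup : (W₁ ++ W₂ ++ W₃ ++ l).Nodup) (hW₁ : Link G x₀ W₁ x₂) (hW₂ : Link G x₃ W₂ x₅)
    (hW₃ : Link G x₁ W₃ x₄) :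
    W₁.length + W₂.length + W₃.length < gap l x₀ x₁ + gap l x₂ x₃ + gap l x₄ x₅ := by
  obtain ⟨P, R, hl⟩ := List.append_of_mem hx₀
  obtain ⟨g₁, T, rfl, hg₁⟩ := exists_eq_append_cons_of_idxOf_lt h.nodup hl hx₁ h₀₁
  rw [← List.cons_append, ← List.append_assoc] at hl
  obtain ⟨S₁, T, rfl, -⟩ := exists_eq_append_cons_of_idxOf_lt h.nodup hl hx₂ h₁₂
  rw [← List.cons_append, ← List.append_assoc] at hl
  obtain ⟨g₂, T, rfl, hg₂⟩ := exists_eq_append_cons_of_idxOf_lt h.nodup hl hx₃ h₂₃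
  rw [← List.cons_append, ← List.append_assoc] at hl
  obtain ⟨S₂, T, rfl, -⟩ := exists_eq_append_cons_of_idxOf_lt h.nodup hl hx₄ h₃₄
  rw [← List.cons_append, ← List.append_assoc] at hl
  obtain ⟨g₃, T, rfl, hg₃⟩ := exists_eq_append_cons_of_idxOf_lt h.nodup hl hx₅ h₄₅
  have hrot : l ~r x₀ :: (g₁ ++ x₁ :: (S₁ ++ x₂ :: (g₂ ++ x₃ ::
      (S₂ ++ x₄ :: (g₃ ++ x₅ :: (T ++ P)))))) := by
    rw [hl]
    simpa using List.isRotated_append (l := P)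
      (l' := x₀ :: (g₁ ++ x₁ :: (S₁ ++ x₂ :: (g₂ ++ x₃ :: (S₂ ++ x₄ :: (g₃ ++ x₅ :: T))))))
  have := h.length_le_of_reconnect_three hrot hnodup hW₁ hW₂ hW₃
  omega

theorem exists_isRotated_idxOf_eq {l : List V} {x : V} (hl : l.Nodup) (hx : x ∈ l) :
    ∃ l', l ~r l' ∧ ∀ y ∈ l, l'.idxOf y =
      if l.idxOf y < l.idxOf x then l.idxOf y + (l.length - l.idxOf x)
      else l.idxOf y - l.idxOf x := by
  obtain ⟨P, R, rfl⟩ := List.append_of_mem hx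
  have hidx : (P ++ x :: R).idxOf x = P.length := idxOf_append_cons hl rfl
  refine ⟨x :: R ++ P, List.isRotated_append, fun y hy => ?_⟩
  rw [hidx]
  by_cases hyP : y ∈ P
  · have hyR : y ∉ x :: R := List.disjoint_of_nodup_append hl hyP
    have hlt := List.idxOf_lt_length_of_mem hyP
    rw [List.idxOf_append_of_mem hyP, List.idxOf_append_of_notMem hyR, if_pos hlt]
    simp only [List.length_append]
    omega
  · have hyR : y ∈ x :: R := (List.mem_append.1 hy).resolve_left hyP
    rw [List.idxOf_append_of_notMem hyP, List.idxOf_append_of_mem hyR, if_neg (by omega)]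
    omega

theorem IsLongestCycleList.length_add_length_add_length_lt_of_cyclic {a a' b b' c c' : V}
    {l W₁ W₂ W₃ : List V} (h : IsLongestCycleList G l) (ha : a ∈ l) (ha' : a' ∈ l) (hb : b ∈ l)
    (hb' : b' ∈ l) (hc : c ∈ l) (hc' : c' ∈ l) (haa' : l.idxOf a < l.idxOf a')
    (hbb' : l.idxOf b < l.idxOf b') (hcc' : l.idxOf c < l.idxOf c')
    (hcyclic : (l.idxOf a' < l.idxOf b ∧ l.idxOf b' < l.idxOf c) ∨
      (l.idxOf b' < l.idxOf c ∧ l.idxOf c' < l.idxOf a) ∨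
      (l.idxOf c' < l.idxOf a ∧ l.idxOf a' < l.idxOf b))
    (hnodup : (W₁ ++ W₂ ++ W₃ ++ l).Nodup) (hW₁ : Link G a W₁ b) (hW₂ : Link G b' W₂ c')
    (hW₃ : Link G a' W₃ c) :
    W₁.length + W₂.length + W₃.length < gap l a a' + gap l b b' + gap l c c' := by
  obtain ⟨l', hrot, hidx⟩ := exists_isRotated_idxOf_eq h.nodup ha
  have hb'_lt := List.idxOf_lt_length_of_mem hb'
  have ea := hidx a ha
  have ea' := hidx a' ha'
  have eb := hidx b hb
  have eb' := hidx b' hb'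
  have ec := hidx c hc
  have ec' := hidx c' hc'
  have hmem : ∀ y ∈ l, y ∈ l' := fun y => hrot.mem_iff.1
  have hlt := (h.isRotated hrot).length_add_length_add_length_lt (hmem a ha) (hmem a' ha')
    (hmem b hb) (hmem b' hb') (hmem c hc) (hmem c' hc') (by grind) (by grind) (by grind) (by grind)
    (by grind) ((hrot.perm.append_left _).nodup_iff.1 hnodup) hW₁ hW₂ hW₃
  rw [gap_eq_sub (l := l) haa', gap_eq_sub (l := l) hbb', gap_eq_sub (l := l) hcc']
  rw [gap_eq_sub (l := l') (by grind), gap_eq_sub (l := l') (by grind),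
    gap_eq_sub (l := l') (by grind)] at hlt
  grind

/-- The vertices of `l'` cut the list `l` into segments; `segIndex l l' v` is the number of the
segment containing `v`. On a cycle the first and the last segment are really the same one, but here
they count as different, so that segments are intervals of positions. -/
def segIndex (l l' : List V) (v : V) : ℕ := (l.take (l.idxOf v)).countP (· ∈ l')

theorem segIndex_mono {l l' : List V} {v w : V} (h : l.idxOf v ≤ l.idxOf w) :
    segIndex l l' v ≤ segIndex l l' w :=
  (List.take_prefix_take_left h).sublist.countP_le

theorem idxOf_lt_of_segIndex_lt {l l' : List V} {v w : V}
    (h : segIndex l l' v < segIndex l l' w) : l.idxOf v < l.idxOf w := by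
  by_contra! hle
  exact h.not_ge (segIndex_mono hle)

theorem segIndex_lt_of_mem {l l' : List V} {v w : V} (hl : v ∈ l) (hl' : v ∈ l')
    (h : l.idxOf v < l.idxOf w) : segIndex l l' v < segIndex l l' w := by
  have hle := (List.take_prefix_take_left (l := l) (Nat.succ_le_of_lt h)).sublist.countP_le
    (p := (· ∈ l'))
  rw [Nat.succ_eq_add_one, List.take_succ_eq_append_getElem (List.idxOf_lt_length_of_mem hl)] at hle
  simp only [List.countP_append, List.getElem_idxOf, List.countP_singleton, hl', decide_true,
    if_true] at hle
  exact hle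

theorem segIndex_le_card {l : List V} (hl : l.Nodup) (l' : List V) (v : V) :
    segIndex l l' v ≤ (l.toFinset ∩ l'.toFinset).card := by
  calc segIndex l l' v ≤ l.countP (· ∈ l') := (List.take_sublist _ _).countP_le
    _ = (l.filter (· ∈ l')).length := List.countP_eq_length_filter
    _ = (l.filter (· ∈ l')).toFinset.card := (List.toFinset_card_of_nodup (hl.filter _)).symm
    _ = (l.toFinset ∩ l'.toFinset).card := by congr 1; ext; simp

end Positions

end Lists

/-- Three segments with these numbers follow each other in this cyclic order. -/
def CyclicOrder (x y z : ℕ) : Prop := x < y ∧ y < z ∨ y < z ∧ z < x ∨ z < x ∧ x < y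

/-- The number `y` lies strictly between `x` and `z`. -/
def Between (x y z : ℕ) : Prop := x < y ∧ y < z ∨ z < y ∧ y < x

instance (x y z : ℕ) : Decidable (Between x y z) := inferInstanceAs (Decidable (_ ∨ _))

theorem cyclicOrder_or_swap {x y z : ℕ} (hxy : x ≠ y) (hxz : x ≠ z) (hyz : y ≠ z) :
    CyclicOrder x y z ∨ CyclicOrder x z y := by
  unfold CyclicOrder
  omega

theorem cyclicOrder_iff_of_between_iff {x x' y z : ℕ} (hxy : x ≠ y) (hxz : x ≠ z) (hxy' : x' ≠ y)
    (hxz' : x' ≠ z) (h : Between x y x' ↔ Between x z x') :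
    CyclicOrder x y z ↔ CyclicOrder x' y z := by
  unfold Between at h
  unfold CyclicOrder
  omega

/-! ### Linked cycles -/

/-- Two longest cycles of `G`, given as lists of vertices, and a family of disjoint paths indexed by
`ι` joining them. The `i`-th path runs from the vertex `foot₁ i` of the first cycle through the
interior `mid i`, which avoids both cycles, to the vertex `foot₂ i` of the second one. -/
structure LinkedCycles {V : Type*} (G : SimpleGraph V) (ι : Type*) where
  cycle₁ : List V
  cycle₂ : List V
  isLongest₁ : IsLongestCycleList G cycle₁
  isLongest₂ : IsLongestCycleList G cycle₂
  foot₁ : ι → V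
  mid : ι → List V
  foot₂ : ι → V
  link : ∀ i, Link G (foot₁ i) (mid i) (foot₂ i)
  nodup_mid : ∀ i, (mid i).Nodup
  foot₁_mem : ∀ i, foot₁ i ∈ cycle₁
  foot₁_notMem : ∀ i, foot₁ i ∉ cycle₂
  foot₂_mem : ∀ i, foot₂ i ∈ cycle₂
  foot₂_notMem : ∀ i, foot₂ i ∉ cycle₁
  mid_disjoint₁ : ∀ i, (mid i).Disjoint cycle₁
  mid_disjoint₂ : ∀ i, (mid i).Disjoint cycle₂
  foot₁_injective : Function.Injective foot₁
  foot₂_injective : Function.Injective foot₂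
  eq_of_mem_mid : ∀ {i j v}, v ∈ mid i → v ∈ mid j → i = j

namespace LinkedCycles

variable {V : Type*} {G : SimpleGraph V} {ι : Type*}

/-- The same configuration with the roles of the two cycles exchanged. -/
def swap (S : LinkedCycles G ι) : LinkedCycles G ι where
  cycle₁ := S.cycle₂
  cycle₂ := S.cycle₁
  isLongest₁ := S.isLongest₂
  isLongest₂ := S.isLongest₁
  foot₁ := S.foot₂
  mid i := (S.mid i).reverse
  foot₂ := S.foot₁
  link i := (S.link i).reverse
  nodup_mid i := List.nodup_reverse.2 (S.nodup_mid i)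
  foot₁_mem := S.foot₂_mem
  foot₁_notMem := S.foot₂_notMem
  foot₂_mem := S.foot₁_mem
  foot₂_notMem := S.foot₁_notMem
  mid_disjoint₁ i := List.disjoint_reverse_left.2 (S.mid_disjoint₂ i)
  mid_disjoint₂ i := List.disjoint_reverse_left.2 (S.mid_disjoint₁ i)
  foot₁_injective := S.foot₂_injective
  foot₂_injective := S.foot₁_injective
  eq_of_mem_mid hi hj := S.eq_of_mem_mid (List.mem_reverse.1 hi) (List.mem_reverse.1 hj)

variable (S : LinkedCycles G ι)

theorem swap_swap : S.swap.swap = S := by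
  cases S
  simp [swap]

variable [DecidableEq V]

/-- The position on the first cycle of the foot of a path. -/
def pos₁ (i : ι) : ℕ := S.cycle₁.idxOf (S.foot₁ i)

/-- The position on the second cycle of the foot of a path. -/
def pos₂ (i : ι) : ℕ := S.cycle₂.idxOf (S.foot₂ i)

/-- The segment of the first cycle containing the foot of a path. -/
def seg₁ (i : ι) : ℕ := segIndex S.cycle₁ S.cycle₂ (S.foot₁ i)

/-- The segment of the second cycle containing the foot of a path. -/
def seg₂ (i : ι) : ℕ := segIndex S.cycle₂ S.cycle₁ (S.foot₂ i)

/-- The distance along the first cycle between the feet of two paths. -/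
def dist₁ (i j : ι) : ℕ := gap S.cycle₁ (S.foot₁ i) (S.foot₁ j)

/-- The distance along the second cycle between the feet of two paths. -/
def dist₂ (i j : ι) : ℕ := gap S.cycle₂ (S.foot₂ i) (S.foot₂ j)

theorem dist₁_comm (i j : ι) : S.dist₁ i j = S.dist₁ j i := gap_comm _ _ _

theorem dist₂_comm (i j : ι) : S.dist₂ i j = S.dist₂ j i := gap_comm _ _ _

theorem pos₁_injective : Function.Injective S.pos₁ := fun i _ h =>
  S.foot₁_injective ((List.idxOf_inj (S.foot₁_mem i)).1 h)

theorem pos₁_lt_of_seg₁_lt {S : LinkedCycles G ι} {i j : ι} (h : S.seg₁ i < S.seg₁ j) :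
    S.pos₁ i < S.pos₁ j :=
  idxOf_lt_of_segIndex_lt h

/-- The vertices off the first cycle that can be reached through the segment of the second cycle
numbered `s`: the vertices of that segment and of the paths ending in it. Detours of the first cycle
through different segments are disjoint because their territories are. -/
def territory (s : ℕ) : Set V :=
  {v | v ∉ S.cycle₁ ∧
    ((v ∈ S.cycle₂ ∧ segIndex S.cycle₂ S.cycle₁ v = s) ∨ ∃ i, S.seg₂ i = s ∧ v ∈ S.mid i)}

theorem territory_disjoint {s t : ℕ} (hst : s ≠ t) :
    Disjoint (S.territory s) (S.territory t) := by
  rw [Set.disjoint_left]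
  rintro v ⟨-, ⟨hv, rfl⟩ | ⟨i, rfl, hi⟩⟩ ⟨-, ⟨hv', rfl⟩ | ⟨j, rfl, hj⟩⟩
  · exact hst rfl
  · exact S.mid_disjoint₂ j hj hv
  · exact S.mid_disjoint₂ i hi hv'
  · exact hst (by rw [S.eq_of_mem_mid hi hj])

/-- `S.IsDetour i j W`: between the feet of the paths `i` and `j`, the first cycle can be left to
follow `W`, which uses one segment of the second cycle only. -/
structure IsDetour (i j : ι) (W : List V) : Prop where
  link : Link G (S.foot₁ i) W (S.foot₁ j)
  nodup : W.Nodup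
  mem_territory : ∀ v ∈ W, v ∈ S.territory (S.seg₂ i)

variable {S} in
theorem IsDetour.reverse {i j : ι} {W : List V} (h : S.IsDetour i j W)
    (hij : S.seg₂ i = S.seg₂ j) : S.IsDetour j i W.reverse where
  link := h.link.reverse
  nodup := List.nodup_reverse.2 h.nodup
  mem_territory v hv := hij ▸ h.mem_territory v (List.mem_reverse.1 hv)

variable {S}

theorem mem_territory_of_mem_arc {P g T : List V} {i j : ι} {v : V} (hij : S.seg₂ i = S.seg₂ j)
    (hcycle : S.cycle₂ = P ++ S.foot₂ i :: (g ++ S.foot₂ j :: T)) (hv : v ∈ g) :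
    v ∈ S.territory (S.seg₂ i) := by
  obtain ⟨g₁, g₂, rfl⟩ := List.append_of_mem hv
  have hv₂ : v ∈ S.cycle₂ := by simp [hcycle]
  have hi := idxOf_append_cons S.isLongest₂.nodup hcycle
  have hv' := idxOf_append_cons (P := P ++ S.foot₂ i :: g₁) (x := v) S.isLongest₂.nodup
    (by simpa using hcycle)
  have hj := idxOf_append_cons (P := P ++ S.foot₂ i :: (g₁ ++ v :: g₂)) (R := T)
    S.isLongest₂.nodup (by simpa using hcycle)
  simp only [List.length_append, List.length_cons] at hv' hj
  have hle := segIndex_mono (l' := S.cycle₁)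
    (show S.cycle₂.idxOf (S.foot₂ i) ≤ S.cycle₂.idxOf v by omega)
  have hge := segIndex_mono (l' := S.cycle₁)
    (show S.cycle₂.idxOf v ≤ S.cycle₂.idxOf (S.foot₂ j) by omega)
  refine ⟨fun hv₁ => ?_, Or.inl ⟨hv₂, le_antisymm (hij ▸ hge) hle⟩⟩
  have hlt := segIndex_lt_of_mem hv₂ hv₁
    (show S.cycle₂.idxOf v < S.cycle₂.idxOf (S.foot₂ j) by omega)
  exact (hle.trans_lt hlt).ne hij

theorem foot₂_mem_territory (S : LinkedCycles G ι) (i : ι) : S.foot₂ i ∈ S.territory (S.seg₂ i) :=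
  ⟨S.foot₂_notMem i, Or.inl ⟨S.foot₂_mem i, rfl⟩⟩

theorem mem_territory_of_mem_mid {i : ι} {v : V} (hv : v ∈ S.mid i) :
    v ∈ S.territory (S.seg₂ i) :=
  ⟨S.mid_disjoint₁ i hv, Or.inr ⟨i, rfl, hv⟩⟩

theorem exists_isDetour_of_pos₂_lt {i j : ι} (hij : S.seg₂ i = S.seg₂ j)
    (hlt : S.pos₂ i < S.pos₂ j) : ∃ W, S.IsDetour i j W ∧ S.dist₂ i j < W.length := by
  obtain ⟨P, R, hP⟩ := List.append_of_mem (S.foot₂_mem i)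
  obtain ⟨g, T, rfl, hg⟩ :=
    exists_eq_append_cons_of_idxOf_lt S.isLongest₂.nodup hP (S.foot₂_mem j) hlt
  have harc : S.foot₂ i :: (g ++ [S.foot₂ j]) <:+: S.cycle₂ := ⟨P, T, by simp [hP]⟩
  refine ⟨S.mid i ++ (S.foot₂ i :: (g ++ [S.foot₂ j]) ++ (S.mid j).reverse), ⟨?_, ?_, ?_⟩, ?_⟩
  · have hlink := link_append_cons.2
      ⟨S.link i, link_append_cons.2 ⟨S.isLongest₂.isChain.infix harc, (S.link j).reverse⟩⟩
    simpa using hlink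
  · have hmid : (S.mid j).reverse.Disjoint S.cycle₂ :=
      List.disjoint_reverse_left.2 (S.mid_disjoint₂ j)
    refine (S.nodup_mid i).append ((S.isLongest₂.nodup.sublist harc.sublist).append
      (List.nodup_reverse.2 (S.nodup_mid j))
      (List.disjoint_of_subset_left harc.subset hmid.symm)) (List.disjoint_append_right.2 ⟨?_, ?_⟩)
    · exact List.disjoint_of_subset_right harc.subset (S.mid_disjoint₂ i)
    · intro v hvi hvj
      exact hlt.ne (by rw [S.eq_of_mem_mid hvi (List.mem_reverse.1 hvj)])
  · simp only [List.cons_append, List.append_assoc, List.mem_append, List.mem_cons,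
      List.mem_reverse, List.not_mem_nil, false_or]
    rintro v (hv | rfl | hv | rfl | hv)
    · exact mem_territory_of_mem_mid hv
    · exact S.foot₂_mem_territory i
    · exact mem_territory_of_mem_arc hij hP hv
    · exact hij ▸ S.foot₂_mem_territory j
    · exact hij ▸ mem_territory_of_mem_mid hv
  · simp only [List.length_append, List.length_cons, List.length_reverse]
    rw [dist₂, hg]
    omega

theorem exists_isDetour {i j : ι} (hne : i ≠ j) (hij : S.seg₂ i = S.seg₂ j) :
    ∃ W, S.IsDetour i j W ∧ S.dist₂ i j < W.length := by
  rcases Nat.lt_or_gt_of_ne (S.swap.pos₁_injective.ne hne) with hlt | hlt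
  · exact exists_isDetour_of_pos₂_lt hij hlt
  · obtain ⟨W, hW, hlength⟩ := exists_isDetour_of_pos₂_lt hij.symm hlt
    exact ⟨W.reverse, hW.reverse hij.symm, by rwa [List.length_reverse, S.dist₂_comm]⟩

theorem IsDetour.disjoint_cycle₁ {i j : ι} {W : List V} (h : S.IsDetour i j W) :
    W.Disjoint S.cycle₁ := fun _ hv => (h.mem_territory _ hv).1

theorem IsDetour.disjoint {i j i' j' : ι} {W W' : List V} (h : S.IsDetour i j W)
    (h' : S.IsDetour i' j' W') (hne : S.seg₂ i ≠ S.seg₂ i') : W.Disjoint W' := fun _ hv hv' =>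
  Set.disjoint_left.1 (S.territory_disjoint hne) (h.mem_territory _ hv) (h'.mem_territory _ hv')

theorem dist₂_lt_dist₁ {i j : ι} (hne : i ≠ j) (hij : S.seg₂ i = S.seg₂ j) :
    S.dist₂ i j < S.dist₁ i j := by
  obtain ⟨W, hW, hlength⟩ := exists_isDetour hne hij
  exact hlength.trans (S.isLongest₁.length_lt_gap (S.foot₁_mem i) (S.foot₁_mem j)
    (S.foot₁_injective.ne hne) (hW.nodup.append S.isLongest₁.nodup hW.disjoint_cycle₁) hW.link)

theorem eq_of_seg_eq {i j : ι} (h₁ : S.seg₁ i = S.seg₁ j) (h₂ : S.seg₂ i = S.seg₂ j) : i = j := by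
  by_contra hne
  exact (dist₂_lt_dist₁ hne h₂).asymm (dist₂_lt_dist₁ (S := S.swap) hne h₁)

theorem dist₂_add_dist₂_lt {i₀ i₁ i₂ i₃ : ι} (h₀₁ : S.pos₁ i₀ < S.pos₁ i₁)
    (h₁₂ : S.pos₁ i₁ < S.pos₁ i₂) (h₂₃ : S.pos₁ i₂ < S.pos₁ i₃) (h₀₂ : S.seg₂ i₀ = S.seg₂ i₂)
    (h₁₃ : S.seg₂ i₁ = S.seg₂ i₃) (hne : S.seg₂ i₀ ≠ S.seg₂ i₁) :
    S.dist₂ i₀ i₂ + S.dist₂ i₁ i₃ < S.dist₁ i₀ i₁ + S.dist₁ i₂ i₃ := by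
  obtain ⟨W₁, hW₁, hlength₁⟩ := exists_isDetour (by rintro rfl; omega) h₀₂
  obtain ⟨W₂, hW₂, hlength₂⟩ := exists_isDetour (by rintro rfl; omega) h₁₃
  have hnodup : (W₁ ++ W₂ ++ S.cycle₁).Nodup :=
    (hW₁.nodup.append hW₂.nodup (hW₁.disjoint hW₂ hne)).append S.isLongest₁.nodup
      (List.disjoint_append_left.2 ⟨hW₁.disjoint_cycle₁, hW₂.disjoint_cycle₁⟩)
  have hlt := S.isLongest₁.length_add_length_lt (S.foot₁_mem i₀) (S.foot₁_mem i₁) (S.foot₁_mem i₂)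
    (S.foot₁_mem i₃) h₀₁ h₁₂ h₂₃ hnodup hW₁.link hW₂.link
  simp only [dist₁]
  omega

theorem dist₂_add_dist₂_add_dist₂_lt {a a' b b' c c' : ι} (ha : S.pos₁ a < S.pos₁ a')
    (hb : S.pos₁ b < S.pos₁ b') (hc : S.pos₁ c < S.pos₁ c') (ha₁ : S.seg₁ a = S.seg₁ a')
    (hb₁ : S.seg₁ b = S.seg₁ b') (hc₁ : S.seg₁ c = S.seg₁ c')
    (hcyclic : CyclicOrder (S.seg₁ a) (S.seg₁ b) (S.seg₁ c)) (hab : S.seg₂ a = S.seg₂ b)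
    (hbc : S.seg₂ b' = S.seg₂ c') (hac : S.seg₂ a' = S.seg₂ c) (hab' : S.seg₂ a ≠ S.seg₂ b')
    (haa' : S.seg₂ a ≠ S.seg₂ a') (hba' : S.seg₂ b' ≠ S.seg₂ a') :
    S.dist₂ a b + S.dist₂ b' c' + S.dist₂ a' c <
      S.dist₁ a a' + S.dist₁ b b' + S.dist₁ c c' := by
  have hpos : ∀ i j, S.seg₁ i < S.seg₁ j → S.pos₁ i < S.pos₁ j := fun _ _ => pos₁_lt_of_seg₁_lt
  rw [CyclicOrder] at hcyclic
  obtain ⟨W₁, hW₁, hlength₁⟩ := exists_isDetour (by rintro rfl; omega) hab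
  obtain ⟨W₂, hW₂, hlength₂⟩ := exists_isDetour (by rintro rfl; omega) hbc
  obtain ⟨W₃, hW₃, hlength₃⟩ := exists_isDetour (by rintro rfl; omega) hac
  have hnodup : (W₁ ++ W₂ ++ W₃ ++ S.cycle₁).Nodup := by
    simp only [List.nodup_append', List.disjoint_append_left]
    exact ⟨⟨⟨hW₁.nodup, hW₂.nodup, hW₁.disjoint hW₂ hab'⟩, hW₃.nodup, hW₁.disjoint hW₃ haa',
      hW₂.disjoint hW₃ hba'⟩, S.isLongest₁.nodup, ⟨hW₁.disjoint_cycle₁, hW₂.disjoint_cycle₁⟩,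
      hW₃.disjoint_cycle₁⟩
  have horder : S.pos₁ a' < S.pos₁ b ∧ S.pos₁ b' < S.pos₁ c ∨
      S.pos₁ b' < S.pos₁ c ∧ S.pos₁ c' < S.pos₁ a ∨
      S.pos₁ c' < S.pos₁ a ∧ S.pos₁ a' < S.pos₁ b :=
    hcyclic.imp (fun h => ⟨hpos _ _ (by omega), hpos _ _ (by omega)⟩)
      (Or.imp (fun h => ⟨hpos _ _ (by omega), hpos _ _ (by omega)⟩)
        fun h => ⟨hpos _ _ (by omega), hpos _ _ (by omega)⟩)
  have hlt := S.isLongest₁.length_add_length_add_length_lt_of_cyclic (S.foot₁_mem a)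
    (S.foot₁_mem a') (S.foot₁_mem b) (S.foot₁_mem b') (S.foot₁_mem c) (S.foot₁_mem c') ha hb hc
    horder hnodup hW₁.link hW₂.link hW₃.link
  simp only [dist₁]
  omega

theorem dist₂_add_dist₂_lt_of_seg₁_eq {i i' j j' : ι} (hi : S.seg₁ i = S.seg₁ i')
    (hj : S.seg₁ j = S.seg₁ j') (hne₁ : S.seg₁ i ≠ S.seg₁ j) (hij : S.seg₂ i = S.seg₂ j)
    (hij' : S.seg₂ i' = S.seg₂ j') (hne₂ : S.seg₂ i ≠ S.seg₂ i') (hi_lt : S.pos₁ i < S.pos₁ i')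
    (hj_lt : S.pos₁ j < S.pos₁ j') :
    S.dist₂ i j + S.dist₂ i' j' < S.dist₁ i i' + S.dist₁ j j' := by
  rcases lt_or_gt_of_ne hne₁ with h | h
  · exact dist₂_add_dist₂_lt hi_lt (pos₁_lt_of_seg₁_lt (hi ▸ h)) hj_lt hij hij' hne₂
  · have := dist₂_add_dist₂_lt hj_lt (pos₁_lt_of_seg₁_lt (hj ▸ h)) hi_lt hij.symm hij'.symm
      (hij ▸ hij' ▸ hne₂)
    rw [S.dist₂_comm j i, S.dist₂_comm j' i'] at this
    omega

/- Otherwise exchanging the two pairs of arcs would lengthen one of the two cycles. -/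
theorem pos₁_lt_iff_of_pos₂_lt {i i' j j' : ι} (hi : S.seg₁ i = S.seg₁ i')
    (hj : S.seg₁ j = S.seg₁ j') (hij : S.seg₂ i = S.seg₂ j) (hij' : S.seg₂ i' = S.seg₂ j')
    (hne : S.seg₂ i ≠ S.seg₂ i') (hij_lt : S.pos₂ i < S.pos₂ j)
    (hij'_lt : S.pos₂ i' < S.pos₂ j') : S.pos₁ i < S.pos₁ i' ↔ S.pos₁ j' < S.pos₁ j := by
  have hne₁ : S.seg₁ i ≠ S.seg₁ j := fun h => hij_lt.ne (by rw [eq_of_seg_eq h hij])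
  have hfalse : ∀ {i i' j j' : ι}, S.seg₁ i = S.seg₁ i' → S.seg₁ j = S.seg₁ j' →
      S.seg₂ i = S.seg₂ j → S.seg₂ i' = S.seg₂ j' → S.seg₂ i ≠ S.seg₂ i' → S.seg₁ i ≠ S.seg₁ j →
      S.pos₂ i < S.pos₂ j → S.pos₂ i' < S.pos₂ j' →
      ¬ (S.pos₁ i < S.pos₁ i' ∧ S.pos₁ j < S.pos₁ j') :=
      fun hi hj hij hij' hne hne₁ hij_lt hij'_lt ⟨hi_lt, hj_lt⟩ =>
    (dist₂_add_dist₂_lt_of_seg₁_eq hi hj hne₁ hij hij' hne hi_lt hj_lt).asymm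
      (dist₂_add_dist₂_lt_of_seg₁_eq (S := S.swap) hij hij' hne hi hj hne₁ hij_lt hij'_lt)
  have hi_ne : S.pos₁ i ≠ S.pos₁ i' := fun h => hne (by rw [S.pos₁_injective h])
  have hj_ne : S.pos₁ j ≠ S.pos₁ j' := fun h => hne (by rw [hij, hij', S.pos₁_injective h])
  have h := hfalse hi hj hij hij' hne hne₁ hij_lt hij'_lt
  have h' := hfalse hi.symm hj.symm hij' hij hne.symm (hi ▸ hj ▸ hne₁) hij'_lt hij_lt
  omega

/-- The two paths `q` and `q'` end in one segment of the first cycle. On the second cycle they end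
in the segments of `p` and `p'` respectively, both before or both after them. The condition `turn`
relates the order in which `q` and `q'` reach the first cycle to that of the segments there. Two
arms, one for each cycle, form a hexagon of six paths. -/
structure Arm (S : LinkedCycles G ι) (p p' q q' : ι) : Prop where
  seg₁_eq : S.seg₁ q = S.seg₁ q'
  seg₂_left : S.seg₂ q = S.seg₂ p
  seg₂_right : S.seg₂ q' = S.seg₂ p'
  side : S.pos₂ q < S.pos₂ p ∧ S.pos₂ q' < S.pos₂ p' ∨ S.pos₂ p < S.pos₂ q ∧ S.pos₂ p' < S.pos₂ q'
  turn : S.pos₁ q < S.pos₁ q' ∧ CyclicOrder (S.seg₁ q) (S.seg₁ p) (S.seg₁ p') ∨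
    S.pos₁ q' < S.pos₁ q ∧ CyclicOrder (S.seg₁ q) (S.seg₁ p') (S.seg₁ p)

theorem Arm.symm {p p' q q' : ι} (h : S.Arm p p' q q') : S.Arm p' p q' q where
  seg₁_eq := h.seg₁_eq.symm
  seg₂_left := h.seg₂_right
  seg₂_right := h.seg₂_left
  side := h.side.imp And.symm And.symm
  turn := h.seg₁_eq ▸ h.turn.symm

theorem Arm.dist₂_lt_dist₁_of_lt {p p' q q' r r' : ι} (hq : S.Arm p p' q q')
    (hr : S.swap.Arm p p' r r') (hlt : S.pos₁ q < S.pos₁ q') :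
    S.dist₂ q p + S.dist₂ q' p' + S.dist₂ r r' <
      S.dist₁ r p + S.dist₁ r' p' + S.dist₁ q q' := by
  obtain ⟨hq₁, hq₂, hq₂', -, hturn⟩ := hq
  obtain ⟨hr₂, hr₁, hr₁', hside, hturn'⟩ := hr
  change S.seg₂ r = S.seg₂ r' at hr₂
  change S.seg₁ r = S.seg₁ p at hr₁
  change S.seg₁ r' = S.seg₁ p' at hr₁'
  change S.pos₁ r < S.pos₁ p ∧ S.pos₁ r' < S.pos₁ p' ∨
    S.pos₁ p < S.pos₁ r ∧ S.pos₁ p' < S.pos₁ r' at hside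
  change _ ∧ CyclicOrder (S.seg₂ r) (S.seg₂ p) (S.seg₂ p') ∨
    _ ∧ CyclicOrder (S.seg₂ r) (S.seg₂ p') (S.seg₂ p) at hturn'
  simp only [CyclicOrder] at hturn hturn'
  obtain ⟨hrp, hrp'⟩ | ⟨hrp, hrp'⟩ := hside
  · have := dist₂_add_dist₂_add_dist₂_lt hrp hrp' hlt hr₁ hr₁' hq₁
      (by simp only [CyclicOrder]; omega) hr₂ hq₂'.symm hq₂.symm (by omega) (by omega) (by omega)
    rw [S.dist₂_comm p q, S.dist₂_comm p' q'] at this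
    omega
  · have := dist₂_add_dist₂_add_dist₂_lt hlt hrp hrp' hq₁ hr₁.symm hr₁'.symm
      (by simp only [CyclicOrder]; omega) hq₂ hr₂ hq₂' (by omega) (by omega) (by omega)
    rw [S.dist₁_comm p r, S.dist₁_comm p' r'] at this
    omega

theorem Arm.dist₂_lt_dist₁ {p p' q q' r r' : ι} (hq : S.Arm p p' q q')
    (hr : S.swap.Arm p p' r r') :
    S.dist₂ q p + S.dist₂ q' p' + S.dist₂ r r' <
      S.dist₁ r p + S.dist₁ r' p' + S.dist₁ q q' := by
  rcases hq.turn with ⟨hlt, -⟩ | ⟨hlt, -⟩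
  · exact hq.dist₂_lt_dist₁_of_lt hr hlt
  · have := hq.symm.dist₂_lt_dist₁_of_lt hr.symm hlt
    rw [S.dist₂_comm r' r, S.dist₁_comm q' q] at this
    omega

theorem Arm.false {p p' q q' r r' : ι} (hq : S.Arm p p' q q') (hr : S.swap.Arm p p' r r') :
    False :=
  (hq.dist₂_lt_dist₁ hr).asymm (hr.dist₂_lt_dist₁ (S := S.swap) (S.swap_swap.symm ▸ hq))

/-- The feet of `q₀`, `p` and `q₁` on the second cycle lie in the same segment, in this order. -/
structure Flanked (S : LinkedCycles G ι) (q₀ p q₁ : ι) : Prop where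
  seg₂_left : S.seg₂ q₀ = S.seg₂ p
  seg₂_right : S.seg₂ q₁ = S.seg₂ p
  pos₂_left : S.pos₂ q₀ < S.pos₂ p
  pos₂_right : S.pos₂ p < S.pos₂ q₁

theorem Flanked.eq_of_seg₁_eq {p p' q₀ q₀' q₁ q₁' : ι} (h : S.Flanked q₀ p q₁)
    (h' : S.Flanked q₀' p' q₁') (hq₀ : S.seg₁ q₀ = S.seg₁ q₀') (hq₁ : S.seg₁ q₁ = S.seg₁ q₁')
    (hp : S.seg₁ p = S.seg₁ p') : p = p' := by
  obtain ⟨hl, hr, hlt, hgt⟩ := h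
  obtain ⟨hl', hr', hlt', hgt'⟩ := h'
  by_contra hne
  have hne₂ : S.seg₂ p ≠ S.seg₂ p' := fun h₂ => hne (eq_of_seg_eq hp h₂)
  have h₀ := pos₁_lt_iff_of_pos₂_lt hq₀ hp hl hl' (hl ▸ hl' ▸ hne₂) hlt hlt'
  have h₁ := pos₁_lt_iff_of_pos₂_lt hp hq₁ hr.symm hr'.symm hne₂ hgt hgt'
  have h₂ := pos₁_lt_iff_of_pos₂_lt hq₀ hq₁ (hl.trans hr.symm) (hl'.trans hr'.symm)
    (hl ▸ hl' ▸ hne₂) (hlt.trans hgt) (hlt'.trans hgt')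
  have := S.pos₁_injective.ne hne
  omega

theorem Flanked.exists_arm {p p' q₀ q₀' q₁ q₁' : ι} (h : S.Flanked q₀ p q₁)
    (h' : S.Flanked q₀' p' q₁') (hq₀ : S.seg₁ q₀ = S.seg₁ q₀') (hq₁ : S.seg₁ q₁ = S.seg₁ q₁')
    (hbetween : Between (S.seg₁ q₀) (S.seg₁ p) (S.seg₁ q₁) ↔
      Between (S.seg₁ q₀') (S.seg₁ p') (S.seg₁ q₁'))
    (hne₁ : S.seg₁ p ≠ S.seg₁ p') (hne₂ : S.seg₂ p ≠ S.seg₂ p') :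
    ∃ q q', S.Arm p p' q q' := by
  have seg₁_ne : ∀ {i j : ι}, S.seg₂ i = S.seg₂ j → S.pos₂ i < S.pos₂ j → S.seg₁ i ≠ S.seg₁ j :=
    fun h₂ hlt h₁ => hlt.ne (by rw [eq_of_seg_eq h₁ h₂])
  obtain ⟨hl, hr, hlt, hgt⟩ := h
  obtain ⟨hl', hr', hlt', hgt'⟩ := h'
  have hlp := seg₁_ne hl hlt
  have hrp := seg₁_ne hr.symm hgt
  have hlp' := seg₁_ne hl' hlt'
  have hrp' := seg₁_ne hr'.symm hgt'
  have hq₀_ne : S.pos₁ q₀ ≠ S.pos₁ q₀' := fun h => hne₂ (by rw [← hl, ← hl', S.pos₁_injective h])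
  have hq₁_ne : S.pos₁ q₁ ≠ S.pos₁ q₁' := fun h => hne₂ (by rw [← hr, ← hr', S.pos₁_injective h])
  have hreverse := pos₁_lt_iff_of_pos₂_lt hq₀ hq₁ (hl.trans hr.symm) (hl'.trans hr'.symm)
    (hl ▸ hl' ▸ hne₂) (hlt.trans hgt) (hlt'.trans hgt')
  have hleft := cyclicOrder_or_swap hlp (hq₀ ▸ hlp') hne₁
  have hiff := cyclicOrder_iff_of_between_iff hlp (hq₀ ▸ hlp') hrp.symm (hq₁ ▸ hrp'.symm)
    (by rwa [← hq₀, ← hq₁] at hbetween)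
  have hiff' := cyclicOrder_iff_of_between_iff (hq₀ ▸ hlp') hlp (hq₁ ▸ hrp'.symm) hrp.symm
    (by rw [← hq₀, ← hq₁] at hbetween; exact hbetween.symm)
  rcases lt_or_gt_of_ne hq₀_ne with h₀ | h₀ <;> rcases hleft with hcyclic | hcyclic
  · exact ⟨q₀, q₀', hq₀, hl, hl', Or.inl ⟨hlt, hlt'⟩, Or.inl ⟨h₀, hcyclic⟩⟩
  · exact ⟨q₁, q₁', hq₁, hr, hr', Or.inr ⟨hgt, hgt'⟩, Or.inr ⟨by omega, hiff'.1 hcyclic⟩⟩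
  · exact ⟨q₁, q₁', hq₁, hr, hr', Or.inr ⟨hgt, hgt'⟩, Or.inl ⟨by omega, hiff.1 hcyclic⟩⟩
  · exact ⟨q₀, q₀', hq₀, hl, hl', Or.inl ⟨hlt, hlt'⟩, Or.inr ⟨h₀, hcyclic⟩⟩

theorem eq_of_flanked {p p' q₀ q₀' q₁ q₁' r₀ r₀' r₁ r₁' : ι} (hq : S.Flanked q₀ p q₁)
    (hq' : S.Flanked q₀' p' q₁') (hr : S.swap.Flanked r₀ p r₁) (hr' : S.swap.Flanked r₀' p' r₁')
    (hq₀ : S.seg₁ q₀ = S.seg₁ q₀') (hq₁ : S.seg₁ q₁ = S.seg₁ q₁')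
    (hr₀ : S.seg₂ r₀ = S.seg₂ r₀') (hr₁ : S.seg₂ r₁ = S.seg₂ r₁')
    (hbetween₁ : Between (S.seg₁ q₀) (S.seg₁ p) (S.seg₁ q₁) ↔
      Between (S.seg₁ q₀') (S.seg₁ p') (S.seg₁ q₁'))
    (hbetween₂ : Between (S.seg₂ r₀) (S.seg₂ p) (S.seg₂ r₁) ↔
      Between (S.seg₂ r₀') (S.seg₂ p') (S.seg₂ r₁')) : p = p' := by
  by_contra hne
  have hne₁ : S.seg₁ p ≠ S.seg₁ p' := fun h => hne (hq.eq_of_seg₁_eq hq' hq₀ hq₁ h)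
  have hne₂ : S.seg₂ p ≠ S.seg₂ p' := fun h => hne (hr.eq_of_seg₁_eq hr' hr₀ hr₁ h)
  obtain ⟨q, q', hqArm⟩ := hq.exists_arm hq' hq₀ hq₁ hbetween₁ hne₁ hne₂
  obtain ⟨r, r', hrArm⟩ := hr.exists_arm hr' hr₀ hr₁ hbetween₂ hne₂ hne₁
  exact hqArm.false hrArm

end LinkedCycles

/-! ### Counting -/

section Counting

open Finset

variable {ι : Type*} [Fintype ι]

theorem card_filter_card_lt_le {κ α : Type*} [DecidableEq κ] [LinearOrder α] {s : ι → κ}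
    {x : ι → α} (hx : Function.Injective x) {T : Finset κ} (hs : ∀ i, s i ∈ T) (m : ℕ) :
    #{p | #{q | s q = s p ∧ x q < x p} < m} ≤ m * #T := by
  have hlt : ∀ p p', s p = s p' → x p < x p' →
      #{q | s q = s p ∧ x q < x p} < #{q | s q = s p' ∧ x q < x p'} := fun p p' hs hx =>
    card_lt_card <| (ssubset_iff_of_subset fun q => by
      simp only [mem_filter_univ]
      exact fun ⟨hq, hq'⟩ => ⟨hq.trans hs, hq'.trans hx⟩).2 ⟨p, by simp [hs, hx], by simp⟩
  calc #{p | #{q | s q = s p ∧ x q < x p} < m} ≤ #(range m ×ˢ T) := by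
        refine card_le_card_of_injOn (fun p => (#{q | s q = s p ∧ x q < x p}, s p))
          (fun p hp => ?_) fun p _ p' _ h => ?_
        · have hp := (mem_filter_univ _).1 hp
          exact mem_coe.2 (mem_product.2 ⟨mem_range.2 hp, hs p⟩)
        · obtain ⟨hcard, hs⟩ := Prod.mk.inj h
          rcases lt_trichotomy (x p) (x p') with h | h | h
          · exact absurd hcard (hlt p p' hs h).ne
          · exact hx h
          · exact absurd hcard (hlt p' p hs.symm h).ne'
    _ = m * #T := by rw [card_product, card_range]

namespace LinkedCycles

variable {V : Type*} [DecidableEq V] {G : SimpleGraph V} (S : LinkedCycles G ι)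

open scoped Classical in
/-- The pairs of paths flanking a given path on the second cycle. -/
noncomputable def flanks (p : ι) : Finset (ι × ι) := {q | S.Flanked q.1 p q.2}

theorem sq_le_card_flanks {p : ι} {m : ℕ}
    (hleft : m ≤ #{q | S.seg₂ q = S.seg₂ p ∧ S.pos₂ q < S.pos₂ p})
    (hright : m ≤ #{q | S.seg₂ q = S.seg₂ p ∧ S.pos₂ p < S.pos₂ q}) : m ^ 2 ≤ #(S.flanks p) :=
  calc m ^ 2 = m * m := sq m
    _ ≤ _ * _ := Nat.mul_le_mul hleft hright
    _ = _ := (card_product _ _).symm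
    _ ≤ _ := card_le_card fun q hq => by
      simp only [mem_product, mem_filter_univ] at hq
      obtain ⟨⟨hs₀, hx₀⟩, hs₁, hx₁⟩ := hq
      simpa [flanks] using ⟨hs₀, hs₁, hx₀, hx₁⟩

variable {S} {K : ℕ}

theorem card_filter_card_flanks_lt_le (hK : ∀ i, S.seg₂ i < K) (m : ℕ) :
    #{p | #(S.flanks p) < m ^ 2} ≤ 2 * (m * K) := by
  have hpos : Function.Injective S.pos₂ := S.swap.pos₁_injective
  have hleft := card_filter_card_lt_le hpos (fun i => mem_range.2 (hK i)) m
  have hright := card_filter_card_lt_le (x := fun i => OrderDual.toDual (S.pos₂ i)) hpos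
    (fun i => mem_range.2 (hK i)) m
  simp only [OrderDual.toDual_lt_toDual] at hright
  rw [card_range] at hleft hright
  classical
  calc #{p | #(S.flanks p) < m ^ 2}
      ≤ #(({p | #{q | S.seg₂ q = S.seg₂ p ∧ S.pos₂ q < S.pos₂ p} < m} : Finset ι) ∪
          ({p | #{q | S.seg₂ q = S.seg₂ p ∧ S.pos₂ p < S.pos₂ q} < m} : Finset ι)) := by
        refine card_le_card fun p hp => ?_
        simp only [mem_filter_univ, mem_union] at hp ⊢
        by_contra! h
        exact hp.not_ge (S.sq_le_card_flanks h.1 h.2)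
    _ ≤ m * K + m * K := (card_union_le _ _).trans (Nat.add_le_add hleft hright)
    _ = 2 * (m * K) := (two_mul _).symm

theorem sum_card_flanks_mul_card_flanks_le (hK₁ : ∀ i, S.seg₁ i < K) (hK₂ : ∀ i, S.seg₂ i < K) :
    ∑ p, #(S.flanks p) * #(S.swap.flanks p) ≤ 4 * K ^ 4 := by
  let label : (Σ _ : ι, (ι × ι) × (ι × ι)) → ((ℕ × ℕ) × (ℕ × ℕ)) × (Bool × Bool) :=
    fun ⟨p, ⟨q₀, q₁⟩, ⟨r₀, r₁⟩⟩ =>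
      (((S.seg₁ q₀, S.seg₁ q₁), (S.seg₂ r₀, S.seg₂ r₁)),
        (decide (Between (S.seg₁ q₀) (S.seg₁ p) (S.seg₁ q₁)),
          decide (Between (S.seg₂ r₀) (S.seg₂ p) (S.seg₂ r₁))))
  calc ∑ p, #(S.flanks p) * #(S.swap.flanks p)
      = #(univ.sigma fun p => S.flanks p ×ˢ S.swap.flanks p) := by simp [card_sigma, card_product]
    _ ≤ #(((range K ×ˢ range K) ×ˢ (range K ×ˢ range K)) ×ˢ (univ : Finset (Bool × Bool))) := by
        refine card_le_card_of_injOn label (fun _ _ => by simp [label, hK₁, hK₂]) ?_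
        rintro ⟨p, ⟨q₀, q₁⟩, r₀, r₁⟩ ht ⟨p', ⟨q₀', q₁'⟩, r₀', r₁'⟩ ht' hlabel
        simp only [flanks, coe_sigma, coe_univ, coe_product, coe_filter, Set.mem_sigma_iff,
          Set.mem_univ, Set.mem_prod, Set.mem_ofPred_eq, mem_univ, true_and] at ht ht'
        simp only [label, Prod.mk.injEq, decide_eq_decide] at hlabel
        obtain ⟨hq, hr⟩ := ht
        obtain ⟨hq', hr'⟩ := ht'
        obtain ⟨⟨⟨hq₀, hq₁⟩, hr₀, hr₁⟩, hbetween₁, hbetween₂⟩ := hlabel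
        obtain rfl := eq_of_flanked hq hq' hr hr' hq₀ hq₁ hr₀ hr₁ hbetween₁ hbetween₂
        rw [eq_of_seg_eq hq₀ (hq.seg₂_left.trans hq'.seg₂_left.symm),
          eq_of_seg_eq hq₁ (hq.seg₂_right.trans hq'.seg₂_right.symm),
          eq_of_seg_eq (hr.seg₂_left.trans hr'.seg₂_left.symm) hr₀,
          eq_of_seg_eq (hr.seg₂_right.trans hr'.seg₂_right.symm) hr₁]
    _ = 4 * K ^ 4 := by
        simp only [card_product, card_range, card_univ, Fintype.card_prod, Fintype.card_bool]
        ring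

/- A path with many feet on both sides of its own, on both cycles, is flanked in about `m ^ 4` ways,
and these are all told apart by four segments and two bits. -/
theorem card_le_of_pow_lt_pow {m : ℕ} (hK₁ : ∀ i, S.seg₁ i < K) (hK₂ : ∀ i, S.seg₂ i < K)
    (hm : K ^ 3 < m ^ 5) : Fintype.card ι ≤ 8 * m * K := by
  by_contra! hcard
  have hK : 0 < K := by
    obtain ⟨i⟩ := Fintype.card_pos_iff.1 (Nat.zero_lt_of_lt hcard)
    exact Nat.zero_lt_of_lt (hK₁ i)
  set bad₁ : Finset ι := {p | #(S.flanks p) < m ^ 2} with hbad₁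
  set bad₂ : Finset ι := {p | #(S.swap.flanks p) < m ^ 2} with hbad₂
  set good : Finset ι := {p | m ^ 2 ≤ #(S.flanks p) ∧ m ^ 2 ≤ #(S.swap.flanks p)} with hgood
  have hgood_card : 4 * (m * K) ≤ #good := by
    classical
    have hcover : Fintype.card ι ≤ #good + 2 * (m * K) + 2 * (m * K) :=
      calc Fintype.card ι
          = #(good ∪ bad₁ ∪ bad₂) := by
            rw [← card_univ]
            congr 1
            ext p
            simp only [hgood, hbad₁, hbad₂, mem_univ, mem_union, mem_filter_univ, true_iff]
            omega
        _ ≤ #good + 2 * (m * K) + 2 * (m * K) :=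
            (card_union_le _ _).trans
              (Nat.add_le_add ((card_union_le _ _).trans (Nat.add_le_add_left
                (card_filter_card_flanks_lt_le hK₂ m) _))
                (card_filter_card_flanks_lt_le (S := S.swap) hK₁ m))
    rw [mul_assoc] at hcard
    omega
  have hpow : 4 * K * m ^ 5 ≤ 4 * K * K ^ 3 :=
    calc 4 * K * m ^ 5 = 4 * (m * K) * (m ^ 2 * m ^ 2) := by ring
      _ ≤ #good * (m ^ 2 * m ^ 2) := Nat.mul_le_mul_right _ hgood_card
      _ ≤ ∑ p ∈ good, #(S.flanks p) * #(S.swap.flanks p) :=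
          card_nsmul_le_sum _ _ _ fun p hp =>
            Nat.mul_le_mul ((mem_filter_univ _).1 hp).1 ((mem_filter_univ _).1 hp).2
      _ ≤ ∑ p, #(S.flanks p) * #(S.swap.flanks p) := sum_le_univ_sum_of_nonneg fun _ => zero_le
      _ ≤ 4 * K ^ 4 := sum_card_flanks_mul_card_flanks_le hK₁ hK₂
      _ = 4 * K * K ^ 3 := by ring
  exact hm.not_ge (Nat.le_of_mul_le_mul_left hpow (by omega))

end LinkedCycles

end Counting

/-! ### Menger's theorem for finite digraphs -/

section Menger

variable {V : Type*} {r : V → V → Prop} {A B P Q S T : Finset V} {l u w : List V} {x y v : V}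

/-- `l` is the vertex list of a walk from `A` to `B` in the digraph with arc relation `r`. -/
structure IsConnecting (r : V → V → Prop) (A B : Finset V) (l : List V) : Prop where
  chain : l.IsChain r
  head_mem : ∃ a ∈ A, a ∈ l.head?
  getLast_mem : ∃ b ∈ B, b ∈ l.getLast?

/-- `S` meets every walk from `A` to `B` in the digraph with arc relation `r`. -/
def Separates (r : V → V → Prop) (A B S : Finset V) : Prop :=
  ∀ l, IsConnecting r A B l → ∃ s ∈ S, s ∈ l

/-- `F` is a family of pairwise disjoint walks from `A` to `B`. -/
structure IsLinkage {ι : Type*} (r : V → V → Prop) (A B : Finset V) (F : ι → List V) : Prop where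
  connecting : ∀ i, IsConnecting r A B (F i)
  disjoint : ∀ i j, i ≠ j → (F i).Disjoint (F j)

/-- A linkage from `A` onto `P` all of whose walks stop as soon as they reach `P`: the walk ending
at `p ∈ P` has the vertex list `u p ++ [p]`. -/
structure IsFan (r : V → V → Prop) (A P : Finset V) (u : P → List V) : Prop where
  connecting : ∀ p : P, IsConnecting r A {p.1} (u p ++ [p.1])
  notMem : ∀ p, ∀ z ∈ u p, z ∉ P
  disjoint : ∀ p q : P, p ≠ q → (u p ++ [p.1]).Disjoint (u q ++ [q.1])

/-- The arc relation `r` without the arc from `x` to `y`. -/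
def deleteArc (r : V → V → Prop) (x y a b : V) : Prop :=
  r a b ∧ ¬(a = x ∧ b = y)

theorem deleteArc_le : deleteArc r x y ≤ r := fun _ _ h => h.1

theorem deleteArc_lt (h : r x y) : deleteArc r x y < r :=
  deleteArc_le.lt_of_not_ge fun hle => (hle x y h).2 ⟨rfl, rfl⟩

theorem flip_deleteArc : flip (deleteArc r x y) = deleteArc (flip r) y x := by
  ext a b
  exact and_congr_right fun _ => not_congr and_comm

theorem isConnecting_append_cons :
    IsConnecting r A B (u ++ v :: w) ↔
      IsConnecting r A {v} (u ++ [v]) ∧ IsConnecting r {v} B (v :: w) := by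
  have hhead : (u ++ v :: w).head? = (u ++ [v]).head? := by cases u <;> simp
  constructor
  · rintro ⟨hchain, hA, hB⟩
    rw [List.isChain_split] at hchain
    exact ⟨⟨hchain.1, hhead ▸ hA, by simp⟩, ⟨hchain.2, by simp, by simpa using hB⟩⟩
  · rintro ⟨⟨hu, hA, -⟩, ⟨hw, -, hB⟩⟩
    exact ⟨List.isChain_split.2 ⟨hu, hw⟩, hhead ▸ hA, by simpa using hB⟩

namespace IsConnecting

theorem ne_nil (h : IsConnecting r A B l) : l ≠ [] := by
  rintro rfl
  simpa using h.head_mem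

theorem mono {r' : V → V → Prop} (h : IsConnecting r A B l) (hr : r ≤ r') :
    IsConnecting r' A B l :=
  ⟨h.chain.imp fun a b => hr a b, h.head_mem, h.getLast_mem⟩

theorem reverse (h : IsConnecting r A B l) : IsConnecting (flip r) B A l.reverse :=
  ⟨List.isChain_reverse.2 h.chain, by simpa using h.getLast_mem, by simpa using h.head_mem⟩

theorem exists_mem_right (h : IsConnecting r A B l) : ∃ b ∈ B, b ∈ l :=
  h.getLast_mem.imp fun _ hb => ⟨hb.1, List.mem_of_mem_getLast? hb.2⟩

theorem append_reverse (hu : IsConnecting r A {v} (u ++ [v]))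
    (hw : IsConnecting (flip r) B {v} (w ++ [v])) : IsConnecting r A B (u ++ v :: w.reverse) :=
  isConnecting_append_cons.2 ⟨hu, by simpa using hw.reverse⟩

theorem append_arc_reverse (hu : IsConnecting r A {x} (u ++ [x])) (hxy : r x y)
    (hw : IsConnecting (flip r) B {y} (w ++ [y])) :
    IsConnecting r A B (u ++ x :: y :: w.reverse) := by
  have hyw : IsConnecting r {y} B (y :: w.reverse) := by simpa using hw.reverse
  exact isConnecting_append_cons.2 ⟨hu, List.isChain_cons_cons.2 ⟨hxy, hyw.chain⟩, by simp,
    by simpa using hyw.getLast_mem⟩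

theorem deleteArc (h : IsConnecting r A B (u ++ [v])) (hx : x ∉ u) :
    IsConnecting (deleteArc r x y) A B (u ++ [v]) := by
  refine ⟨List.isChain_iff_forall_rel_of_append_cons_cons.2 fun a b s t hl => ?_,
    h.head_mem, h.getLast_mem⟩
  have ha : a ∈ u := by
    rw [← List.dropLast_concat (l₁ := u) (b := v), hl]
    simp
  exact ⟨List.isChain_iff_forall_rel_of_append_cons_cons.1 h.chain hl, fun hab => hx (hab.1 ▸ ha)⟩

theorem exists_first_mem (h : IsConnecting r A B l) (hl : ∃ p ∈ P, p ∈ l) :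
    ∃ (p : P) (u w : List V), l = u ++ p.1 :: w ∧ (∀ z ∈ u, z ∉ P) ∧
      IsConnecting r A {p.1} (u ++ [p.1]) := by
  classical
  obtain ⟨p, hp⟩ := Option.isSome_iff_exists.1
    (List.find?_isSome (xs := l) (p := (· ∈ P)).2 (by simpa [and_comm] using hl))
  obtain ⟨hpP, u, w, rfl, hu⟩ := List.find?_eq_some_iff_append.1 hp
  exact ⟨⟨p, by simpa using hpP⟩, u, w, rfl, by simpa using hu, (isConnecting_append_cons.1 h).1⟩

end IsConnecting

theorem Separates.flip (h : Separates r A B S) : Separates (flip r) B A S := fun l hl => by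
  simpa using h l.reverse hl.reverse

theorem IsLinkage.flip {ι : Type*} {F : ι → List V} (h : IsLinkage r A B F) :
    IsLinkage (flip r) B A fun i => (F i).reverse :=
  ⟨fun i => (h.connecting i).reverse, fun i j hij => by simpa using h.disjoint i j hij⟩

theorem separates_insert_of_deleteArc [DecidableEq V] (h : Separates (deleteArc r x y) A B S) :
    Separates r A B (insert x S) := by
  intro l hl
  obtain ⟨u, v, rfl⟩ := (List.eq_nil_or_concat' l).resolve_left hl.ne_nil
  by_cases hx : x ∈ u
  · exact ⟨x, by simp [hx]⟩
  · obtain ⟨s, hs, hsl⟩ := h _ (hl.deleteArc hx)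
    exact ⟨s, Finset.mem_insert_of_mem hs, hsl⟩

theorem separates_of_deleteArc (hP : Separates r A B P) (hx : x ∈ P)
    (hT : Separates (deleteArc r x y) A P T) : Separates r A B T := by
  intro l hl
  obtain ⟨p, u, w, rfl, hu, hup⟩ := hl.exists_first_mem (hP l hl)
  have hup' := hup.deleteArc (x := x) (y := y) fun hxu => hu x hxu hx
  obtain ⟨s, hs, hsu⟩ := hT _ ⟨hup'.chain, hup'.head_mem, ⟨p, p.2, by simp⟩⟩
  exact ⟨s, hs, by grind⟩

theorem IsLinkage.exists_isFan {ι : Type*} [Fintype ι] {F : ι → List V} (h : IsLinkage r A P F)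
    (hcard : Fintype.card ι = P.card) : ∃ u, IsFan r A P u := by
  choose p u w hF hu hup using fun i =>
    (h.connecting i).exists_first_mem (h.connecting i).exists_mem_right
  have hp : p.Injective := by
    intro i j hij
    by_contra hne
    exact h.disjoint i j hne (a := (p i).1) (by simp [hF i]) (by simp [hF j, hij])
  have hp' : p.Bijective :=
    (Fintype.bijective_iff_injective_and_card p).2 ⟨hp, by simpa using hcard⟩
  obtain ⟨g, hg⟩ := hp'.surjective.hasRightInverse
  refine ⟨fun q => u (g q), fun q => by simpa only [hg q] using hup (g q), fun q => hu _, ?_⟩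
  intro q q' hne
  have hdisj := h.disjoint _ _ (hg.injective.ne hne)
  rw [hF, hF, hg q, hg q'] at hdisj
  exact fun z hz hz' => hdisj (a := z) (by grind) (by grind)

theorem IsFan.exists_prefix {u : P → List V} (h : IsFan r A P u) {p : P}
    (hv : v ∈ u p ++ [p.1]) : ∃ s, IsConnecting r A {v} (s ++ [v]) ∧ ∀ z ∈ s, z ∉ P := by
  rcases List.mem_append.1 hv with hvu | hvp
  · obtain ⟨s, t, hst⟩ := List.append_of_mem hvu
    have hconn := h.connecting p
    rw [hst, List.append_assoc, List.cons_append, isConnecting_append_cons] at hconn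
    exact ⟨s, hconn.1, fun z hz => h.notMem p z (by simp [hst, hz])⟩
  · obtain rfl := List.mem_singleton.1 hvp
    exact ⟨u p, h.connecting p, h.notMem p⟩

theorem IsFan.disjoint_of_separates {u : P → List V} {w : Q → List V} (hu : IsFan r A P u)
    (hw : IsFan (flip r) B Q w) (hS : Separates r A B S) (hSP : S ⊆ P) (hSQ : S ⊆ Q)
    {p : P} {q : Q} (hne : p.1 ≠ q.1) : (u p ++ [p.1]).Disjoint (w q ++ [q.1]) := by
  intro v hvu hvw
  obtain ⟨s, hs, hsP⟩ := hu.exists_prefix hvu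
  obtain ⟨t, ht, htQ⟩ := hw.exists_prefix hvw
  obtain ⟨z, hzS, hz⟩ := hS _ (hs.append_reverse ht)
  obtain rfl : z = v := by grind
  have hzp : z = p := by grind [hu.notMem p z]
  have hzq : z = q := by grind [hw.notMem q z]
  exact hne (hzp.symm.trans hzq)

theorem IsFan.exists_isLinkage [DecidableEq V] {u : ↥(insert x S) → List V}
    {w : ↥(insert y S) → List V} (hu : IsFan (deleteArc r x y) A (insert x S) u)
    (hw : IsFan (flip (deleteArc r x y)) B (insert y S) w)
    (hS : Separates (deleteArc r x y) A B S) (hxy : r x y) (hx : x ∉ S) (hy : y ∉ S) :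
    ∃ F : Option S → List V, IsLinkage r A B F := by
  let f : Option S → ↥(insert x S) := fun i =>
    i.elim ⟨x, by simp⟩ fun p => ⟨p, Finset.mem_insert_of_mem p.2⟩
  let g : Option S → ↥(insert y S) := fun i =>
    i.elim ⟨y, by simp⟩ fun p => ⟨p, Finset.mem_insert_of_mem p.2⟩
  have hf : ∀ i j, i ≠ j → f i ≠ f j := by
    rintro (_ | ⟨p, hp⟩) (_ | ⟨q, hq⟩) hij <;> grind
  have hg : ∀ i j, i ≠ j → g i ≠ g j := by
    rintro (_ | ⟨p, hp⟩) (_ | ⟨q, hq⟩) hij <;> grind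
  have hfg : ∀ i j, i ≠ j → (f i).1 ≠ (g j).1 := by
    rintro (_ | ⟨p, hp⟩) (_ | ⟨q, hq⟩) hij <;> grind
  let F : Option S → List V := fun i => match i with
    | none => u (f none) ++ x :: y :: (w (g none)).reverse
    | some p => u (f p) ++ p.1 :: (w (g p)).reverse
  have hF : ∀ i, ∀ z ∈ F i, z ∈ u (f i) ++ [(f i).1] ∨ z ∈ w (g i) ++ [(g i).1] := by
    rintro (_ | p) <;> grind
  refine ⟨F, ?_, ?_⟩
  · rintro (_ | p)
    · exact ((hu.connecting (f none)).mono deleteArc_le).append_arc_reverse hxy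
        ((hw.connecting (g none)).mono fun a b => deleteArc_le b a)
    · exact ((hu.connecting (f p)).append_reverse (hw.connecting (g p))).mono deleteArc_le
  · intro i j hij z hzi hzj
    rcases hF i z hzi with hi | hi <;> rcases hF j z hzj with hj | hj
    · exact hu.disjoint _ _ (hf i j hij) hi hj
    · exact hu.disjoint_of_separates hw hS (Finset.subset_insert x S) (Finset.subset_insert y S)
        (hfg i j hij) hi hj
    · exact hu.disjoint_of_separates hw hS (Finset.subset_insert x S) (Finset.subset_insert y S)
        (hfg j i hij.symm) hj hi
    · exact hw.disjoint _ _ (hg i j hij) hi hj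

theorem separates_inter_of_forall_not [DecidableEq V] (hr : ∀ x y, ¬r x y) :
    Separates r A B (A ∩ B) := by
  rintro (_ | ⟨a, _ | ⟨b, l⟩⟩) h
  · exact absurd rfl h.ne_nil
  · exact ⟨a, by simpa using And.intro h.head_mem h.getLast_mem⟩
  · exact absurd (List.isChain_cons_cons.1 h.chain).1 (hr a b)

theorem IsLinkage.comp {ι κ : Type*} {F : ι → List V} (h : IsLinkage r A B F) {f : κ → ι}
    (hf : f.Injective) : IsLinkage r A B (F ∘ f) :=
  ⟨fun i => h.connecting (f i), fun _ _ hij => h.disjoint _ _ (hf.ne hij)⟩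

theorem isLinkage_singleton_inter [DecidableEq V] :
    IsLinkage r A B fun v : ↥(A ∩ B) => [v.1] := by
  refine ⟨fun v => ⟨by simp, ?_, ?_⟩, fun v w hvw => ?_⟩
  · simpa using (Finset.mem_inter.1 v.2).1
  · simpa using (Finset.mem_inter.1 v.2).2
  · simpa [eq_comm] using Subtype.coe_injective.ne hvw

/-- The induction step in Göring's proof of Menger's theorem. -/
theorem exists_isLinkage_of_deleteArc {n : ℕ} (hxy : r x y)
    (ih : ∀ A B : Finset V, (∀ S, Separates (deleteArc r x y) A B S → n ≤ S.card) →
      ∃ F : Fin n → List V, IsLinkage (deleteArc r x y) A B F)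
    (h : ∀ S, Separates r A B S → n ≤ S.card) : ∃ F : Fin n → List V, IsLinkage r A B F := by
  classical
  by_cases hdel : ∀ S, Separates (deleteArc r x y) A B S → n ≤ S.card
  · obtain ⟨F, hF⟩ := ih A B hdel
    exact ⟨F, fun i => (hF.connecting i).mono deleteArc_le, hF.disjoint⟩
  push Not at hdel
  obtain ⟨S, hS, hcard⟩ := hdel
  have hSx : Separates r A B (insert x S) := separates_insert_of_deleteArc hS
  have hSy : Separates (flip r) B A (insert y S) :=
    separates_insert_of_deleteArc (flip_deleteArc ▸ hS.flip)
  have hx : x ∉ S := fun hx => by simpa [hx] using hcard.trans_le (h _ hSx)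
  have hy : y ∉ S := fun hy => by simpa [hy] using hcard.trans_le (h _ hSy.flip)
  have hcardx : n = (insert x S).card :=
    (h _ hSx).antisymm (by rw [Finset.card_insert_of_notMem hx]; exact hcard)
  have hcardy : n = (insert y S).card :=
    (h _ hSy.flip).antisymm (by rw [Finset.card_insert_of_notMem hy]; exact hcard)
  obtain ⟨F, hF⟩ := ih A (insert x S) fun T hT =>
    h T (separates_of_deleteArc hSx (Finset.mem_insert_self x S) hT)
  obtain ⟨F', hF'⟩ := ih (insert y S) B fun T hT =>
    h T (separates_of_deleteArc hSy (Finset.mem_insert_self y S)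
      (flip_deleteArc (r := r) ▸ hT.flip)).flip
  obtain ⟨u, hu⟩ := hF.exists_isFan (by simpa using hcardx)
  obtain ⟨w, hw⟩ := hF'.flip.exists_isFan (by simpa using hcardy)
  obtain ⟨H, hH⟩ := hu.exists_isLinkage hw hS hxy hx hy
  exact ⟨_, hH.comp ((Fintype.equivFinOfCardEq (by
    simpa [Finset.card_insert_of_notMem hx] using hcardx.symm)).symm.injective)⟩

theorem exists_isLinkage_of_forall_le_card [Finite V] {n : ℕ}
    (h : ∀ S, Separates r A B S → n ≤ S.card) : ∃ F : Fin n → List V, IsLinkage r A B F := by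
  classical
  induction r using WellFoundedLT.induction generalizing A B with
  | ind r ih =>
    by_cases hr : ∀ x y, ¬r x y
    · have hcard := h _ (separates_inter_of_forall_not hr)
      obtain ⟨e⟩ : Nonempty (Fin n ↪ ↥(A ∩ B)) :=
        Function.Embedding.nonempty_of_card_le (by simpa using hcard)
      exact ⟨_, isLinkage_singleton_inter.comp e.injective⟩
    · push Not at hr
      obtain ⟨x, y, hxy⟩ := hr
      exact exists_isLinkage_of_deleteArc hxy (fun A B => ih _ (deleteArc_lt hxy)) h

end Menger

/-! ### From separators to linked cycles -/

section Separators

variable {V : Type*} {G : SimpleGraph V} {A B : Finset V} {l : List V}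

theorem isConnecting_support {a b : V} (ha : a ∈ A) (hb : b ∈ B) (p : G.Walk a b) :
    IsConnecting G.Adj A B p.support :=
  ⟨p.isChain_adj_support, ⟨a, ha, by simp [List.head?_eq_some_head p.support_ne_nil]⟩,
    ⟨b, hb, by simp [List.getLast?_eq_getLast_of_ne_nil p.support_ne_nil]⟩⟩

theorem Separates.isSeparator {S : Finset V} (h : Separates G.Adj A B S) : IsSeparator G A B S :=
  fun _ _ ha hb p _ => h _ (isConnecting_support ha hb p)

namespace IsConnecting

theorem exists_walk (h : IsConnecting G.Adj A B l) :
    ∃ a ∈ A, ∃ b ∈ B, ∃ p : G.Walk a b, p.support = l := by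
  obtain ⟨a, ha, hhead⟩ := h.head_mem
  obtain ⟨b, hb, hlast⟩ := h.getLast_mem
  rw [List.head?_eq_some_head h.ne_nil] at hhead
  rw [List.getLast?_eq_getLast_of_ne_nil h.ne_nil] at hlast
  exact ⟨a, ha, b, hb, exists_walk_support_eq h.ne_nil h.chain
    (by simpa using hhead) (by simpa using hlast)⟩

theorem exists_shortest {r : V → V → Prop} (h : IsConnecting r A B l) :
    ∃ m ⊆ l, IsConnecting r A B m ∧
      ∀ m' ⊆ m, IsConnecting r A B m' → m.length ≤ m'.length := by
  induction hn : l.length using Nat.strong_induction_on generalizing l with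
  | h n ih =>
    by_cases hl : ∀ m' ⊆ l, IsConnecting r A B m' → l.length ≤ m'.length
    · exact ⟨l, List.Subset.refl l, h, hl⟩
    · push Not at hl
      obtain ⟨m', hm'l, hm', hlt⟩ := hl
      obtain ⟨m, hmm', hm⟩ := ih _ (hn ▸ hlt) hm' rfl
      exact ⟨m, List.Subset.trans hmm' hm'l, hm⟩

theorem nodup_of_shortest (h : IsConnecting G.Adj A B l)
    (hl : ∀ m ⊆ l, IsConnecting G.Adj A B m → l.length ≤ m.length) : l.Nodup := by
  classical
  obtain ⟨a, ha, b, hb, p, rfl⟩ := h.exists_walk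
  have hlength := hl _ p.support_bypass_subset_support (isConnecting_support ha hb p.bypass)
  rw [← p.bypass_eq_self_of_length_le_length_bypass (by simpa using hlength)]
  exact p.bypass_isPath.support_nodup

theorem exists_link (h : IsConnecting G.Adj A B l) (hAB : Disjoint A B) :
    ∃ a ∈ A, ∃ mid, ∃ b ∈ B, Link G a mid b ∧ mid.Nodup ∧ (∀ v ∈ mid, v ∉ A ∧ v ∉ B) ∧
      a :: (mid ++ [b]) ⊆ l := by
  obtain ⟨m, hml, hm, hmin⟩ := h.exists_shortest
  have hnodup := hm.nodup_of_shortest hmin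
  obtain _ | ⟨a, t⟩ := m
  · exact absurd rfl hm.ne_nil
  have ha : a ∈ A := by simpa using hm.head_mem
  obtain rfl | ⟨mid, b, rfl⟩ := List.eq_nil_or_concat' t
  · exact absurd (by simpa using hm.getLast_mem) (Finset.disjoint_left.1 hAB ha)
  have hb : b ∈ B := by
    simpa only [← List.cons_append, List.getLast?_concat, Option.mem_some_iff, exists_eq_right']
      using hm.getLast_mem
  refine ⟨a, ha, mid, b, hb, hm.chain, (List.nodup_append.1 hnodup.of_cons).1, ?_, hml⟩
  intro v hv
  obtain ⟨s, t, rfl⟩ := List.append_of_mem hv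
  have hsplit : a :: (s ++ v :: t ++ [b]) = (a :: s) ++ v :: (t ++ [b]) := by simp
  rw [hsplit] at hm hmin
  obtain ⟨hav, hvb⟩ := isConnecting_append_cons.1 hm
  constructor
  · intro hvA
    have hlength := hmin _ (List.subset_append_right _ _) ⟨hvb.chain, by simpa, hvb.getLast_mem⟩
    grind
  · intro hvB
    have hlength := hmin ((a :: s) ++ [v]) (by grind) ⟨hav.chain, hav.head_mem,
      ⟨v, hvB, List.getLast?_concat⟩⟩
    grind

end IsConnecting

theorem IsLinkage.card_subtype_exists_mem_le {ι : Type*} [Finite ι] {r : V → V → Prop}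
    {F : ι → List V} (h : IsLinkage r A B F) (T : Finset V) :
    Nat.card {i // ∃ v ∈ T, v ∈ F i} ≤ T.card := by
  choose f hfT hf using fun i : {i // ∃ v ∈ T, v ∈ F i} => i.2
  have hinj : Function.Injective fun i => (⟨f i, hfT i⟩ : T) := by
    intro i j hij
    by_contra hne
    have hij : f i = f j := congrArg Subtype.val hij
    exact h.disjoint i j (Subtype.coe_injective.ne hne) (hf i) (hij ▸ hf j)
  simpa using Nat.card_le_card_of_injective _ hinj

variable [DecidableEq V] {l₁ l₂ : List V}

theorem IsLinkage.exists_linkedCycles {ι : Type*} {F : ι → List V}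
    (h₁ : IsLongestCycleList G l₁) (h₂ : IsLongestCycleList G l₂)
    (hF : IsLinkage G.Adj (l₁.toFinset \ l₂.toFinset) (l₂.toFinset \ l₁.toFinset) F)
    (hcommon : ∀ i, ∀ v ∈ F i, v ∉ l₁.toFinset ∩ l₂.toFinset) :
    ∃ S : LinkedCycles G ι, S.cycle₁ = l₁ ∧ S.cycle₂ = l₂ := by
  have hAB : Disjoint (l₁.toFinset \ l₂.toFinset) (l₂.toFinset \ l₁.toFinset) :=
    disjoint_sdiff_sdiff
  choose a ha mid b hb hlink hnodup hmid hsub using fun i => (hF.connecting i).exists_link hAB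
  simp only [Finset.mem_sdiff, Finset.mem_inter, List.mem_toFinset] at ha hb hmid hcommon
  have hunique : ∀ i j v, v ∈ F i → v ∈ F j → i = j := fun i j v hi hj =>
    by_contra fun hij => hF.disjoint i j hij hi hj
  refine ⟨{ cycle₁ := l₁, cycle₂ := l₂, isLongest₁ := h₁, isLongest₂ := h₂
            foot₁ := a, mid := mid, foot₂ := b, link := hlink, nodup_mid := hnodup
            foot₁_mem := fun i => (ha i).1
            foot₁_notMem := fun i => (ha i).2
            foot₂_mem := fun i => (hb i).1
            foot₂_notMem := fun i => (hb i).2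
            mid_disjoint₁ := fun i v hv hv₁ => ?_
            mid_disjoint₂ := fun i v hv hv₂ => ?_
            foot₁_injective := fun i j hij => ?_
            foot₂_injective := fun i j hij => ?_
            eq_of_mem_mid := fun {i j v} hi hj => ?_ }, rfl, rfl⟩
  · have := hcommon i v (hsub i (by simp [hv]))
    have := (hmid i v hv).1
    tauto
  · have := hcommon i v (hsub i (by simp [hv]))
    have := (hmid i v hv).2
    tauto
  · exact hunique i j (a i) (hsub i (by simp)) (hsub j (by simp [hij]))
  · exact hunique i j (b i) (hsub i (by simp)) (hsub j (by simp [hij]))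
  · exact hunique i j v (hsub i (by simp [hi])) (hsub j (by simp [hj]))

theorem IsLinkage.card_le_of_isLongestCycleList {ι : Type*} [Finite ι] {F : ι → List V}
    (h₁ : IsLongestCycleList G l₁) (h₂ : IsLongestCycleList G l₂)
    (hF : IsLinkage G.Adj (l₁.toFinset \ l₂.toFinset) (l₂.toFinset \ l₁.toFinset) F)
    {k m : ℕ} (hk : k = (l₁.toFinset ∩ l₂.toFinset).card) (hm : (k + 1) ^ 3 < m ^ 5) :
    Nat.card ι ≤ k + 8 * m * (k + 1) := by
  classical
  have := Fintype.ofFinite ι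
  have hdisj : IsLinkage G.Adj (l₁.toFinset \ l₂.toFinset) (l₂.toFinset \ l₁.toFinset)
      fun i : {i // ¬∃ v ∈ l₁.toFinset ∩ l₂.toFinset, v ∈ F i} => F i :=
    hF.comp Subtype.val_injective
  obtain ⟨S, hS₁, hS₂⟩ := hdisj.exists_linkedCycles h₁ h₂ fun i v hv hv' => i.2 ⟨v, hv', hv⟩
  have hmeet := hF.card_subtype_exists_mem_le (l₁.toFinset ∩ l₂.toFinset)
  have hseg₁ : ∀ i, S.seg₁ i < k + 1 := fun i => by
    have hle := segIndex_le_card h₁.nodup l₂ (S.foot₁ i)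
    rw [LinkedCycles.seg₁, hS₁, hS₂]
    omega
  have hseg₂ : ∀ i, S.seg₂ i < k + 1 := fun i => by
    have hle := segIndex_le_card h₂.nodup l₁ (S.foot₂ i)
    rw [Finset.inter_comm l₂.toFinset] at hle
    rw [LinkedCycles.seg₂, hS₁, hS₂]
    omega
  have havoid := LinkedCycles.card_le_of_pow_lt_pow hseg₁ hseg₂ hm
  rw [Fintype.card_subtype_compl] at havoid
  rw [Nat.card_eq_fintype_card] at hmeet ⊢
  omega

theorem card_le_of_isMinSeparator [Finite V] {u v : V} {c₁ : G.Walk u u} {c₂ : G.Walk v v}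
    (h₁ : IsLongestCycle G c₁) (h₂ : IsLongestCycle G c₂) {k m : ℕ}
    (hk : k = (c₁.support.toFinset ∩ c₂.support.toFinset).card) {S : Finset V}
    (hS : IsMinSeparator G (c₁.support.toFinset \ c₂.support.toFinset)
      (c₂.support.toFinset \ c₁.support.toFinset) S) (hm : (k + 1) ^ 3 < m ^ 5) :
    S.card ≤ k + 8 * m * (k + 1) := by
  obtain ⟨F, hF⟩ := exists_isLinkage_of_forall_le_card fun T hT => hS.2 T hT.isSeparator
  obtain ⟨l₁, hl₁, hmem₁⟩ := IsLongestCycle.exists_isLongestCycleList h₁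
  obtain ⟨l₂, hl₂, hmem₂⟩ := IsLongestCycle.exists_isLongestCycleList h₂
  have heq₁ : c₁.support.toFinset = l₁.toFinset := by ext; simp [hmem₁]
  have heq₂ : c₂.support.toFinset = l₂.toFinset := by ext; simp [hmem₂]
  rw [heq₁, heq₂] at hF hk
  simpa using hF.card_le_of_isLongestCycleList hl₁ hl₂ hk hm

end Separators

section Exponent

theorem exists_nat_rpow_lt_pow {K : ℝ} (hK : 1 ≤ K) :
    ∃ m : ℕ, K ^ 3 < (m : ℝ) ^ 5 ∧ m * K ≤ 2 * K ^ (8 / 5 : ℝ) := by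
  have hK₀ : 0 < K := by linarith
  set r : ℝ := K ^ (3 / 5 : ℝ) with hr
  have hr₁ : 1 ≤ r := Real.one_le_rpow hK (by norm_num)
  have hr₅ : r ^ 5 = K ^ 3 := by
    rw [hr, ← Real.rpow_mul_natCast hK₀.le, ← Real.rpow_natCast]
    norm_num
  have hrK : r * K = K ^ (8 / 5 : ℝ) := by
    rw [hr, ← Real.rpow_add_one hK₀.ne']
    norm_num
  refine ⟨⌊r⌋₊ + 1, ?_, ?_⟩
  · rw [← hr₅]
    push_cast
    gcongr
    exact Nat.lt_floor_add_one r
  · rw [← hrK, ← mul_assoc]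
    push_cast
    gcongr
    linarith [Nat.floor_le (zero_le_one.trans hr₁)]

theorem add_one_rpow_le {k : ℝ} (hk : 1 ≤ k) : (k + 1) ^ (8 / 5 : ℝ) ≤ 4 * k ^ (8 / 5 : ℝ) :=
  calc (k + 1) ^ (8 / 5 : ℝ) ≤ (2 * k) ^ (8 / 5 : ℝ) := by gcongr; linarith
    _ = 2 ^ (8 / 5 : ℝ) * k ^ (8 / 5 : ℝ) := Real.mul_rpow (by norm_num) (by linarith)
    _ ≤ 2 ^ (2 : ℝ) * k ^ (8 / 5 : ℝ) := by gcongr <;> norm_num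
    _ = 4 * k ^ (8 / 5 : ℝ) := by norm_num

end Exponent

end LongestCycles

theorem separator_size_bound :
    ∃ C : ℝ, 0 < C ∧
      ∀ (V : Type) [Fintype V] [DecidableEq V] (G : SimpleGraph V)
        (u v : V) (c1 : G.Walk u u) (c2 : G.Walk v v),
        IsLongestCycle G c1 → IsLongestCycle G c2 →
        ∀ k : ℕ, k = (c1.support.toFinset ∩ c2.support.toFinset).card → 0 < k →
        ∀ S : Finset V,
          IsMinSeparator G (c1.support.toFinset \ c2.support.toFinset)
            (c2.support.toFinset \ c1.support.toFinset) S →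
          (S.card : ℝ) ≤ C * (k : ℝ) ^ ((8 : ℝ) / 5) := by
  refine ⟨65, by norm_num, ?_⟩
  intro V _ _ G u v c1 c2 h1 h2 k hk hk_pos S hS
  have hk_one : (1 : ℝ) ≤ k := by exact_mod_cast hk_pos
  obtain ⟨m, hm, hmK⟩ := LongestCycles.exists_nat_rpow_lt_pow (K := k + 1) (by linarith)
  have hcard : S.card ≤ k + 8 * m * (k + 1) :=
    LongestCycles.card_le_of_isMinSeparator h1 h2 hk hS (by exact_mod_cast hm)
  have hmk : (m : ℝ) * (k + 1) ≤ 8 * k ^ (8 / 5 : ℝ) := by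
    linarith [LongestCycles.add_one_rpow_le hk_one]
  calc (S.card : ℝ) ≤ k + 8 * (m * (k + 1)) := by rw [← mul_assoc]; exact_mod_cast hcard
    _ ≤ k ^ (8 / 5 : ℝ) + 8 * (8 * k ^ (8 / 5 : ℝ)) := by
        gcongr
        exact Real.self_le_rpow_of_one_le hk_one (by norm_num)
    _ = 65 * k ^ (8 / 5 : ℝ) := by ring
end

section
/- Let G be a finite simple graph, let C1 and C2 be vertex-disjoint cycles in G, and let P1 and P2 be two paths in G such that: P1 and P2 are vertex-disjoint from each other; each Pi has one endpoint on C1 and the other endpoint on C2; and no internal vertex of P1 or P2 lies on C1 or C2. Then G contains a cycle C whose length satisfies 2·length(C) > length(C1) + length(C2). -/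
open SimpleGraph

/-!
The attachments of the two paths are distinct on each cycle, so they cut each cycle `Cᵢ` into two
arcs, the longer of which has length at least `length(Cᵢ) / 2`. The two longer arcs and the two
paths close up to a cycle, and the paths contribute additional length because `C₁` and `C₂` are
disjoint.
-/

variable {V : Type*} {G : SimpleGraph V}

section Paths

variable {a b c : V}

theorem start_notMem_tail_support {p : G.Walk a b} (hp : p.IsPath) : a ∉ p.support.tail := by
  have hp_nodup := hp.support_nodup
  rw [← p.cons_tail_support] at hp_nodup
  exact hp_nodup.notMem

theorem isPath_append {p : G.Walk a b} {q : G.Walk b c} (hp : p.IsPath) (hq : q.IsPath)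
    (hpq : ∀ x ∈ p.support, x ∈ q.support → x = b) : (p.append q).IsPath := by
  rw [Walk.isPath_def, Walk.support_append]
  refine hp.support_nodup.append hq.support_nodup.tail fun x hxp hxq ↦ ?_
  have hxb : x = b := hpq x hxp (List.mem_of_mem_tail hxq)
  exact start_notMem_tail_support hq (hxb ▸ hxq)

theorem isCycle_append_reverse {p q : G.Walk a b} (hp : p.IsPath) (hq : q.IsPath)
    (hpq : ∀ x ∈ p.support, x ∈ q.support → x = a ∨ x = b)
    (hlen : 1 < p.length ∨ 1 < q.length) :
    (p.append q.reverse).IsCycle := by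
  refine hp.isCycle_append hq.reverse (fun x hxp hxq ↦ ?_) (by rwa [Walk.length_reverse])
  have hxq' : x ∈ q.support := by simpa using List.mem_of_mem_tail hxq
  rcases hpq x (List.mem_of_mem_tail hxp) hxq' with hxa | hxb
  · exact start_notMem_tail_support hp (hxa ▸ hxp)
  · exact start_notMem_tail_support hq.reverse (hxb ▸ hxq)

theorem length_pos_of_ne (p : G.Walk a b) (hab : a ≠ b) : 0 < p.length :=
  Walk.not_nil_iff_lt_length.1 (Walk.not_nil_of_ne hab)

end Paths

section Arcs

variable {u a b : V} {c : G.Walk u u}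

theorem exists_isPath_pair_length_add_eq (hc : c.IsCycle) (ha : a ∈ c.support)
    (hb : b ∈ c.support) (hab : a ≠ b) :
    ∃ p q : G.Walk a b, p.IsPath ∧ q.IsPath ∧ p.support ⊆ c.support ∧ q.support ⊆ c.support ∧
      p.length + q.length = c.length := by
  classical
  let d := c.rotate a ha
  have hdc : d.support ⊆ c.support := fun _ ↦ (c.mem_support_rotate_iff a ha).1
  have hbd : b ∈ d.support := (c.mem_support_rotate_iff a ha).2 hb
  have hd : ((d.takeUntil b hbd).append (d.dropUntil b hbd)).IsCycle := by
    rw [d.take_spec hbd]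
    exact hc.rotate ha
  refine ⟨d.takeUntil b hbd, (d.dropUntil b hbd).reverse,
    hd.isPath_of_append_left (Walk.not_nil_of_ne hab.symm),
    (hd.isPath_of_append_right (Walk.not_nil_of_ne hab)).reverse,
    List.Subset.trans (d.support_takeUntil_subset_support hbd) hdc, ?_, ?_⟩
  · rw [Walk.support_reverse, List.reverse_subset]
    exact List.Subset.trans (d.support_dropUntil_subset_support hbd) hdc
  · rw [Walk.length_reverse, ← Walk.length_append, d.take_spec hbd, Walk.length_rotate]

theorem exists_isPath_length_le_two_mul (hc : c.IsCycle) (ha : a ∈ c.support)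
    (hb : b ∈ c.support) (hab : a ≠ b) :
    ∃ p : G.Walk a b, p.IsPath ∧ p.support ⊆ c.support ∧ c.length ≤ 2 * p.length := by
  obtain ⟨p, q, hp, hq, hpc, hqc, hlen⟩ := exists_isPath_pair_length_add_eq hc ha hb hab
  rcases le_total p.length q.length with hle | hle
  · exact ⟨q, hq, hqc, by lia⟩
  · exact ⟨p, hp, hpc, by lia⟩

end Arcs

/-- An `A`–`B` path: a path whose only vertex in `A` is its first one and whose only vertex in `B`
is its last one. -/
structure IsPathBetween (A B : Set V) {a b : V} (p : G.Walk a b) : Prop where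
  isPath : p.IsPath
  start_mem : a ∈ A
  end_mem : b ∈ B
  eq_start : ∀ x ∈ p.support, x ∈ A → x = a
  eq_end : ∀ x ∈ p.support, x ∈ B → x = b

namespace IsPathBetween

variable {A B : Set V} {a b : V} {p : G.Walk a b}

theorem of_internal_notMem (hAB : Disjoint A B) (hp : p.IsPath) (ha : a ∈ A) (hb : b ∈ B)
    (hint : ∀ x ∈ p.support, x ≠ a → x ≠ b → x ∉ A ∧ x ∉ B) : IsPathBetween A B p where
  isPath := hp
  start_mem := ha
  end_mem := hb
  eq_start x hx hxA := by
    by_contra hxa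
    exact (hint x hx hxa (hAB.ne_of_mem hxA hb)).1 hxA
  eq_end x hx hxB := by
    by_contra hxb
    exact (hint x hx (hAB.ne_of_mem ha hxB).symm hxb).2 hxB

theorem of_subset (hp : IsPathBetween A B p) {A' B' : Set V} (hA : A' ⊆ A) (hB : B' ⊆ B)
    (ha : a ∈ A') (hb : b ∈ B') : IsPathBetween A' B' p where
  isPath := hp.isPath
  start_mem := ha
  end_mem := hb
  eq_start x hx hxA := hp.eq_start x hx (hA hxA)
  eq_end x hx hxB := hp.eq_end x hx (hB hxB)

end IsPathBetween

section TwoPaths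

variable {a₁ a₂ b₁ b₂ : V} {p₁ : G.Walk a₁ b₁} {p₂ : G.Walk a₂ b₂}

theorem isCycle_append_append_reverse {q₁ : G.Walk a₁ a₂} {q₂ : G.Walk b₁ b₂}
    (hq₁ : q₁.IsPath) (hq₂ : q₂.IsPath) (hq : q₁.support.Disjoint q₂.support)
    (hp₁ : IsPathBetween {x | x ∈ q₁.support} {x | x ∈ q₂.support} p₁)
    (hp₂ : IsPathBetween {x | x ∈ q₁.support} {x | x ∈ q₂.support} p₂)
    (hp : p₁.support.Disjoint p₂.support) :
    ((p₁.append q₂).append (q₁.append p₂).reverse).IsCycle := by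
  have hpq : (p₁.append q₂).IsPath := isPath_append hp₁.isPath hq₂ hp₁.eq_end
  have hqp : (q₁.append p₂).IsPath :=
    isPath_append hq₁ hp₂.isPath fun x hxq hxp ↦ hp₂.eq_start x hxp hxq
  refine isCycle_append_reverse hpq hqp (fun x hx hx' ↦ ?_) (.inl ?_)
  · rw [Walk.mem_support_append_iff] at hx hx'
    rcases hx with hxp₁ | hxq₂ <;> rcases hx' with hxq₁ | hxp₂
    · exact .inl (hp₁.eq_start x hxp₁ hxq₁)
    · exact (hp hxp₁ hxp₂).elim
    · exact (hq hxq₁ hxq₂).elim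
    · exact .inr (hp₂.eq_end x hxp₂ hxq₂)
  · have hp₁_pos := length_pos_of_ne p₁ (List.disjoint_iff_ne.1 hq _ hp₁.start_mem _ hp₁.end_mem)
    have hq₂_pos := length_pos_of_ne q₂
      (List.disjoint_iff_ne.1 hp _ p₁.end_mem_support _ p₂.end_mem_support)
    rw [Walk.length_append]
    lia

theorem exists_isCycle_length_add_le {u₁ u₂ : V} {c₁ : G.Walk u₁ u₁} {c₂ : G.Walk u₂ u₂}
    (hc₁ : c₁.IsCycle) (hc₂ : c₂.IsCycle) (hc : c₁.support.Disjoint c₂.support)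
    (hp₁ : IsPathBetween {x | x ∈ c₁.support} {x | x ∈ c₂.support} p₁)
    (hp₂ : IsPathBetween {x | x ∈ c₁.support} {x | x ∈ c₂.support} p₂)
    (hp : p₁.support.Disjoint p₂.support) :
    ∃ (w : V) (c : G.Walk w w), c.IsCycle ∧
      c₁.length + c₂.length + 2 * (p₁.length + p₂.length) ≤ 2 * c.length := by
  have ha : a₁ ≠ a₂ := List.disjoint_iff_ne.1 hp _ p₁.start_mem_support _ p₂.start_mem_support
  have hb : b₁ ≠ b₂ := List.disjoint_iff_ne.1 hp _ p₁.end_mem_support _ p₂.end_mem_support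
  obtain ⟨q₁, hq₁, hqc₁, hlen₁⟩ :=
    exists_isPath_length_le_two_mul hc₁ hp₁.start_mem hp₂.start_mem ha
  obtain ⟨q₂, hq₂, hqc₂, hlen₂⟩ :=
    exists_isPath_length_le_two_mul hc₂ hp₁.end_mem hp₂.end_mem hb
  refine ⟨a₁, (p₁.append q₂).append (q₁.append p₂).reverse,
    isCycle_append_append_reverse hq₁ hq₂ (fun x hx₁ hx₂ ↦ hc (hqc₁ hx₁) (hqc₂ hx₂))
      (hp₁.of_subset hqc₁ hqc₂ q₁.start_mem_support q₂.start_mem_support)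
      (hp₂.of_subset hqc₁ hqc₂ q₁.end_mem_support q₂.end_mem_support) hp, ?_⟩
  simp only [Walk.length_append, Walk.length_reverse]
  lia

end TwoPaths

theorem two_cycles_two_paths_give_longer_cycle_general
    {u₁ u₂ : V} {c₁ : G.Walk u₁ u₁} {c₂ : G.Walk u₂ u₂} (hc₁ : c₁.IsCycle) (hc₂ : c₂.IsCycle)
    (hdisj : ∀ x ∈ c₁.support, x ∉ c₂.support)
    {a₁ b₁ a₂ b₂ : V} {p₁ : G.Walk a₁ b₁} {p₂ : G.Walk a₂ b₂} (hp₁ : p₁.IsPath) (hp₂ : p₂.IsPath)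
    (ha₁ : a₁ ∈ c₁.support) (hb₁ : b₁ ∈ c₂.support)
    (ha₂ : a₂ ∈ c₁.support) (hb₂ : b₂ ∈ c₂.support)
    (hpdisj : ∀ x ∈ p₁.support, x ∉ p₂.support)
    (hint₁ : ∀ x ∈ p₁.support, x ≠ a₁ → x ≠ b₁ → x ∉ c₁.support ∧ x ∉ c₂.support)
    (hint₂ : ∀ x ∈ p₂.support, x ≠ a₂ → x ≠ b₂ → x ∉ c₁.support ∧ x ∉ c₂.support) :
    ∃ (w : V) (c : G.Walk w w), c.IsCycle ∧ c₁.length + c₂.length < 2 * c.length := by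
  have hc : Disjoint {x | x ∈ c₁.support} {x | x ∈ c₂.support} := Set.disjoint_left.2 hdisj
  obtain ⟨w, c, hcycle, hlen⟩ := exists_isCycle_length_add_le hc₁ hc₂ hdisj
    (.of_internal_notMem hc hp₁ ha₁ hb₁ hint₁) (.of_internal_notMem hc hp₂ ha₂ hb₂ hint₂) hpdisj
  have hp₁_pos : 0 < p₁.length := length_pos_of_ne p₁ (hc.ne_of_mem ha₁ hb₁)
  exact ⟨w, c, hcycle, by lia⟩

theorem two_cycles_two_paths_give_longer_cycle
    (V : Type) [Fintype V] (G : SimpleGraph V)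
    (u1 u2 : V) (c1 : G.Walk u1 u1) (c2 : G.Walk u2 u2)
    (hc1 : c1.IsCycle) (hc2 : c2.IsCycle)
    (hdisj : ∀ x ∈ c1.support, x ∉ c2.support)
    (a1 b1 a2 b2 : V) (p1 : G.Walk a1 b1) (p2 : G.Walk a2 b2)
    (hp1 : p1.IsPath) (hp2 : p2.IsPath)
    (ha1 : a1 ∈ c1.support) (hb1 : b1 ∈ c2.support)
    (ha2 : a2 ∈ c1.support) (hb2 : b2 ∈ c2.support)
    -- `p1` and `p2` are vertex-disjoint from each other:
    (hpdisj : ∀ x ∈ p1.support, x ∉ p2.support)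
    -- no internal vertex of `p1` or `p2` lies on `c1` or `c2`:
    (hint1 : ∀ x ∈ p1.support, x ≠ a1 → x ≠ b1 → x ∉ c1.support ∧ x ∉ c2.support)
    (hint2 : ∀ x ∈ p2.support, x ≠ a2 → x ≠ b2 → x ∉ c1.support ∧ x ∉ c2.support) :
    ∃ (w : V) (c : G.Walk w w), c.IsCycle ∧ c1.length + c2.length < 2 * c.length := by
  exact two_cycles_two_paths_give_longer_cycle_general hc1 hc2 hdisj hp1 hp2 ha1 hb1 ha2 hb2
    hpdisj hint1 hint2
end
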